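/- For any open set G in M_1(Ω_0 × U_d) (weak topology), P_0-almost surely, liminf_{n→∞} (1/n) log P^{π,ω}_0( L_n ∈ G ) ≥ −inf_{μ∈G} I(μ) = −inf_{μ∈G} I**(μ). -/

import Mathlib

open MeasureTheory ProbabilityTheory Filter Topology
open scoped ENNReal NNReal BigOperators

noncomputable section

namespace SRWPC

/-- Vertices of the lattice `ℤ^d`. -/
abbrev V (d : ℕ) := Fin d → ℤ

/-- Index of a nearest-neighbour bond: the bond from `x` to `x + eᵢ`. -/
abbrev EdgeIx (d : ℕ) := V d × Fin d

/-- Percolation configurations `Ω = {0,1}^{𝔹_d}`. -/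
abbrev Config (d : ℕ) := EdgeIx d → Bool

/-- The `i`-th coordinate unit vector. -/
def unitVec (d : ℕ) (i : Fin d) : V d := fun j => if j = i then 1 else 0

/-- The set `𝕌_d` of the `2d` unit vectors. -/
def Ud (d : ℕ) : Finset (V d) :=
  (Finset.univ.image (unitVec d)) ∪ (Finset.univ.image (fun i => -unitVec d i))

/-- The type of nearest-neighbour steps (elements of `𝕌_d`). -/
abbrev Step (d : ℕ) := {e : V d // e ∈ Ud d}

/-- The shift `(τ_x ω)_b = ω_{x+b}`. -/
def shift {d : ℕ} (x : V d) (ω : Config d) : Config d := fun b => ω (b.1 + x, b.2)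

/-- The bond from `x` to `x + e` is open in `ω`. -/
def edgeOpen {d : ℕ} (ω : Config d) (x e : V d) : Prop :=
  ∃ i : Fin d, (e = unitVec d i ∧ ω (x, i) = true) ∨
    (e = -unitVec d i ∧ ω (x - unitVec d i, i) = true)

open Classical in
/-- The number of open bonds incident to `x`. -/
def openDeg {d : ℕ} (ω : Config d) (x : V d) : ℕ :=
  ((Ud d).filter (fun e => edgeOpen ω x e)).card

open Classical in
/-- The transition probability `π_ω(x,e)` of the simple random walk on the cluster. -/
def trans {d : ℕ} (ω : Config d) (x e : V d) : ℝ :=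
  if edgeOpen ω x e then 1 / openDeg ω x else 0

/-- `γ` restricted to `{0,…,n}` is a nearest-neighbour open path in `ω`. -/
def IsOpenPath {d : ℕ} (ω : Config d) (γ : ℕ → V d) (n : ℕ) : Prop :=
  ∀ k < n, (γ (k + 1) - γ k) ∈ Ud d ∧ edgeOpen ω (γ k) (γ (k + 1) - γ k)

/-- `x` lies in the box `[-r,r]^d`. -/
def inBox {d : ℕ} (x : V d) (r : ℝ) : Prop := ∀ i, |(x i : ℝ)| ≤ r

/-- `x` is joined to infinity by a nearest-neighbour open path, i.e. `x ∈ 𝒞_∞(ω)`. -/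
def memCluster {d : ℕ} (ω : Config d) (x : V d) : Prop :=
  ∀ R : ℕ, ∃ (γ : ℕ → V d) (n : ℕ), γ 0 = x ∧ IsOpenPath ω γ n ∧ ¬ inBox (γ n) R

/-- The event `Ω_0 = {0 ∈ 𝒞_∞}`. -/
def cluZero (d : ℕ) : Set (Config d) := {ω | memCluster ω 0}

/-- `P` is the Bernoulli bond percolation product measure with parameter `q`. -/
def IsBernoulli (d : ℕ) (q : ℝ) (P : Measure (Config d)) : Prop :=
  IsProbabilityMeasure P ∧
    ∀ (F : Finset (EdgeIx d)) (a : EdgeIx d → Bool),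
      P {ω | ∀ b ∈ F, ω b = a b} = ∏ b ∈ F, ENNReal.ofReal (if a b then q else 1 - q)

/-- The critical probability `p_c(d)` of bond percolation on `ℤ^d`. -/
def pc (d : ℕ) : ℝ :=
  sInf {q : ℝ | q ∈ Set.Icc (0 : ℝ) 1 ∧
    ∀ P : Measure (Config d), IsBernoulli d q P → 0 < P (cluZero d)}

variable {d : ℕ}

/-- Position of the walk after `k` steps, given the sequence of steps `s`. -/
def pos {n : ℕ} (s : Fin n → Step d) (k : ℕ) : V d :=
  ∑ j ∈ Finset.univ.filter (fun j : Fin n => (j : ℕ) < k), (s j).1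

/-- The environment/step pair `(τ_{X_k} ω, X_{k+1} - X_k)` seen at time `k`. -/
def envPair (ω : Config d) {n : ℕ} (s : Fin n → Step d) (k : Fin n) : Config d × Step d :=
  (shift (pos s k) ω, s k)

/-- Quenched probability of a given sequence of `n` steps under the Markov kernel `κ`. -/
def pathProb (κ : Config d → Step d → ℝ) (ω : Config d) {n : ℕ} (s : Fin n → Step d) : ℝ :=
  ∏ k : Fin n, κ (shift (pos s k) ω) (s k)

/-- The SRWPC transition kernel `π`. -/
def srw (d : ℕ) : Config d → Step d → ℝ := fun ω e => trans ω 0 e.1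

/-- Quenched expectation (under `P_0^{κ,ω}`) of a functional of the first `n` steps. -/
def qE (κ : Config d → Step d → ℝ) (ω : Config d) {n : ℕ} (F : (Fin n → Step d) → ℝ) : ℝ :=
  ∑ s : Fin n → Step d, pathProb κ ω s * F s

/-- Quenched probability (under `P_0^{κ,ω}`) of a set of `n`-step trajectories. -/
def qP (κ : Config d → Step d → ℝ) (ω : Config d) {n : ℕ} (A : Set (Fin n → Step d)) : ℝ :=
  ∑ s : Fin n → Step d, A.indicator (fun s' => pathProb κ ω s') s

/-- Quenched probability, `ℝ≥0∞`-valued. -/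
def qPE (κ : Config d → Step d → ℝ) (ω : Config d) {n : ℕ} (A : Set (Fin n → Step d)) : ℝ≥0∞ :=
  ENNReal.ofReal (qP κ ω A)

/-- The environment-step space `Ω_0 × 𝕌_d`. -/
abbrev EnvSp (d : ℕ) := Config d × Step d

/-- The pair empirical measure `ℒ_n` as a measure. -/
def empMeas (ω : Config d) {n : ℕ} (s : Fin n → Step d) : Measure (EnvSp d) :=
  (n : ℝ≥0∞)⁻¹ • ∑ k : Fin n, Measure.dirac (envPair ω s k)

lemma empMeas_isProb (ω : Config d) {n : ℕ} (hn : n ≠ 0) (s : Fin n → Step d) :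
    IsProbabilityMeasure (empMeas ω s) := by
  constructor
  simp only [empMeas, Measure.smul_apply, Measure.coe_finset_sum, Finset.sum_apply,
    Measure.dirac_apply_of_mem (Set.mem_univ _), smul_eq_mul]
  rw [Finset.sum_const, Finset.card_univ, Fintype.card_fin, nsmul_eq_mul, mul_one,
    ENNReal.inv_mul_cancel]
  · exact_mod_cast hn
  · exact ENNReal.natCast_ne_top n

/-- The pair empirical measure `ℒ_{n+1}` as a probability measure. -/
def empPM (ω : Config d) {n : ℕ} (s : Fin (n + 1) → Step d) : ProbabilityMeasure (EnvSp d) :=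
  ⟨empMeas ω s, empMeas_isProb ω (Nat.succ_ne_zero n) s⟩

/-- First marginal `(μ)_1` of a measure on `Ω_0 × 𝕌_d`. -/
def marg1 (μ : Measure (EnvSp d)) : Measure (Config d) := μ.map Prod.fst

/-- Second marginal `(μ)_2` of a measure on `Ω_0 × 𝕌_d`. -/
def marg2 (μ : Measure (EnvSp d)) : Measure (Config d) := μ.map (fun q => shift q.2.1 q.1)

/-- The slice `dμ(·, e)` of a measure on `Ω_0 × 𝕌_d` at a fixed step `e`. -/
def slice (μ : Measure (EnvSp d)) (e : Step d) : Measure (Config d) :=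
  (μ.restrict (Set.univ ×ˢ {e})).map Prod.fst

/-- The space `ℳ_1⋆`: probability measures on `Ω_0 × 𝕌_d` whose two marginals coincide and
are absolutely continuous w.r.t. `P₀`, and whose densities `dμ(ω,e)/d(μ)_1(ω)` are positive
precisely on open edges, `P₀`-a.s. -/
def M1star (d : ℕ) (P₀ : Measure (Config d)) : Set (ProbabilityMeasure (EnvSp d)) :=
  {μ | marg1 μ.toMeasure = marg2 μ.toMeasure ∧ marg1 μ.toMeasure ≪ P₀ ∧
    ∃ ρ : Step d → Config d → ℝ≥0∞, (∀ e, Measurable (ρ e)) ∧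
      (∀ e, slice μ.toMeasure e = (marg1 μ.toMeasure).withDensity (ρ e)) ∧
      (∀ e : Step d, ∀ᵐ ω ∂P₀, (0 < ρ e ω ↔ edgeOpen ω 0 e.1))}

/-- The reference measure `π_ω(0,e) d(μ)_1(ω)` on `Ω_0 × 𝕌_d`. -/
def refM (μ : Measure (EnvSp d)) : Measure (EnvSp d) :=
  Measure.sum (fun e : Step d =>
    ((marg1 μ).withDensity (fun ω => ENNReal.ofReal (trans ω 0 e.1))).map (fun ω => (ω, e)))

/-- `x log x - x + 1`. -/
def klFun (x : ℝ) : ℝ := x * Real.log x - x + 1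

open Classical in
/-- The entropy functional `ℑ` (a relative entropy with respect to `refM μ`;
it equals `∫ Σ_e dμ(ω,e) log[dμ(ω,e) / (d(μ)_1(ω) π_ω(0,e))]` on `ℳ_1⋆` and `∞` otherwise). -/
def entI (P₀ : Measure (Config d)) (μ : ProbabilityMeasure (EnvSp d)) : ℝ≥0∞ :=
  if μ ∈ M1star d P₀ ∧ μ.toMeasure ≪ refM μ.toMeasure then
    ∫⁻ q, ENNReal.ofReal (klFun ((μ.toMeasure.rnDeriv (refM μ.toMeasure)) q).toReal)
      ∂(refM μ.toMeasure)
  else ∞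

/-- The pairing `⟨f, μ⟩`. -/
def pairing (f : EnvSp d → ℝ) (μ : ProbabilityMeasure (EnvSp d)) : ℝ :=
  ∫ q, f q ∂μ.toMeasure

/-- The Fenchel–Legendre transform `ℑ⋆` of `ℑ`. -/
def entIstar (P₀ : Measure (Config d)) (f : BoundedContinuousFunction (EnvSp d) ℝ) : EReal :=
  ⨆ μ : ProbabilityMeasure (EnvSp d),
    ((pairing f μ : ℝ) : EReal) - ((entI P₀ μ : ℝ≥0∞) : EReal)

/-- The double Fenchel–Legendre transform `ℑ⋆⋆` of `ℑ`. -/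
def entIbis (P₀ : Measure (Config d)) (μ : ProbabilityMeasure (EnvSp d)) : EReal :=
  ⨆ f : BoundedContinuousFunction (EnvSp d) ℝ,
    ((pairing f μ : ℝ) : EReal) - entIstar P₀ f

/-- The contraction map `ξ(μ) = ∫ Σ_e e dμ(ω,e)`. -/
def xi (μ : ProbabilityMeasure (EnvSp d)) : Fin d → ℝ :=
  fun i => ∫ q, ((q.2.1 i : ℤ) : ℝ) ∂μ.toMeasure

/-- The mean velocity `X_n / n` of a trajectory. -/
def meanVel {n : ℕ} (s : Fin n → Step d) : Fin d → ℝ :=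
  fun i => (n : ℝ)⁻¹ * ((pos s n) i : ℝ)

/-- The class `Π̃` of environment transition kernels. -/
def PiT (d : ℕ) (P₀ : Measure (Config d)) : Set (Config d → Step d → ℝ) :=
  {κ | (∀ e : Step d, Measurable (fun ω => κ ω e)) ∧
    (∀ ω e, 0 ≤ κ ω e) ∧ (∀ e : Step d, ∀ᵐ ω ∂P₀, κ ω e ≤ 1) ∧
    (∀ᵐ ω ∂P₀, ∑ e : Step d, κ ω e = 1) ∧
    (∀ e : Step d, ∀ᵐ ω ∂P₀, (κ ω e = 0 ↔ trans ω 0 e.1 = 0))}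

/-- `φ dP₀` is an invariant probability density for the kernel `κ`. -/
def IsInvDensity (P₀ : Measure (Config d)) (κ : Config d → Step d → ℝ)
    (φ : Config d → ℝ) : Prop :=
  Measurable φ ∧ (∀ ω, 0 ≤ φ ω) ∧ (∫ ω, φ ω ∂P₀) = 1 ∧
    (∀ᵐ ω ∂P₀, φ ω = ∑ e : Step d, κ (shift (-e.1) ω) e * φ (shift (-e.1) ω))

/-- The set `ℰ` of pairs `(π̃, φ)`. -/
def Epairs (d : ℕ) (P₀ : Measure (Config d)) :
    Set ((Config d → Step d → ℝ) × (Config d → ℝ)) :=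
  {q | q.1 ∈ PiT d P₀ ∧ IsInvDensity P₀ q.1 q.2}

/-- The measure `dμ(ω,e) = π̃(ω,e) φ(ω) dP₀(ω)` associated with a pair `(π̃, φ)`. -/
def pairMeasure (P₀ : Measure (Config d)) (κ : Config d → Step d → ℝ)
    (φ : Config d → ℝ) : Measure (EnvSp d) :=
  Measure.sum (fun e : Step d =>
    (P₀.withDensity (fun ω => ENNReal.ofReal (κ ω e * φ ω))).map (fun ω => (ω, e)))

/-- The kernel `dμ/d(μ)_1` associated with a measure on `Ω_0 × 𝕌_d`. -/
def toKappa (μ : Measure (EnvSp d)) : Config d → Step d → ℝ :=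
  fun ω e => ((slice μ e).rnDeriv (marg1 μ) ω).toReal

/-- The density `d(μ)_1/dP₀` associated with a measure on `Ω_0 × 𝕌_d`. -/
def toPhi (P₀ : Measure (Config d)) (μ : Measure (EnvSp d)) : Config d → ℝ :=
  fun ω => ((marg1 μ).rnDeriv P₀ ω).toReal

/-- The environment Markov transition operator `R_κ`. -/
def kernelStep (κ : Config d → Step d → ℝ) (f : Config d → ℝ) : Config d → ℝ :=
  fun ω => ∑ e : Step d, κ ω e * f (shift e.1 ω)

/-- `Q` is an invariant measure for the environment kernel `R_κ`. -/
def IsInvariant (κ : Config d → Step d → ℝ) (Q : Measure (Config d)) : Prop :=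
  ∀ f : Config d → ℝ, Measurable f → (∃ C, ∀ ω, |f ω| ≤ C) →
    ∫ ω, kernelStep κ f ω ∂Q = ∫ ω, f ω ∂Q

/-- Partial sum `Σ_{k<m} f(τ_{X_k}ω, X_{k+1}-X_k)` along a trajectory of length `N`. -/
def partialSumF (f : EnvSp d → ℝ) (ω : Config d) {N : ℕ} (s : Fin N → Step d) (m : ℕ) : ℝ :=
  ∑ k ∈ Finset.univ.filter (fun k : Fin N => (k : ℕ) < m), f (envPair ω s k)

/-- The sum of `G` along the path `γ` up to time `n`. -/
def pathSum (G : Config d → V d → ℝ) (ω : Config d) (γ : ℕ → V d) (n : ℕ) : ℝ :=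
  ∑ k ∈ Finset.range n, G (shift (γ k) ω) (γ (k + 1) - γ k)

/-- The class `𝒢_∞` of gradients: zero mean, uniformly bounded, closed loops. -/
def Ginfty (d : ℕ) (P₀ : Measure (Config d)) : Set (Config d → V d → ℝ) :=
  {G | (∀ e ∈ Ud d, Measurable (fun ω => G ω e)) ∧
    (∀ e ∈ Ud d, ∫ ω, G ω e ∂P₀ = 0) ∧
    (∃ M : ℝ, ∀ e ∈ Ud d, ∀ᵐ ω ∂P₀, |G ω e| ≤ M) ∧
    (∀ᵐ ω ∂P₀, ∀ (γ : ℕ → V d) (n : ℕ),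
      memCluster ω (γ 0) → IsOpenPath ω γ n → γ n = γ 0 → pathSum G ω γ n = 0)}

open Classical in
/-- The corrector `Ψ(ω,x)`: the sum of `G` along some open path from `0` to `x`. -/
def corr (G : Config d → V d → ℝ) (ω : Config d) (x : V d) : ℝ :=
  if h : ∃ q : (ℕ → V d) × ℕ, q.1 0 = 0 ∧ q.1 q.2 = x ∧ IsOpenPath ω q.1 q.2
  then pathSum G ω h.choose.1 h.choose.2 else 0

/-- The chemical distance: minimal length of an open path joining `x` and `y`. -/
def chemDist (ω : Config d) (x y : V d) : ℕ :=
  sInf {n : ℕ | ∃ γ : ℕ → V d, γ 0 = x ∧ γ n = y ∧ IsOpenPath ω γ n}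

open Classical in
/-- The functional `Λ(f,G)`. -/
def Lam (P₀ : Measure (Config d)) (f : EnvSp d → ℝ) (G : Config d → V d → ℝ) : EReal :=
  essSup (fun ω => ((Real.log (∑ e : Step d,
    if edgeOpen ω 0 e.1 then trans ω 0 e.1 * Real.exp (f (ω, e) + G ω e.1) else 0)) : EReal)) P₀

/-- The variational formula `H̄(f) = sup_{μ ∈ ℳ_1⋆} {⟨f,μ⟩ - ℑ(μ)}`. -/
def Hbar (P₀ : Measure (Config d)) (f : EnvSp d → ℝ) : EReal :=
  ⨆ μ ∈ M1star d P₀, ((pairing f μ : ℝ) : EReal) - ((entI P₀ μ : ℝ≥0∞) : EReal)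

/-- The finite σ-algebra `𝓑_k` recording all bonds in the box of size `k` around the origin. -/
def Bsig (d k : ℕ) : MeasurableSpace (Config d) :=
  MeasurableSpace.comap
    (fun (ω : Config d) (b : {b : EdgeIx d // ∀ i, |b.1 i| ≤ (k : ℤ)}) => ω b.1) inferInstance

end SRWPC

/-
A law `μ ∈ M1star` makes the environment seen from the walker a stationary Markov chain, whose
steps follow the conditional law of `μ` and which starts from `(μ)₁`. The infinite cluster is
unique, so the moves along open edges act ergodically on `P₀`; hence `(μ)₁` is equivalent to `P₀`.
Driving the chain by i.i.d. noise turns it into a skew product, and that is ergodic as well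
because events stable under all open steps are trivial. By Birkhoff's theorem the chain satisfies
`L_n → μ`, while the mean logarithm of its likelihood ratio with respect to the simple random walk
tends to `I(μ)`: under the simple random walk, `L_n` therefore stays near `μ` with probability at
least `e^{-n (I(μ) + o(1))}`.

Uniqueness follows Aizenman, Kesten and Newman: a closed bond joining two distinct infinite
clusters can be traded for a change of the parameter, whose entropy cost, obtained by exploring
the clusters that meet the boundary of a large box, is only of the order of that boundary.

The functional `I` is convex by Gibbs' inequality but need not be lower semicontinuous. An open
set contains a neighbourhood cut out by the integrals of finitely many test functions, and the
projection of the epigraph of `I` to these integrals is a convex set of finite dimension. It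
misses the part of the neighbourhood below the level `inf_G I`, and a separating hyperplane is a
test function showing that `I**` is at least this level at every point of `G`.
-/

namespace SRWPC

/-! ### Clusters of a finite random graph -/

section OpenGraph

variable {B X : Type*}

/-- The graph formed by the open bonds of the configuration `a`, where the bond `b` joins the two
points of `ends b`. -/
def openGraph (ends : B → Sym2 X) (a : B → Bool) : SimpleGraph X :=
  .fromEdgeSet (ends '' {b | a b = true})

/-- The bond `b` has an endpoint in the open cluster of `x`. -/
def Touches (ends : B → Sym2 X) (a : B → Bool) (x : X) (b : B) : Prop :=
  ∃ y ∈ ends b, (openGraph ends a).Reachable x y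

/-- The bond `b` is closed and joins two distinct open clusters, both of which meet `W`. -/
def JoinsClusters (ends : B → Sym2 X) (W : Finset X) (a : B → Bool) (b : B) : Prop :=
  a b = false ∧ (∀ y ∈ ends b, ∃ x ∈ W, (openGraph ends a).Reachable x y) ∧
    ∃ y ∈ ends b, ∃ z ∈ ends b, ¬ (openGraph ends a).Reachable y z

variable {ends : B → Sym2 X} {a c : B → Bool} {x y : X} {b : B}

lemma openGraph_adj :
    (openGraph ends a).Adj x y ↔ (∃ b, a b = true ∧ ends b = s(x, y)) ∧ x ≠ y := by
  simp [openGraph]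

lemma openGraph_mono (h : ∀ b, a b = true → c b = true) : openGraph ends a ≤ openGraph ends c :=
  SimpleGraph.fromEdgeSet_mono (Set.image_mono h)

lemma reachable_of_open (hb : a b = true) (hx : x ∈ ends b) (hy : y ∈ ends b) :
    (openGraph ends a).Reachable x y := by
  obtain rfl | hxy := eq_or_ne x y
  · rfl
  · exact (openGraph_adj.2 ⟨⟨b, hb, (Sym2.mem_and_mem_iff hxy).1 ⟨hx, hy⟩⟩, hxy⟩).reachable

lemma reachable_induction {motive : X → Prop} (refl : motive x)
    (step : ∀ b y z, a b = true → ends b = s(y, z) → (openGraph ends a).Reachable x y →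
      motive y → motive z)
    (h : (openGraph ends a).Reachable x y) : motive y := by
  induction (SimpleGraph.reachable_iff_reflTransGen _ _).1 h with
  | refl => exact refl
  | @tail y z hxy hyz ih =>
    have hxy := (SimpleGraph.reachable_iff_reflTransGen _ _).2 hxy
    obtain ⟨⟨b, hb, hends⟩, -⟩ := openGraph_adj.1 hyz
    exact step b y z hb hends hxy (ih hxy)

lemma reachable_of_open_imp_open
    (H : ∀ b, Touches ends a x b → Touches ends c x b → a b = true → c b = true)
    (h : (openGraph ends a).Reachable x y) : (openGraph ends c).Reachable x y := by
  refine reachable_induction (motive := (openGraph ends c).Reachable x) .rfl ?_ h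
  intro b y z hb hends hay hcy
  have hy : y ∈ ends b := hends ▸ Sym2.mem_mk_left y z
  have hz : z ∈ ends b := hends ▸ Sym2.mem_mk_right y z
  exact hcy.trans (reachable_of_open (H b ⟨y, hy, hay⟩ ⟨y, hy, hcy⟩ hb) hy hz)

lemma touches_congr (H : ∀ b, Touches ends c x b → a b = c b) :
    Touches ends a x b ↔ Touches ends c x b := by
  have hreach (y : X) : (openGraph ends a).Reachable x y ↔ (openGraph ends c).Reachable x y :=
    ⟨reachable_of_open_imp_open fun b _ hc hb => H b hc ▸ hb,
      reachable_of_open_imp_open fun b hc _ hb => (H b hc).trans hb⟩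
  simp only [Touches, hreach]

lemma touches_update [DecidableEq B] (v : Bool) :
    Touches ends (Function.update a b v) x b ↔ Touches ends a x b := by
  have of_not (a : B → Bool) (v : Bool) (h : ¬ Touches ends a x b) :
      ¬ Touches ends (Function.update a b v) x b := by
    rwa [touches_congr (c := a)]
    intro b' hb'
    exact Function.update_of_ne (by rintro rfl; exact h hb') _ _
  refine ⟨fun h => by_contra fun h' => of_not a v h' h, fun h => by_contra fun h' => ?_⟩
  simpa [h] using of_not _ (a b) h'

open scoped Classical in
/-- The open clusters that meet `W` and contain an endpoint of the bond `b`. -/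
def touchedComponents (ends : B → Sym2 X) (W : Finset X) (a : B → Bool) (b : B) :
    Finset (openGraph ends a).ConnectedComponent :=
  {C ∈ W.image (openGraph ends a).connectedComponentMk |
    ∃ y ∈ ends b, C = (openGraph ends a).connectedComponentMk y}

variable {W : Finset X}

lemma mem_touchedComponents {C : (openGraph ends a).ConnectedComponent} :
    C ∈ touchedComponents ends W a b ↔
      ∃ x ∈ W, (openGraph ends a).connectedComponentMk x = C ∧ Touches ends a x b := by
  simp only [touchedComponents, Finset.mem_filter, Finset.mem_image, Touches]
  constructor
  · rintro ⟨⟨x, hx, rfl⟩, y, hy, hxy⟩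
    exact ⟨x, hx, rfl, y, hy, SimpleGraph.ConnectedComponent.eq.1 hxy⟩
  · rintro ⟨x, hx, rfl, y, hy, hxy⟩
    exact ⟨⟨x, hx, rfl⟩, y, hy, SimpleGraph.ConnectedComponent.eq.2 hxy⟩

lemma touchedComponents_nonempty :
    (touchedComponents ends W a b).Nonempty ↔ ∃ x ∈ W, Touches ends a x b := by
  simp only [Finset.Nonempty, mem_touchedComponents]
  exact ⟨fun ⟨_, x, hx, _, h⟩ => ⟨x, hx, h⟩, fun ⟨x, hx, h⟩ => ⟨_, x, hx, rfl, h⟩⟩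

lemma card_touchedComponents_le_one (hb : a b = true) :
    (touchedComponents ends W a b).card ≤ 1 := by
  refine Finset.card_le_one.2 fun C hC D hD => ?_
  obtain ⟨x, -, rfl, y, hy, hxy⟩ := mem_touchedComponents.1 hC
  obtain ⟨x', -, rfl, y', hy', hxy'⟩ := mem_touchedComponents.1 hD
  exact SimpleGraph.ConnectedComponent.eq.2
    ((hxy.trans (reachable_of_open hb hy hy')).trans hxy'.symm)

lemma JoinsClusters.one_lt_card_touchedComponents (h : JoinsClusters ends W a b) :
    1 < (touchedComponents ends W a b).card := by
  obtain ⟨-, hW, y, hy, z, hz, hyz⟩ := h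
  obtain ⟨x, hx, hxy⟩ := hW y hy
  obtain ⟨x', hx', hxz⟩ := hW z hz
  refine Finset.one_lt_card.2 ⟨_, mem_touchedComponents.2 ⟨x, hx, rfl, y, hy, hxy⟩, _,
    mem_touchedComponents.2 ⟨x', hx', rfl, z, hz, hxz⟩, fun h => hyz ?_⟩
  exact (hxy.symm.trans (SimpleGraph.ConnectedComponent.eq.1 h)).trans hxz

open scoped Classical in
lemma touches_add_joinsClusters_le_card_mul {f : Bool → ℝ} (hf : 0 ≤ f false) :
    (if ∃ x ∈ W, Touches ends a x b then f (a b) else 0) +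
      (if JoinsClusters ends W a b then f false else 0) ≤
    (touchedComponents ends W a b).card * f (a b) := by
  simp only [← touchedComponents_nonempty, ← Finset.card_pos]
  cases hab : a b
  · have hcard : (if 0 < (touchedComponents ends W a b).card then (1 : ℝ) else 0) +
        (if JoinsClusters ends W a b then 1 else 0) ≤ (touchedComponents ends W a b).card := by
      by_cases h : JoinsClusters ends W a b
      · have := h.one_lt_card_touchedComponents
        rw [if_pos h, if_pos (by lia)]
        exact one_add_one_eq_two.trans_le (by exact_mod_cast this)
      · rw [if_neg h, add_zero]
        split_ifs with h0
        exacts [by exact_mod_cast h0, by positivity]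
    simpa [add_mul, ite_mul] using mul_le_mul_of_nonneg_right hcard hf
  · have h : ¬ JoinsClusters ends W a b := fun h => by simp [h.1] at hab
    have h1 := card_touchedComponents_le_one (ends := ends) (W := W) hab
    interval_cases (touchedComponents ends W a b).card <;> simp [h]

variable [Fintype B]

open scoped Classical in
/-- Summing `F C + 1 ≤ exp (F C)` over the clusters `C` that meet `W`. -/
lemma sum_touches_add_card_joinsClusters_le {f : Bool → ℝ} (hf : 0 ≤ f false) :
    ∑ b with ∃ x ∈ W, Touches ends a x b, f (a b) +
      ({b | JoinsClusters ends W a b} : Finset B).card * f false ≤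
    ∑ x ∈ W, Real.exp (∑ b with Touches ends a x b, f (a b)) := by
  let mk := (openGraph ends a).connectedComponentMk
  let F (C : (openGraph ends a).ConnectedComponent) : ℝ :=
    ∑ b with ∃ y ∈ ends b, C = mk y, f (a b)
  have hF (x : X) : F (mk x) = ∑ b with Touches ends a x b, f (a b) :=
    Finset.sum_congr (Finset.filter_congr fun b _ => by simp [mk, Touches]) fun _ _ => rfl
  have hcount : ∑ b, ((touchedComponents ends W a b).card : ℝ) * f (a b) =
      ∑ C ∈ W.image mk, F C := by
    simp only [F, Finset.sum_filter]
    rw [Finset.sum_comm]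
    refine Finset.sum_congr rfl fun b _ => ?_
    rw [← Finset.sum_filter, Finset.sum_const, nsmul_eq_mul]
    rfl
  calc _ = ∑ b, ((if ∃ x ∈ W, Touches ends a x b then f (a b) else 0) +
          (if JoinsClusters ends W a b then f false else 0)) := by
        rw [Finset.sum_add_distrib, ← Finset.sum_filter, ← Finset.sum_filter, Finset.sum_const,
          nsmul_eq_mul]
    _ ≤ ∑ b, ((touchedComponents ends W a b).card : ℝ) * f (a b) :=
        Finset.sum_le_sum fun b _ => touches_add_joinsClusters_le_card_mul hf
    _ = ∑ C ∈ W.image mk, F C := hcount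
    _ ≤ ∑ C ∈ W.image mk, Real.exp (F C) :=
        Finset.sum_le_sum fun C _ => by linarith [Real.add_one_le_exp (F C)]
    _ ≤ ∑ x ∈ W, Real.exp (F (mk x)) :=
        Finset.sum_image_le_of_nonneg fun C _ => (Real.exp_pos _).le
    _ = _ := by simp only [hF]

end OpenGraph

/-! ### Exploration of finite product measures -/

section Exploration

variable {B : Type*} [Fintype B]

/-- The Bernoulli weight of one bond. -/
def bondWeight (q : ℝ) (v : Bool) : ℝ := if v then q else 1 - q

/-- The Bernoulli weight of a configuration of finitely many bonds. -/
def configWeight (q : ℝ) (a : B → Bool) : ℝ := ∏ b, bondWeight q (a b)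

/-- The log-likelihood ratio of one bond when the parameter `p` is replaced by `q`. -/
def logRatio (p q : ℝ) (v : Bool) : ℝ := Real.log (bondWeight q v / bondWeight p v)

variable {p q : ℝ}

lemma sum_bondWeight (q : ℝ) : ∑ v, bondWeight q v = 1 := by simp [bondWeight]

lemma bondWeight_pos (h0 : 0 < q) (h1 : q < 1) (v : Bool) : 0 < bondWeight q v := by
  cases v <;> simp [bondWeight] <;> linarith

lemma configWeight_pos (h0 : 0 < q) (h1 : q < 1) (a : B → Bool) : 0 < configWeight q a :=
  Finset.prod_pos fun _ _ => bondWeight_pos h0 h1 _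

lemma bondWeight_mul_exp_logRatio (hp0 : 0 < p) (hp1 : p < 1) (hq0 : 0 < q) (hq1 : q < 1)
    (v : Bool) : bondWeight p v * Real.exp (logRatio p q v) = bondWeight q v := by
  have hp := bondWeight_pos hp0 hp1 v
  rw [logRatio, Real.exp_log (div_pos (bondWeight_pos hq0 hq1 v) hp), mul_div_cancel₀ _ hp.ne']

variable [DecidableEq B]

lemma sum_configWeight (q : ℝ) : ∑ a : B → Bool, configWeight q a = 1 := by
  simp only [configWeight, ← Fintype.prod_sum, sum_bondWeight, Finset.prod_const_one]

/-- Swapping a configuration with an independent copy off its set `T` is an involution. -/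
lemma sum_prod_ite_stoppingSet {α R : Type*} [Fintype α] [CommSemiring R]
    {T : (B → α) → Finset B} (hT : ∀ a c, (∀ b ∈ T c, a b = c b) → T a = T c)
    {g h : B → α → R} (hg : ∀ b, ∑ v, g b v = 1) (hh : ∀ b, ∑ v, h b v = 1) :
    ∑ a : B → α, ∏ b, (if b ∈ T a then h b (a b) else g b (a b)) = 1 := by
  let mix (z : (B → α) × (B → α)) : B → α := fun b => if b ∈ T z.1 then z.1 b else z.2 b
  have hmix (z : (B → α) × (B → α)) : T (mix z) = T z.1 :=
    hT _ _ fun b hb => if_pos hb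
  let swap (z : (B → α) × (B → α)) : (B → α) × (B → α) :=
    (mix z, fun b => if b ∈ T z.1 then z.2 b else z.1 b)
  have hswap : Function.Involutive swap := by
    intro z
    ext b <;> simp only [swap, mix, hmix] <;> split_ifs <;> rfl
  have hone (k : B → α → R) (hk : ∀ b, ∑ v, k b v = 1) : ∑ a : B → α, ∏ b, k b (a b) = 1 := by
    rw [← Fintype.prod_sum, Finset.prod_congr rfl fun b _ => hk b, Finset.prod_const_one]
  calc ∑ a : B → α, ∏ b, (if b ∈ T a then h b (a b) else g b (a b))
      = ∑ a : B → α, ∑ c : B → α, (∏ b, if b ∈ T a then h b (a b) else g b (a b)) *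
          ∏ b, (if b ∈ T a then g b (c b) else h b (c b)) := by
        refine Finset.sum_congr rfl fun a _ => ?_
        rw [← Finset.mul_sum, hone (fun b v => if b ∈ T a then g b v else h b v), mul_one]
        intro b
        split_ifs
        exacts [hg b, hh b]
    _ = ∑ z : (B → α) × (B → α), (∏ b, h b ((swap z).1 b)) * ∏ b, g b ((swap z).2 b) := by
        rw [Fintype.sum_prod_type]
        refine Finset.sum_congr rfl fun a _ => Finset.sum_congr rfl fun c _ => ?_
        simp only [← Finset.prod_mul_distrib, swap, mix]
        refine Finset.prod_congr rfl fun b _ => ?_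
        split_ifs
        exacts [rfl, mul_comm _ _]
    _ = ∑ z : (B → α) × (B → α), (∏ b, h b (z.1 b)) * ∏ b, g b (z.2 b) :=
        Equiv.sum_comp hswap.toPerm fun z => (∏ b, h b (z.1 b)) * ∏ b, g b (z.2 b)
    _ = 1 := by
        simp only [Fintype.sum_prod_type, ← Finset.sum_mul_sum, hone h hh, hone g hg, one_mul]

open scoped Classical in
lemma sum_configWeight_mul_exp_touches {X : Type*} (ends : B → Sym2 X) (x : X) (hp0 : 0 < p)
    (hp1 : p < 1) (hq0 : 0 < q) (hq1 : q < 1) :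
    ∑ a, configWeight p a * Real.exp (∑ b with Touches ends a x b, logRatio p q (a b)) = 1 := by
  let T (a : B → Bool) : Finset B := {b | Touches ends a x b}
  have hT (a c : B → Bool) (H : ∀ b ∈ T c, a b = c b) : T a = T c := by
    ext b
    simpa [T] using touches_congr fun b hb => H b (by simpa [T] using hb)
  rw [← sum_prod_ite_stoppingSet hT (fun _ => sum_bondWeight p) (fun _ => sum_bondWeight q)]
  refine Finset.sum_congr rfl fun a _ => ?_
  rw [Real.exp_sum, ← Finset.prod_ite_mem_eq, configWeight, ← Finset.prod_mul_distrib]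
  refine Finset.prod_congr rfl fun b _ => ?_
  rw [mul_ite, mul_one, bondWeight_mul_exp_logRatio hp0 hp1 hq0 hq1]

lemma sum_configWeight_mul_of_update {A : (B → Bool) → Prop} [DecidablePred A] {b : B}
    (hA : ∀ a v, A (Function.update a b v) ↔ A a) (p : ℝ) (f : Bool → ℝ) :
    ∑ a with A a, configWeight p a * f (a b) =
      (∑ v, bondWeight p v * f v) * ∑ a with A a, configWeight p a := by
  set K := ∑ v, bondWeight p v * f v with hK
  rw [mul_comm, Finset.sum_mul, ← sub_eq_zero, ← Finset.sum_sub_distrib]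
  refine Finset.sum_involution (fun a _ => Function.update a b (!(a b))) (fun a _ => ?_)
    (fun a _ _ h => by simpa using congrFun h b) (fun a ha => by simpa [hA] using ha)
    (fun a _ => by simp)
  have hsplit (c : B → Bool) : configWeight p c =
      bondWeight p (c b) * ∏ x ∈ Finset.univ.erase b, bondWeight p (c x) :=
    (Finset.mul_prod_erase _ _ (Finset.mem_univ b)).symm
  have hrest : ∏ x ∈ Finset.univ.erase b, bondWeight p (Function.update a b (!(a b)) x) =
      ∏ x ∈ Finset.univ.erase b, bondWeight p (a x) :=
    Finset.prod_congr rfl fun x hx => by rw [Function.update_of_ne (Finset.ne_of_mem_erase hx)]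
  have hsum := sum_bondWeight p
  rw [Fintype.sum_bool] at hK hsum
  rw [hsplit a, hsplit (Function.update a b _), hrest, Function.update_self]
  cases a b <;> simp only [Bool.not_false, Bool.not_true] <;>
    linear_combination (∏ x ∈ Finset.univ.erase b, bondWeight p (a x)) * (-hK - K * hsum)

end Exploration

/-! ### The expected number of bonds joining two clusters -/

section JoinsClusters

variable {p q : ℝ}

lemma div_le_logRatio_false (hp1 : p < 1) (hqp : q < p) :
    (p - q) / (1 - q) ≤ logRatio p q false := by
  have hp : 0 < 1 - p := by linarith
  have hq : 0 < 1 - q := by linarith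
  have h := Real.one_sub_inv_le_log_of_pos (div_pos hq hp)
  simp only [logRatio, bondWeight, Bool.false_eq_true, if_false]
  refine le_of_eq_of_le ?_ h
  field_simp
  ring

lemma sum_bondWeight_mul_logRatio_nonpos (hp0 : 0 < p) (hp1 : p < 1) (hq0 : 0 < q) (hq1 : q < 1) :
    ∑ v, bondWeight p v * logRatio p q v ≤ 0 := by
  have h (v : Bool) : bondWeight p v * logRatio p q v ≤ bondWeight q v - bondWeight p v := by
    have hp := bondWeight_pos hp0 hp1 v
    have hlog := Real.log_le_sub_one_of_pos (div_pos (bondWeight_pos hq0 hq1 v) hp)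
    calc bondWeight p v * logRatio p q v ≤ bondWeight p v * (bondWeight q v / bondWeight p v - 1) :=
          mul_le_mul_of_nonneg_left hlog hp.le
      _ = _ := by field_simp
  calc _ ≤ ∑ v, (bondWeight q v - bondWeight p v) := Finset.sum_le_sum fun v _ => h v
    _ = 0 := by rw [Finset.sum_sub_distrib, sum_bondWeight, sum_bondWeight, sub_self]

lemma neg_div_le_sum_bondWeight_mul_logRatio (hp0 : 0 < p) (hp1 : p < 1) (hq0 : 0 < q)
    (hq1 : q < 1) :
    -((p - q) ^ 2 / (q * (1 - q))) ≤ ∑ v, bondWeight p v * logRatio p q v := by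
  have h (v : Bool) : bondWeight p v * (1 - (bondWeight q v / bondWeight p v)⁻¹) ≤
      bondWeight p v * logRatio p q v :=
    mul_le_mul_of_nonneg_left
      (Real.one_sub_inv_le_log_of_pos (div_pos (bondWeight_pos hq0 hq1 v)
        (bondWeight_pos hp0 hp1 v))) (bondWeight_pos hp0 hp1 v).le
  refine le_of_eq_of_le ?_ (Finset.sum_le_sum fun v _ => h v)
  have : 1 - q ≠ 0 := by linarith
  have : 1 - p ≠ 0 := by linarith
  simp only [Fintype.sum_bool, bondWeight, if_true, Bool.false_eq_true, if_false]
  field_simp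
  ring

variable {B X : Type*} [Fintype B] [DecidableEq B] {ends : B → Sym2 X} {W : Finset X}

open scoped Classical in
lemma sum_bondWeight_mul_logRatio_le_touches (hp0 : 0 < p) (hp1 : p < 1) (hq0 : 0 < q)
    (hq1 : q < 1) (b : B) :
    ∑ v, bondWeight p v * logRatio p q v ≤
      ∑ a with ∃ x ∈ W, Touches ends a x b, configWeight p a * logRatio p q (a b) := by
  rw [sum_configWeight_mul_of_update (fun a v => by simp only [touches_update])]
  refine le_mul_of_le_one_right (sum_bondWeight_mul_logRatio_nonpos hp0 hp1 hq0 hq1) ?_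
  rw [← sum_configWeight (B := B) p]
  exact Finset.sum_le_sum_of_subset_of_nonneg (Finset.filter_subset _ _)
    fun a _ _ => (configWeight_pos hp0 hp1 a).le

open scoped Classical in
lemma sum_logRatio_add_sum_joinsClusters_le (hp1 : p < 1) (hq0 : 0 < q) (hqp : q < p) :
    Fintype.card B * (∑ v, bondWeight p v * logRatio p q v) +
      logRatio p q false * ∑ b, ∑ a with JoinsClusters ends W a b, configWeight p a ≤ W.card := by
  have hp0 : 0 < p := hq0.trans hqp
  have hq1 : q < 1 := hqp.trans hp1
  have hf : 0 ≤ logRatio p q false :=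
    (div_nonneg (by linarith) (by linarith)).trans (div_le_logRatio_false hp1 hqp)
  calc _ ≤ ∑ b, ∑ a with ∃ x ∈ W, Touches ends a x b, configWeight p a * logRatio p q (a b) +
          logRatio p q false * ∑ b, ∑ a with JoinsClusters ends W a b, configWeight p a := by
        gcongr
        rw [← nsmul_eq_mul, ← Finset.card_univ]
        exact Finset.card_nsmul_le_sum _ _ _ fun b _ =>
          sum_bondWeight_mul_logRatio_le_touches hp0 hp1 hq0 hq1 b
    _ = ∑ a, configWeight p a * (∑ b with ∃ x ∈ W, Touches ends a x b, logRatio p q (a b) +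
          ({b | JoinsClusters ends W a b} : Finset B).card * logRatio p q false) := by
        simp only [Finset.sum_filter, Finset.mul_sum, mul_add, Finset.sum_add_distrib, mul_ite,
          mul_zero, Finset.card_filter, Nat.cast_sum, Finset.sum_mul, Nat.cast_ite]
        rw [Finset.sum_comm, Finset.sum_comm (f := fun a b => ite (JoinsClusters ends W b a) _ _)]
        simp [mul_comm]
    _ ≤ ∑ a, configWeight p a *
          ∑ x ∈ W, Real.exp (∑ b with Touches ends a x b, logRatio p q (a b)) :=
        Finset.sum_le_sum fun a _ => mul_le_mul_of_nonneg_left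
          (sum_touches_add_card_joinsClusters_le hf)
          (configWeight_pos hp0 hp1 a).le
    _ = W.card := by
        simp only [Finset.mul_sum]
        rw [Finset.sum_comm]
        simp only [sum_configWeight_mul_exp_touches ends _ hp0 hp1 hq0 hq1, Finset.sum_const,
          nsmul_eq_mul, mul_one]

open scoped Classical in
/-- Aizenman–Kesten–Newman bound: `q` is a free parameter, to be let tend to `p` after the volume
tends to infinity. -/
theorem sum_joinsClusters_le (hp1 : p < 1) (hq0 : 0 < q) (hqp : q < p) :
    ∑ b, ∑ a with JoinsClusters ends W a b, configWeight p a ≤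
      (1 - q) / (p - q) * W.card + (p - q) / q * Fintype.card B := by
  have hp0 : 0 < p := hq0.trans hqp
  have hpq : 0 < p - q := sub_pos.2 hqp
  have hq1 : 0 < 1 - q := by linarith
  set D := ∑ b, ∑ a with JoinsClusters ends W a b, configWeight p a with hD
  have hD0 : 0 ≤ D := Finset.sum_nonneg fun b _ => Finset.sum_nonneg fun a _ =>
    (configWeight_pos hp0 hp1 a).le
  have hsum := sum_logRatio_add_sum_joinsClusters_le (ends := ends) (W := W) hp1 hq0 hqp
  have hmean := mul_le_mul_of_nonneg_left
    (neg_div_le_sum_bondWeight_mul_logRatio hp0 hp1 hq0 (sub_pos.1 hq1))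
    (Nat.cast_nonneg (Fintype.card B))
  have hfalse := mul_le_mul_of_nonneg_right (div_le_logRatio_false hp1 hqp) hD0
  calc D = (1 - q) / (p - q) * ((p - q) / (1 - q) * D) := by field_simp
    _ ≤ (1 - q) / (p - q) * (W.card + Fintype.card B * ((p - q) ^ 2 / (q * (1 - q)))) := by
        gcongr
        linarith
    _ = _ := by field_simp

end JoinsClusters

/-! ### Open clusters of the lattice -/

section Lattice

variable {d : ℕ} {ω ω' : Config d} {x y z e : V d}

/-- The two endpoints of a lattice bond. -/
def bondEnds (b : EdgeIx d) : Sym2 (V d) := s(b.1, b.1 + unitVec d b.2)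

/-- The graph of the open bonds of `ω`. -/
abbrev openLattice (ω : Config d) : SimpleGraph (V d) := openGraph bondEnds ω

lemma shift_shift (x y : V d) (ω : Config d) : shift x (shift y ω) = shift (x + y) ω := by
  funext b
  simp [shift, add_assoc]

lemma shift_zero (ω : Config d) : shift 0 ω = ω := by
  funext b
  simp [shift]

lemma unitVec_ne_zero (i : Fin d) : unitVec d i ≠ 0 := fun h => by
  simpa [unitVec] using congrFun h i

lemma edgeOpen.mem_Ud (h : edgeOpen ω x e) : e ∈ Ud d := by
  obtain ⟨i, ⟨rfl, -⟩ | ⟨rfl, -⟩⟩ := h <;> simp [Ud]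

lemma edgeOpen_iff_adj : edgeOpen ω x e ↔ (openLattice ω).Adj x (x + e) := by
  rw [openGraph_adj]
  constructor
  · rintro ⟨i, ⟨rfl, h⟩ | ⟨rfl, h⟩⟩
    · exact ⟨⟨(x, i), h, rfl⟩, by simpa using unitVec_ne_zero i⟩
    · refine ⟨⟨(x - unitVec d i, i), h, ?_⟩, by simpa using unitVec_ne_zero i⟩
      simp [bondEnds, Sym2.eq_swap, sub_eq_add_neg]
  · rintro ⟨⟨⟨y, i⟩, h, hends⟩, -⟩
    refine ⟨i, ?_⟩
    obtain ⟨rfl, hy⟩ | ⟨hy, hx⟩ := Sym2.eq_iff.1 hends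
    · exact .inl ⟨(add_left_cancel hy).symm, h⟩
    · obtain rfl : y = x - unitVec d i := eq_sub_of_add_eq hx
      exact .inr ⟨(add_left_cancel (hy.symm.trans (sub_eq_add_neg _ _))), h⟩

lemma edgeOpen_shift : edgeOpen (shift z ω) x e ↔ edgeOpen ω (x + z) e := by
  simp only [edgeOpen, shift, sub_add_eq_add_sub]

lemma openLattice_shift : openLattice (shift z ω) = (openLattice ω).comap (· + z) := by
  ext x y
  have h := edgeOpen_shift (ω := ω) (z := z) (x := x) (e := y - x)
  rw [edgeOpen_iff_adj, edgeOpen_iff_adj] at h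
  simpa [add_right_comm x z (y - x)] using h

lemma reachable_shift :
    (openLattice (shift z ω)).Reachable x y ↔ (openLattice ω).Reachable (x + z) (y + z) := by
  rw [openLattice_shift]
  exact (SimpleGraph.Iso.comap (Equiv.addRight z) (openLattice ω)).reachable_iff.symm

lemma exists_isOpenPath_iff_reachable :
    (∃ (γ : ℕ → V d) (n : ℕ), γ 0 = x ∧ IsOpenPath ω γ n ∧ γ n = y) ↔
      (openLattice ω).Reachable x y := by
  constructor
  · rintro ⟨γ, n, rfl, hγ, rfl⟩
    induction n with
    | zero => rfl
    | succ n ih =>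
      refine (ih fun k hk => hγ k (hk.trans n.lt_succ_self)).trans (SimpleGraph.Adj.reachable ?_)
      simpa [edgeOpen_iff_adj] using (hγ n n.lt_succ_self).2
  · rintro ⟨w⟩
    refine ⟨w.getVert, w.length, w.getVert_zero, fun k hk => ?_, w.getVert_length⟩
    have h : edgeOpen ω (w.getVert k) (w.getVert (k + 1) - w.getVert k) := by
      simpa [edgeOpen_iff_adj] using w.adj_getVert_succ hk
    exact ⟨h.mem_Ud, h⟩

/-- The box `[-n, n]^d`. -/
def box (d n : ℕ) : Finset (V d) := Fintype.piFinset fun _ => Finset.Icc (-n : ℤ) n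

lemma mem_box {n : ℕ} : x ∈ box d n ↔ ∀ i, |x i| ≤ n := by
  simp [box, abs_le]

lemma inBox_natCast {n : ℕ} : inBox x n ↔ x ∈ box d n := by
  simp only [inBox, mem_box]
  exact_mod_cast Iff.rfl

lemma box_subset_box {m n : ℕ} (h : m ≤ n) : box d m ⊆ box d n := fun _ hx =>
  mem_box.2 fun i => (mem_box.1 hx i).trans (by exact_mod_cast h)

lemma card_box (d n : ℕ) : (box d n).card = (2 * n + 1) ^ d := by
  simp only [box, Fintype.card_piFinset_const, Int.card_Icc]
  congr 1
  lia

lemma exists_subset_box (F : Finset (V d)) : ∃ n, F ⊆ box d n := by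
  refine ⟨F.sup fun x => ∑ i, (x i).natAbs, fun x hx => mem_box.2 fun i => ?_⟩
  have h1 : (x i).natAbs ≤ ∑ i, (x i).natAbs :=
    Finset.single_le_sum (f := fun i => (x i).natAbs) (fun _ _ => Nat.zero_le _) (Finset.mem_univ i)
  have h2 := h1.trans (Finset.le_sup (f := fun x : V d => ∑ i, (x i).natAbs) hx)
  rw [Int.abs_eq_natAbs]
  exact_mod_cast h2

lemma abs_unitVec_le (i j : Fin d) : |unitVec d i j| ≤ 1 := by
  unfold unitVec
  split_ifs <;> simp

lemma add_unitVec_mem_box {n : ℕ} (i : Fin d) (hx : x ∈ box d n) :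
    x + unitVec d i ∈ box d (n + 1) := mem_box.2 fun j => by
  have h1 := mem_box.1 hx j
  have h2 := abs_unitVec_le i j
  have h3 := abs_add_le (x j) (unitVec d i j)
  push_cast
  exact h3.trans (by lia)

lemma mem_box_of_add_unitVec_mem_box {n : ℕ} (i : Fin d) (hx : x + unitVec d i ∈ box d n) :
    x ∈ box d (n + 1) := mem_box.2 fun j => by
  have h1 := mem_box.1 hx j
  have h2 := abs_unitVec_le i j
  have h3 := abs_sub (x j + unitVec d i j) (unitVec d i j)
  rw [add_sub_cancel_right] at h3
  push_cast
  exact h3.trans (by simp only [Pi.add_apply] at h1; lia)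

lemma memCluster_iff_infinite :
    memCluster ω x ↔ {y | (openLattice ω).Reachable x y}.Infinite := by
  have hexit : memCluster ω x ↔ ∀ n : ℕ, ∃ y, (openLattice ω).Reachable x y ∧ y ∉ box d n := by
    simp only [memCluster, inBox_natCast, ← exists_isOpenPath_iff_reachable]
    refine forall_congr' fun n => ⟨fun ⟨γ, m, h0, hγ, hm⟩ => ⟨γ m, ⟨γ, m, h0, hγ, rfl⟩, hm⟩, ?_⟩
    rintro ⟨y, ⟨γ, m, h0, hγ, rfl⟩, hm⟩
    exact ⟨γ, m, h0, hγ, hm⟩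
  rw [hexit]
  refine ⟨fun h hfin => ?_, fun h n => h.exists_notMem_finset _⟩
  obtain ⟨n, hn⟩ := exists_subset_box hfin.toFinset
  obtain ⟨y, hy, hyn⟩ := h n
  exact hyn (hn (hfin.mem_toFinset.2 hy))

lemma memCluster_mono (h : ∀ b, ω b = true → ω' b = true) (hx : memCluster ω x) :
    memCluster ω' x := by
  rw [memCluster_iff_infinite] at hx ⊢
  exact hx.mono fun y hy => hy.mono (openGraph_mono h)

lemma memCluster.of_reachable (hx : memCluster ω x) (h : (openLattice ω).Reachable x y) :
    memCluster ω y := by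
  rw [memCluster_iff_infinite] at hx ⊢
  exact hx.mono fun z hz => h.symm.trans hz

lemma memCluster_shift : memCluster (shift z ω) x ↔ memCluster ω (x + z) := by
  have h : {y | (openLattice ω).Reachable (x + z) (y + z)} =
      (Equiv.addRight z).symm '' {y | (openLattice ω).Reachable (x + z) y} := by
    rw [Equiv.image_symm_eq_preimage]
    rfl
  simp only [memCluster_iff_infinite, reachable_shift, h]
  exact Set.infinite_image_iff (Equiv.injective _).injOn

end Lattice

/-! ### Measurability of connection events -/

section Measurability

variable {B X : Type*}

lemma reachable_iff_exists_finset {ends : B → Sym2 X} {a : B → Bool} {x y : X} :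
    (openGraph ends a).Reachable x y ↔ ∃ F : Finset B, (∀ b ∈ F, a b = true) ∧
      (openGraph ends (fun b => open scoped Classical in decide (b ∈ F))).Reachable x y := by
  classical
  constructor
  swap
  · rintro ⟨F, hF, h⟩
    exact h.mono (openGraph_mono fun b hb => hF b (by simpa using hb))
  refine fun h => reachable_induction (motive := fun y => ∃ F : Finset B, (∀ b ∈ F, a b = true) ∧
    (openGraph ends (fun b => decide (b ∈ F))).Reachable x y) ⟨∅, by simp, .rfl⟩ ?_ h
  rintro b y z hb hends - ⟨F, hF, h⟩
  refine ⟨insert b F, by simpa [hb] using hF, ?_⟩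
  refine (h.mono (openGraph_mono fun b' hb' => ?_)).trans (reachable_of_open (b := b) ?_
    (hends ▸ Sym2.mem_mk_left y z) (hends ▸ Sym2.mem_mk_right y z)) <;> simp_all

lemma measurableSet_reachable [Countable B] (ends : B → Sym2 X) (x y : X) :
    MeasurableSet {a | (openGraph ends a).Reachable x y} := by
  rw [funext fun a => propext (reachable_iff_exists_finset (a := a))]
  simp only [Set.ofPred_exists, Set.ofPred_and, Set.ofPred_forall]
  refine .iUnion fun F => .inter (.biInter F.countable_toSet fun b _ => ?_) (.const _)
  exact measurableSet_eq_fun (measurable_pi_apply b) measurable_const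

variable {d : ℕ}

lemma measurable_shift (x : V d) : Measurable (shift x) :=
  measurable_pi_lambda _ fun b => measurable_pi_apply (b.1 + x, b.2)

lemma measurableSet_coord (b : EdgeIx d) (v : Bool) : MeasurableSet {ω : Config d | ω b = v} :=
  measurableSet_eq_fun (measurable_pi_apply b) measurable_const

lemma measurableSet_edgeOpen (x e : V d) : MeasurableSet {ω | edgeOpen ω x e} := by
  simp only [edgeOpen, Set.ofPred_exists, Set.ofPred_or, Set.ofPred_and]
  exact .iUnion fun i => .union (.inter (.const _) (measurableSet_coord _ _))
    (.inter (.const _) (measurableSet_coord _ _))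

lemma measurableSet_memCluster (x : V d) : MeasurableSet {ω | memCluster ω x} := by
  have h (ω : Config d) : memCluster ω x ↔
      ∀ F : Finset (V d), ∃ y : {y // y ∉ F}, (openLattice ω).Reachable x y := by
    rw [memCluster_iff_infinite]
    refine ⟨fun h F => ?_, fun h hfin => ?_⟩
    · obtain ⟨y, hy, hyF⟩ := h.exists_notMem_finset F
      exact ⟨⟨y, hyF⟩, hy⟩
    · obtain ⟨⟨y, hyF⟩, hy⟩ := h hfin.toFinset
      exact hyF (hfin.mem_toFinset.2 hy)
  simp only [h, Set.ofPred_forall, Set.ofPred_exists]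
  exact .iInter fun F => .iUnion fun y => measurableSet_reachable _ x y

lemma measurableSet_cluZero : MeasurableSet (cluZero d) := measurableSet_memCluster 0

end Measurability

/-! ### Product measures -/

section Mixing

open scoped symmDiff

variable {Ω : Type*} [MeasurableSpace Ω] {P : Measure Ω} [IsProbabilityMeasure P] {A t : Set Ω}
  {g : Ω → Ω}

lemma abs_measureReal_sub_mul_self_le (hg : MeasurePreserving g P P) (hA : MeasurableSet A)
    (hgA : g ⁻¹' A = A) (ht : MeasurableSet t) (hmix : P (t ∩ g ⁻¹' t) = P t * P t) :
    |P.real A - P.real A * P.real A| ≤ 4 * P.real (t ∆ A) := by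
  have hmix' : P.real (t ∩ g ⁻¹' t) = P.real t * P.real t := by
    simp only [measureReal_def, hmix, ENNReal.toReal_mul]
  have htA : |P.real t - P.real A| ≤ P.real (t ∆ A) :=
    abs_measureReal_sub_le_measureReal_symmDiff ht.nullMeasurableSet hA.nullMeasurableSet
  have hgt : P.real ((g ⁻¹' t) ∆ A) = P.real (t ∆ A) := by
    conv_lhs => rw [← hgA]
    rw [← Set.preimage_symmDiff, hg.measureReal_preimage (ht.symmDiff hA).nullMeasurableSet]
  have hinter : |P.real t * P.real t - P.real A| ≤ 2 * P.real (t ∆ A) := by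
    rw [← hmix']
    calc _ ≤ P.real ((t ∩ g ⁻¹' t) ∆ A) := abs_measureReal_sub_le_measureReal_symmDiff
          (ht.inter (hg.measurable ht)).nullMeasurableSet hA.nullMeasurableSet
      _ ≤ P.real ((t ∆ A) ∪ ((g ⁻¹' t) ∆ A)) := measureReal_mono fun y => by
          simp only [Set.mem_symmDiff, Set.mem_inter_iff, Set.mem_union]
          tauto
      _ ≤ 2 * P.real (t ∆ A) := by
          refine (measureReal_union_le _ _).trans_eq ?_
          rw [hgt, two_mul]
  have ht0 : 0 ≤ P.real t := measureReal_nonneg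
  have ht1 : P.real t ≤ 1 := measureReal_le_one
  have hA0 : 0 ≤ P.real A := measureReal_nonneg
  have hA1 : P.real A ≤ 1 := measureReal_le_one
  rw [abs_le] at *
  constructor <;> nlinarith

/-- Approximating an invariant event by `t` in the generating ring, mixing on `t` shows that its
probability equals its own square. -/
theorem measure_eq_zero_or_compl_of_mixing {C : Set (Set Ω)} (hC : IsSetRing C)
    (huniv : Set.univ ∈ C) (hgen : ‹MeasurableSpace Ω› = MeasurableSpace.generateFrom C)
    (hA : MeasurableSet A) (hmix : ∀ t ∈ C, ∃ g, MeasurePreserving g P P ∧ g ⁻¹' A = A ∧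
      P (t ∩ g ⁻¹' t) = P t * P t) :
    P A = 0 ∨ P Aᶜ = 0 := by
  have hidem : |P.real A - P.real A * P.real A| ≤ 0 := by
    refine le_of_forall_pos_le_add fun ε hε => ?_
    obtain ⟨t, htC, htA⟩ := exists_measure_symmDiff_lt_of_generateFrom_isSetRing (μ := P) hC
      ⟨{Set.univ}, Set.countable_singleton _, Set.singleton_subset_iff.2 huniv, by simp⟩ hgen hA
      (ENNReal.ofReal_pos.2 (show 0 < ε / 4 by positivity))
    obtain ⟨g, hg, hgA, htt⟩ := hmix t htC
    have ht : MeasurableSet t := hgen ▸ MeasurableSpace.measurableSet_generateFrom htC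
    have htA' : P.real (t ∆ A) ≤ ε / 4 := ENNReal.toReal_le_of_le_ofReal (by positivity) htA.le
    linarith [abs_measureReal_sub_mul_self_le hg hA hgA ht htt]
  have hfactor : P.real A * (1 - P.real A) = 0 := by
    linear_combination abs_nonpos_iff.1 hidem
  refine (mul_eq_zero.1 hfactor).imp (fun h => (measureReal_eq_zero_iff).1 h) fun h => ?_
  rw [prob_compl_eq_zero_iff hA, ← ENNReal.toReal_eq_one_iff]
  exact (sub_eq_zero.1 h).symm

end Mixing

section InfinitePi

variable {ι α : Type*} [MeasurableSpace α] {ν : Measure α} [IsProbabilityMeasure ν]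

lemma measurePreserving_update_infinitePi [DecidableEq ι] (i : ι) :
    MeasurePreserving (fun z : α × (ι → α) => Function.update z.2 i z.1)
      (ν.prod (.infinitePi fun _ => ν)) (.infinitePi fun _ => ν) := by
  have hmeas : Measurable fun z : α × (ι → α) => Function.update z.2 i z.1 :=
    measurable_pi_lambda _ fun j => by
      simp only [Function.update_apply]
      split_ifs <;> fun_prop
  refine ⟨hmeas, Measure.eq_infinitePi _ fun s t ht => ?_⟩
  have hpre : (fun z : α × (ι → α) => Function.update z.2 i z.1) ⁻¹' Set.pi s t =
      (if i ∈ s then t i else Set.univ) ×ˢ Set.pi (s.erase i) t := by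
    ext ⟨x, ω⟩
    simp only [Set.mem_preimage, Set.mem_pi, Finset.mem_coe, Function.update_apply, Set.mem_prod,
      Finset.mem_erase]
    refine ⟨fun h => ⟨?_, fun j hj => by simpa [hj.1] using h j hj.2⟩, fun h j hj => ?_⟩
    · split_ifs with hi
      exacts [by simpa using h i hi, trivial]
    · split_ifs with hji
      · subst hji
        simpa [hj] using h.1
      · exact h.2 j ⟨hji, hj⟩
  rw [Measure.map_apply hmeas (.pi s.countable_toSet fun j _ => ht j), hpre, Measure.prod_prod,
    Measure.infinitePi_pi _ fun j _ => ht j]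
  split_ifs with hi
  · exact Finset.mul_prod_erase s (fun j => ν (t j)) hi
  · rw [Finset.erase_eq_of_notMem hi, measure_univ, one_mul]

lemma map_update_infinitePi_absolutelyContinuous [DecidableEq ι]
    (i : ι) {v : α} (hv : ν {v} ≠ 0) :
    (Measure.infinitePi fun _ : ι => ν).map (Function.update · i v) ≪ .infinitePi fun _ => ν := by
  have hmeas : Measurable fun ω : ι → α => Function.update ω i v := measurable_update_left
  refine .mk fun N hN h0 => ?_
  rw [Measure.map_apply hmeas hN]
  rw [← (measurePreserving_update_infinitePi i).measure_preimage hN.nullMeasurableSet] at h0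
  have hle : {v} ×ˢ ((Function.update · i v) ⁻¹' N) ⊆
      (fun z : α × (ι → α) => Function.update z.2 i z.1) ⁻¹' N := by
    rintro ⟨_, ω⟩ ⟨rfl, h⟩
    exact h
  have := measure_mono_null hle h0
  rw [Measure.prod_prod] at this
  exact (mul_eq_zero.1 this).resolve_left hv

end InfinitePi

/-! ### Bernoulli percolation -/

section Bernoulli

variable {d : ℕ} {p : ℝ} {P : Measure (Config d)}

lemma bernoulliMeasure_singleton (hp : p ∈ unitInterval) (v : Bool) :
    bernoulliMeasure true false ⟨p, hp⟩ {v} = ENNReal.ofReal (bondWeight p v) := by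
  rw [bernoulliMeasure_apply _ (measurableSet_singleton v), ENNReal.ofReal]
  cases v <;> simp [bondWeight, unitInterval.toNNReal, Real.toNNReal_of_nonneg, hp.1, hp.2] <;> rfl

lemma IsBernoulli.eq_infinitePi (hP : IsBernoulli d p P) (hp : p ∈ unitInterval) :
    P = .infinitePi fun _ => bernoulliMeasure true false ⟨p, hp⟩ := by
  have := hP.1
  refine IsProjectiveLimit.unique ?_ (Measure.isProjectiveLimit_infinitePi _)
  refine fun I => Measure.ext_of_singleton fun a => ?_
  have hpre : (I.restrict : Config d → I → Bool) ⁻¹' {a} =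
      {ω : Config d | ∀ b ∈ I, ω b = if h : b ∈ I then a ⟨b, h⟩ else false} := by
    ext ω
    simp only [Set.mem_preimage, Set.mem_singleton_iff, funext_iff, Subtype.forall]
    exact forall₂_congr fun b hb => by simp [hb]
  rw [Measure.map_apply (Finset.measurable_restrict I) (measurableSet_singleton a), hpre, hP.2,
    Measure.pi_singleton, ← Finset.prod_coe_sort]
  refine Finset.prod_congr rfl fun b _ => ?_
  rw [bernoulliMeasure_singleton, dif_pos b.2, bondWeight]

open scoped Classical in
lemma IsBernoulli.measureReal_restrict (hP : IsBernoulli d p P) (hp : p ∈ unitInterval)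
    (I : Finset (EdgeIx d)) (D : (I → Bool) → Prop) :
    P.real {ω | D (I.restrict ω)} = ∑ a with D a, configWeight p a := by
  have hweight (a : I → Bool) :
      (Measure.pi fun _ : I => bernoulliMeasure true false ⟨p, hp⟩).real {a} =
        configWeight p a := by
    rw [measureReal_def, Measure.pi_singleton, ENNReal.toReal_prod, configWeight]
    refine Finset.prod_congr rfl fun b _ => ?_
    rw [bernoulliMeasure_singleton, ENNReal.toReal_ofReal]
    unfold bondWeight
    split_ifs
    exacts [hp.1, sub_nonneg.2 hp.2]
  have hmap : P.map I.restrict = .pi fun _ => bernoulliMeasure true false ⟨p, hp⟩ := by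
    rw [hP.eq_infinitePi hp, Measure.infinitePi_map_restrict]
  rw [← Finset.sum_congr rfl fun a _ => hweight a, sum_measureReal_singleton, ← hmap,
    map_measureReal_apply (Finset.measurable_restrict I) (Set.toFinite _).measurableSet]
  simp [Set.preimage]

lemma IsBernoulli.measurePreserving_shift (hP : IsBernoulli d p P) (hp : p ∈ unitInterval)
    (x : V d) : MeasurePreserving (shift x) P P := by
  refine ⟨measurable_shift x, ?_⟩
  rw [hP.eq_infinitePi hp]
  exact Measure.map_infinitePi_infinitePi_of_inj (f := fun b : EdgeIx d => (b.1 + x, b.2))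
    fun b c h => by simpa [Prod.ext_iff] using h

lemma IsBernoulli.map_update_absolutelyContinuous (hP : IsBernoulli d p P) (hp0 : 0 < p)
    (hp1 : p ≤ 1) (b : EdgeIx d) : P.map (Function.update · b true) ≪ P := by
  have hp : p ∈ unitInterval := ⟨hp0.le, hp1⟩
  rw [hP.eq_infinitePi hp]
  refine map_update_infinitePi_absolutelyContinuous b ?_
  rw [bernoulliMeasure_singleton]
  simpa [bondWeight] using hp0

lemma exists_disjoint_image_shift (hd : 0 < d) (s : Finset (EdgeIx d)) :
    ∃ x : V d, Disjoint s (s.image fun b => (b.1 + x, b.2)) := by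
  obtain ⟨n, hn⟩ := exists_subset_box (s.image Prod.fst)
  refine ⟨fun _ => 2 * n + 1, Finset.disjoint_left.2 fun b hb hb' => ?_⟩
  obtain ⟨c, hc, rfl⟩ := Finset.mem_image.1 hb'
  have hc := mem_box.1 (hn (Finset.mem_image_of_mem _ hc)) ⟨0, hd⟩
  have hb := mem_box.1 (hn (Finset.mem_image_of_mem _ hb)) ⟨0, hd⟩
  simp only [Pi.add_apply, abs_le] at hb hc
  lia

lemma IsBernoulli.exists_measure_inter_shift (hP : IsBernoulli d p P) (hp : p ∈ unitInterval)
    (hd : 0 < d) {t : Set (Config d)} (ht : t ∈ measurableCylinders fun _ : EdgeIx d => Bool) :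
    ∃ x : V d, P (t ∩ shift x ⁻¹' t) = P t * P t := by
  obtain ⟨s, S, hS, rfl⟩ := (mem_measurableCylinders _).1 ht
  obtain ⟨x, hx⟩ := exists_disjoint_image_shift hd s
  let s' := s.image fun b => (b.1 + x, b.2)
  let pull (g : s' → Bool) (b : s) : Bool :=
    g ⟨(b.1.1 + x, b.1.2), Finset.mem_image_of_mem (fun b : EdgeIx d => (b.1 + x, b.2)) b.2⟩
  have hpull : Measurable pull := by fun_prop
  have hindep : iIndepFun (fun (b : EdgeIx d) (ω : Config d) => ω b) P := by
    rw [hP.eq_infinitePi hp]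
    exact iIndepFun_infinitePi (X := fun _ => id) fun _ => measurable_id
  refine ⟨x, ?_⟩
  calc P (cylinder s S ∩ shift x ⁻¹' cylinder s S)
      = P (cylinder s S ∩ cylinder s' (pull ⁻¹' S)) := rfl
    _ = P (cylinder s S) * P (cylinder s' (pull ⁻¹' S)) :=
        (hindep.indepFun_finset s s' hx measurable_pi_apply).measure_inter_preimage_eq_mul _ _ hS
          (hpull hS)
    _ = P (cylinder s S) * P (shift x ⁻¹' cylinder s S) := rfl
    _ = P (cylinder s S) * P (cylinder s S) := by
        rw [(hP.measurePreserving_shift hp x).measure_preimage (hS.cylinder s).nullMeasurableSet]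

theorem IsBernoulli.shift_ergodic (hP : IsBernoulli d p P) (hp : p ∈ unitInterval) (hd : 0 < d)
    {A : Set (Config d)} (hA : MeasurableSet A) (hinv : ∀ x : V d, shift x ⁻¹' A = A) :
    P A = 0 ∨ P Aᶜ = 0 := by
  have := hP.1
  refine measure_eq_zero_or_compl_of_mixing isSetRing_measurableCylinders
    (univ_mem_measurableCylinders _) generateFrom_measurableCylinders.symm hA fun t ht => ?_
  obtain ⟨x, hx⟩ := hP.exists_measure_inter_shift hp hd ht
  exact ⟨shift x, hP.measurePreserving_shift hp x, hinv x, hx⟩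

end Bernoulli

/-! ### Uniqueness of the infinite cluster -/

section OpenGraphUpdate

variable {B X : Type*} {ends : B → Sym2 X} {a : B → Bool} {x y : X} {b : B}

lemma reachable_update_true [DecidableEq B]
    (h : (openGraph ends (Function.update a b true)).Reachable x y) :
    (openGraph ends a).Reachable x y ∨ ∃ u ∈ ends b, ∃ v ∈ ends b,
      (openGraph ends a).Reachable x u ∧ (openGraph ends a).Reachable v y := by
  refine reachable_induction (motive := fun y => (openGraph ends a).Reachable x y ∨
    ∃ u ∈ ends b, ∃ v ∈ ends b, (openGraph ends a).Reachable x u ∧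
      (openGraph ends a).Reachable v y) (.inl .rfl) ?_ h
  intro c y z hc hends _ ih
  have hy : y ∈ ends c := hends ▸ Sym2.mem_mk_left y z
  have hz : z ∈ ends c := hends ▸ Sym2.mem_mk_right y z
  obtain rfl | hcb := eq_or_ne c b
  · right
    obtain hxy | ⟨u, hu, -, -, hxu, -⟩ := ih
    exacts [⟨y, hy, z, hz, hxy, .rfl⟩, ⟨u, hu, z, hz, hxu, .rfl⟩]
  · rw [Function.update_of_ne hcb] at hc
    have hyz := reachable_of_open hc hy hz
    exact ih.imp (·.trans hyz) fun ⟨u, hu, v, hv, hxu, hvy⟩ => ⟨u, hu, v, hv, hxu, hvy.trans hyz⟩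

end OpenGraphUpdate

section Uniqueness

variable {d n : ℕ} {ω : Config d} {x y z : V d} {b : EdgeIx d}

/-- The bonds based in the box `[-n, n]^d`. -/
def boxBonds (d n : ℕ) : Finset (EdgeIx d) := box d n ×ˢ Finset.univ

/-- The graph of the open bonds based in the box `[-n, n]^d`. -/
abbrev boxLattice (n : ℕ) (ω : Config d) : SimpleGraph (V d) :=
  openGraph (fun b : boxBonds d n => bondEnds b.1) ((boxBonds d n).restrict ω)

/-- The boundary of the box `[-(n + 1), n + 1]^d`. -/
def boxBoundary (d n : ℕ) : Finset (V d) := box d (n + 1) \ box d n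

/-- The bond `b` is closed and joins two distinct infinite open clusters. -/
def JoinsInfiniteClusters (ω : Config d) (b : EdgeIx d) : Prop :=
  ω b = false ∧ memCluster ω b.1 ∧ memCluster ω (b.1 + unitVec d b.2) ∧
    ¬ (openLattice ω).Reachable b.1 (b.1 + unitVec d b.2)

lemma mem_boxBonds : b ∈ boxBonds d n ↔ b.1 ∈ box d n := by simp [boxBonds]

lemma card_boxBonds (d n : ℕ) : (boxBonds d n).card = (2 * n + 1) ^ d * d := by
  simp [boxBonds, card_box]

lemma card_boxBoundary (d n : ℕ) :
    ((boxBoundary d n).card : ℝ) = (2 * n + 3) ^ d - (2 * n + 1) ^ d := by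
  have h := box_subset_box (d := d) n.le_succ
  rw [boxBoundary, Finset.card_sdiff_of_subset h, Nat.cast_sub (Finset.card_le_card h), card_box,
    card_box]
  push_cast
  ring

lemma boxLattice_le (n : ℕ) (ω : Config d) : boxLattice n ω ≤ openLattice ω :=
  SimpleGraph.fromEdgeSet_mono (by rintro _ ⟨b, hb, rfl⟩; exact ⟨b.1, hb, rfl⟩)

lemma mem_box_succ_of_bondEnds_eq (hb : bondEnds b = s(y, z)) (hy : y ∈ box d n) :
    b.1 ∈ box d (n + 1) ∧ z ∈ box d (n + 1) := by
  obtain ⟨rfl, rfl⟩ | ⟨rfl, rfl⟩ := Sym2.eq_iff.1 hb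
  · exact ⟨box_subset_box n.le_succ hy, add_unitVec_mem_box _ hy⟩
  · exact ⟨mem_box_of_add_unitVec_mem_box _ hy, mem_box_of_add_unitVec_mem_box _ hy⟩

lemma memCluster.exists_boxBoundary_reachable (hx : memCluster ω x) (hxn : x ∈ box d (n + 1)) :
    ∃ y ∈ boxBoundary d n, (boxLattice (n + 1) ω).Reachable y x := by
  by_contra! H
  have hinner (y : V d) (hy : y ∈ box d (n + 1)) (hxy : (boxLattice (n + 1) ω).Reachable x y) :
      (boxLattice (n + 1) ω).Reachable x y ∧ y ∈ box d n :=
    ⟨hxy, by_contra fun h => H y (Finset.mem_sdiff.2 ⟨hy, h⟩) hxy.symm⟩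
  have hconfined (y : V d) (hxy : (openLattice ω).Reachable x y) :
      (boxLattice (n + 1) ω).Reachable x y ∧ y ∈ box d n := by
    refine reachable_induction (motive := fun y => (boxLattice (n + 1) ω).Reachable x y ∧
      y ∈ box d n) (hinner x hxn .rfl) ?_ hxy
    rintro b y z hb hends - ⟨hxy, hy⟩
    obtain ⟨hbn, hz⟩ := mem_box_succ_of_bondEnds_eq hends hy
    refine hinner z hz (hxy.trans ?_)
    exact reachable_of_open (b := (⟨b, mem_boxBonds.2 hbn⟩ : boxBonds d (n + 1))) hb
      (hends ▸ Sym2.mem_mk_left y z) (hends ▸ Sym2.mem_mk_right y z)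
  exact memCluster_iff_infinite.1 hx
    ((box d n).finite_toSet.subset fun y hy => (hconfined y hy).2)

lemma measurableSet_joinsInfiniteClusters (b : EdgeIx d) :
    MeasurableSet {ω | JoinsInfiniteClusters ω b} :=
  (measurableSet_coord b false).inter <| (measurableSet_memCluster _).inter <|
    (measurableSet_memCluster _).inter (measurableSet_reachable _ _ _).compl

lemma joinsInfiniteClusters_shift :
    JoinsInfiniteClusters (shift x ω) b ↔ JoinsInfiniteClusters ω (b.1 + x, b.2) := by
  simp only [JoinsInfiniteClusters, memCluster_shift, reachable_shift, add_right_comm _ _ x]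
  rfl

lemma JoinsInfiniteClusters.joinsClusters (h : JoinsInfiniteClusters ω b) (hb : b.1 ∈ box d n) :
    JoinsClusters (fun b : boxBonds d (n + 1) => bondEnds b.1) (boxBoundary d n)
      ((boxBonds d (n + 1)).restrict ω)
      ⟨b, mem_boxBonds.2 (box_subset_box n.le_succ hb)⟩ := by
  obtain ⟨hclosed, h1, h2, hnot⟩ := h
  refine ⟨hclosed, fun y hy => ?_, b.1, Sym2.mem_mk_left _ _, _, Sym2.mem_mk_right _ _,
    fun hr => hnot (hr.mono (boxLattice_le _ _))⟩
  obtain rfl | rfl := Sym2.mem_iff.1 hy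
  exacts [h1.exists_boxBoundary_reachable (box_subset_box n.le_succ hb),
    h2.exists_boxBoundary_reachable (add_unitVec_mem_box _ hb)]

lemma reachable_of_not_joinsInfiniteClusters (h : ¬ JoinsInfiniteClusters ω b)
    (hx : x ∈ bondEnds b) (hy : y ∈ bondEnds b) (hωx : memCluster ω x) (hωy : memCluster ω y) :
    (openLattice ω).Reachable x y := by
  cases hb : ω b
  swap
  · exact reachable_of_open hb hx hy
  have hends (h1 : memCluster ω b.1) (h2 : memCluster ω (b.1 + unitVec d b.2)) :
      (openLattice ω).Reachable b.1 (b.1 + unitVec d b.2) :=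
    by_contra fun hn => h ⟨hb, h1, h2, hn⟩
  obtain rfl | rfl := Sym2.mem_iff.1 hx <;> obtain rfl | rfl := Sym2.mem_iff.1 hy
  exacts [.rfl, hends hωx hωy, (hends hωy hωx).symm, .rfl]

variable {p q : ℝ} {P : Measure (Config d)}

lemma IsBernoulli.measureReal_joinsInfiniteClusters (hP : IsBernoulli d p P)
    (hp : p ∈ unitInterval) (x : V d) (i : Fin d) :
    P.real {ω | JoinsInfiniteClusters ω (x, i)} = P.real {ω | JoinsInfiniteClusters ω (0, i)} := by
  have h := (hP.measurePreserving_shift hp x).measureReal_preimage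
    (measurableSet_joinsInfiniteClusters (0, i)).nullMeasurableSet
  simpa [Set.preimage, joinsInfiniteClusters_shift] using h

open scoped Classical in
lemma IsBernoulli.card_mul_measureReal_joinsInfiniteClusters_le (hP : IsBernoulli d p P)
    (hp1 : p < 1) (hq0 : 0 < q) (hqp : q < p) (i : Fin d) (n : ℕ) :
    (2 * n + 1) ^ d * P.real {ω | JoinsInfiniteClusters ω (0, i)} ≤
      (1 - q) / (p - q) * ((2 * n + 3) ^ d - (2 * n + 1) ^ d) +
        (p - q) / q * ((2 * n + 3) ^ d * d) := by
  have hp : p ∈ unitInterval := ⟨(hq0.trans hqp).le, hp1.le⟩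
  have := hP.1
  let ends (b : boxBonds d (n + 1)) : Sym2 (V d) := bondEnds b.1
  let joins (b : boxBonds d (n + 1)) : Set (Config d) :=
    {ω | JoinsClusters ends (boxBoundary d n) ((boxBonds d (n + 1)).restrict ω) b}
  let bond (x : box d n) : boxBonds d (n + 1) :=
    ⟨(x.1, i), mem_boxBonds.2 (box_subset_box n.le_succ x.2)⟩
  have hbond : Function.Injective bond := fun x y h => Subtype.ext (congrArg (·.1.1) h)
  calc _ = ∑ x : box d n, P.real {ω | JoinsInfiniteClusters ω (x.1, i)} := by
        simp [hP.measureReal_joinsInfiniteClusters hp _ i, card_box]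
    _ ≤ ∑ x : box d n, P.real (joins (bond x)) :=
        Finset.sum_le_sum fun x _ => measureReal_mono fun ω hω =>
          JoinsInfiniteClusters.joinsClusters hω x.2
    _ ≤ ∑ b, P.real (joins b) := by
        refine (Finset.sum_map Finset.univ ⟨bond, hbond⟩ fun b => P.real (joins b)).symm.trans_le ?_
        exact Finset.sum_le_univ_sum_of_nonneg fun _ => measureReal_nonneg
    _ = ∑ b, ∑ a with JoinsClusters ends (boxBoundary d n) a b, configWeight p a :=
        Finset.sum_congr rfl fun b _ => hP.measureReal_restrict hp (boxBonds d (n + 1))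
          fun a => JoinsClusters ends (boxBoundary d n) a b
    _ ≤ _ := by
        refine (sum_joinsClusters_le hp1 hq0 hqp).trans_eq ?_
        rw [card_boxBoundary, Fintype.card_coe, card_boxBonds]
        push_cast
        ring

lemma tendsto_card_box_succ_div (d : ℕ) :
    Tendsto (fun n : ℕ => ((2 * n + 3 : ℝ) / (2 * n + 1)) ^ d) atTop (𝓝 1) := by
  have h : Tendsto (fun n : ℕ => 1 + 2 / (2 * n + 1 : ℝ)) atTop (𝓝 (1 + 0)) :=
    tendsto_const_nhds.add <| tendsto_const_nhds.div_atTop <|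
      (tendsto_natCast_atTop_atTop.const_mul_atTop two_pos).atTop_add tendsto_const_nhds
  have hpow := h.pow d
  rw [add_zero, one_pow] at hpow
  refine hpow.congr fun n => ?_
  have : (2 * n + 1 : ℝ) ≠ 0 := by positivity
  field_simp
  ring

lemma IsBernoulli.measureReal_joinsInfiniteClusters_le (hP : IsBernoulli d p P) (hp1 : p < 1)
    (hq0 : 0 < q) (hqp : q < p) (i : Fin d) :
    P.real {ω | JoinsInfiniteClusters ω (0, i)} ≤ (p - q) / q * d := by
  have hr := tendsto_card_box_succ_div d
  have hlim := ((hr.sub_const 1).const_mul ((1 - q) / (p - q))).add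
    ((hr.mul_const (d : ℝ)).const_mul ((p - q) / q))
  rw [sub_self, mul_zero, one_mul, zero_add] at hlim
  refine ge_of_tendsto' hlim fun n => ?_
  have hpos : (0 : ℝ) < (2 * n + 1) ^ d := by positivity
  have hn := (le_div_iff₀' hpos).2
    (hP.card_mul_measureReal_joinsInfiniteClusters_le hp1 hq0 hqp i n)
  have hpq : p - q ≠ 0 := (sub_pos.2 hqp).ne'
  refine hn.trans_eq ?_
  rw [div_pow]
  field_simp

lemma IsBernoulli.ae_not_joinsInfiniteClusters (hP : IsBernoulli d p P) (hp0 : 0 < p)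
    (hp1 : p < 1) (b : EdgeIx d) : ∀ᵐ ω ∂P, ¬ JoinsInfiniteClusters ω b := by
  have := hP.1
  suffices P.real {ω | JoinsInfiniteClusters ω b} = 0 by
    simpa [ae_iff] using (measureReal_eq_zero_iff).1 this
  refine le_antisymm ?_ measureReal_nonneg
  obtain ⟨x, i⟩ := b
  rw [hP.measureReal_joinsInfiniteClusters ⟨hp0.le, hp1.le⟩]
  have hlim : Tendsto (fun q : ℝ => (p - q) / q * d) (𝓝[<] p) (𝓝 ((p - p) / p * d)) :=
    (((tendsto_const_nhds.sub tendsto_id).div tendsto_id hp0.ne').mul_const _).mono_left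
      nhdsWithin_le_nhds
  rw [sub_self, zero_div, zero_mul] at hlim
  refine ge_of_tendsto hlim ?_
  filter_upwards [Ioo_mem_nhdsLT hp0] with q hq
  exact hP.measureReal_joinsInfiniteClusters_le hp1 hq.1 hq.2 i

lemma reachable_openLattice_true (x y : V d) : (openLattice fun _ => true).Reachable x y := by
  have htranslate {u v : V d} (h : (openLattice fun _ => true).Reachable u v) (z : V d) :
      (openLattice fun _ => true).Reachable (u + z) (v + z) :=
    reachable_shift.1 (show (openLattice (shift z fun _ => true)).Reachable u v from h)
  let H : AddSubgroup (V d) :=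
    { carrier := {z | (openLattice fun _ => true).Reachable 0 z}
      zero_mem' := .rfl
      add_mem' := fun {u v} hu hv => hv.trans (by simpa [add_comm] using htranslate hu v)
      neg_mem' := fun {u} hu => by simpa using (htranslate hu (-u)).symm }
  have hunit (i : Fin d) : unitVec d i ∈ H :=
    reachable_of_open (b := (0, i)) rfl (Sym2.mem_mk_left _ _)
      (Sym2.mem_iff.2 (.inr (zero_add _).symm))
  have hsum : y - x = ∑ i, (y - x) i • unitVec d i := by
    funext j
    simp [Finset.sum_apply, unitVec]
  have hmem : y - x ∈ H := hsum ▸ H.sum_mem fun i _ => H.zsmul_mem (hunit i) _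
  simpa using htranslate hmem x

lemma IsBernoulli.ae_reachable_of_reachable_piecewise (hP : IsBernoulli d p P) (hp0 : 0 < p)
    (hp1 : p < 1) (x y : V d) (F : Finset (EdgeIx d)) :
    ∀ᵐ ω ∂P, memCluster ω x → memCluster ω y →
      (openLattice (F.piecewise (fun _ => true) ω)).Reachable x y →
        (openLattice ω).Reachable x y := by
  induction F using Finset.induction with
  | empty => simp
  | insert b F hb ih =>
    filter_upwards [ae_of_ae_map measurable_update_left.aemeasurable
      ((hP.map_update_absolutelyContinuous hp0 hp1.le b).ae_le ih),
      hP.ae_not_joinsInfiniteClusters hp0 hp1 b] with ω hF hnot hx hy hreach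
    have hle (c : EdgeIx d) (hc : ω c = true) : Function.update ω b true c = true := by
      rw [Function.update_apply]
      split_ifs
      exacts [rfl, hc]
    rw [Finset.piecewise_insert, Finset.update_piecewise_of_notMem _ _ _ hb] at hreach
    obtain hxy | ⟨u, hu, v, hv, hxu, hvy⟩ :=
      reachable_update_true (hF (memCluster_mono hle hx) (memCluster_mono hle hy) hreach)
    · exact hxy
    · exact hxu.trans <| (reachable_of_not_joinsInfiniteClusters hnot hu hv (hx.of_reachable hxu)
        (hy.of_reachable hvy.symm)).trans hvy

theorem IsBernoulli.ae_reachable_of_memCluster (hP : IsBernoulli d p P) (hp0 : 0 < p)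
    (hp1 : p < 1) :
    ∀ᵐ ω ∂P, ∀ x y, memCluster ω x → memCluster ω y → (openLattice ω).Reachable x y := by
  refine ae_all_iff.2 fun x => ae_all_iff.2 fun y => ?_
  obtain ⟨F, -, hF⟩ := reachable_iff_exists_finset.1 (reachable_openLattice_true x y)
  filter_upwards [hP.ae_reachable_of_reachable_piecewise hp0 hp1 x y F] with ω h hx hy
  exact h hx hy (hF.mono (openGraph_mono fun b hb => by simp_all))

end Uniqueness

section ClusterErgodic

variable {d : ℕ} {p : ℝ} {P : Measure (Config d)} {A : Set (Config d)}

/-- The set `{ω | ∃ x ∈ 𝒞_∞(ω), τ_x ω ∈ A}` is shift invariant, and by uniqueness of the infinite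
cluster it agrees with `A` on `Ω_0`. -/
theorem IsBernoulli.cluster_ergodic (hP : IsBernoulli d p P) (hp0 : 0 < p) (hp1 : p < 1)
    (hd : 0 < d) (hA : MeasurableSet A)
    (hinv : ∀ᵐ ω ∂P, memCluster ω 0 → ω ∈ A → ∀ e : V d, edgeOpen ω 0 e → shift e ω ∈ A) :
    P (cluZero d ∩ A) = 0 ∨ P (cluZero d \ A) = 0 := by
  have hp : p ∈ unitInterval := ⟨hp0.le, hp1.le⟩
  let visits : Set (Config d) := ⋃ x, {ω | memCluster ω x} ∩ shift x ⁻¹' A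
  have hvisits : MeasurableSet visits :=
    .iUnion fun x => (measurableSet_memCluster x).inter (measurable_shift x hA)
  have hvisits_shift (x : V d) : shift x ⁻¹' visits = visits := by
    ext ω
    simp only [visits, Set.mem_preimage, Set.mem_iUnion, Set.mem_inter_iff, Set.mem_ofPred_eq,
      memCluster_shift, shift_shift]
    exact (Equiv.addRight x).exists_congr_left.trans (by simp)
  refine (hP.shift_ergodic hp hd hvisits hvisits_shift).imp (measure_mono_null ?_) fun h => ?_
  · rintro ω ⟨hω, hωA⟩
    exact Set.mem_iUnion.2 ⟨0, hω, by simpa [shift_zero] using hωA⟩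
  have hstep : ∀ᵐ ω ∂P, ∀ x : V d, memCluster ω x → shift x ω ∈ A → ∀ e : V d,
      edgeOpen ω x e → shift (x + e) ω ∈ A := by
    refine ae_all_iff.2 fun x => ?_
    filter_upwards [(hP.measurePreserving_shift hp x).quasiMeasurePreserving.ae hinv] with ω hω
    simpa only [memCluster_shift, edgeOpen_shift, shift_shift, zero_add, add_zero,
      add_comm _ x] using hω
  suffices ∀ᵐ ω ∂P, ω ∉ cluZero d \ A from measure_eq_zero_iff_ae_notMem.2 this
  filter_upwards [hstep, hP.ae_reachable_of_memCluster hp0 hp1, show ∀ᵐ ω ∂P, ω ∈ visits from h]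
    with ω hstep hunique hω ⟨h0, h0A⟩
  obtain ⟨x, hx, hxA⟩ := Set.mem_iUnion.1 hω
  refine h0A ?_
  have hspread (y : V d) (hxy : (openLattice ω).Reachable x y) : shift y ω ∈ A := by
    rw [SimpleGraph.reachable_iff_reflTransGen] at hxy
    induction hxy with
    | refl => exact hxA
    | @tail y z hxy hyz ih =>
      rw [← SimpleGraph.reachable_iff_reflTransGen] at hxy
      simpa using hstep y (hx.of_reachable hxy) ih (z - y)
        (edgeOpen_iff_adj.2 (by simpa using hyz))
  simpa [shift_zero] using hspread 0 (hunique x 0 hx h0)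

end ClusterErgodic

/-! ### Birkhoff's pointwise ergodic theorem -/

lemma integral_comp_eq_of_measurePreserving {X Y : Type*} [MeasurableSpace X] [MeasurableSpace Y]
    {μ : Measure X} {ν : Measure Y} {g : X → Y} (hg : MeasurePreserving g μ ν) {f : Y → ℝ}
    (hf : AEStronglyMeasurable f ν) : ∫ x, f (g x) ∂μ = ∫ y, f y ∂ν := by
  rw [← hg.map_eq] at hf ⊢
  exact (integral_map hg.aemeasurable hf).symm

section Birkhoff

variable {X : Type*} {θ : X → X} {f : X → ℝ} {x : X}

/-- The running maximum `max_{k ≤ n} S_k f` of the Birkhoff sums of `f`, encoded through its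
recursion `M_{n+1} f = max (0, f + M_n f ∘ θ)`. -/
def birkhoffMax (θ : X → X) (f : X → ℝ) : ℕ → X → ℝ
  | 0 => 0
  | n + 1 => fun x => max 0 (f x + birkhoffMax θ f n (θ x))

lemma birkhoffMax_nonneg (n : ℕ) (x : X) : 0 ≤ birkhoffMax θ f n x := by
  cases n with
  | zero => exact le_rfl
  | succ n => exact le_max_left _ _

lemma monotone_birkhoffMax (x : X) : Monotone fun n => birkhoffMax θ f n x := by
  refine monotone_nat_of_le_succ fun n => ?_
  induction n generalizing x with
  | zero => exact birkhoffMax_nonneg 1 x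
  | succ n ih => exact max_le_max_left 0 (add_le_add_right (ih (θ x)) (f x))

lemma birkhoffSum_le_birkhoffMax (n : ℕ) (x : X) : birkhoffSum θ f n x ≤ birkhoffMax θ f n x := by
  induction n generalizing x with
  | zero => exact (birkhoffSum_zero θ f x).le
  | succ n ih =>
    rw [birkhoffSum_succ']
    exact (add_le_add_right (ih (θ x)) (f x)).trans (le_max_right _ _)

lemma bddAbove_birkhoffMax_apply :
    BddAbove (Set.range fun n => birkhoffMax θ f n (θ x)) ↔
      BddAbove (Set.range fun n => birkhoffMax θ f n x) := by
  simp only [bddAbove_def, Set.forall_mem_range]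
  refine ⟨fun ⟨C, hC⟩ => ⟨max 0 (f x + C), fun n => ?_⟩, fun ⟨C, hC⟩ => ⟨C - f x, fun n => ?_⟩⟩
  · cases n with
    | zero => exact le_max_left _ _
    | succ n => exact max_le_max_left 0 (add_le_add_right (hC n) (f x))
  · linarith [hC (n + 1), le_max_right 0 (f x + birkhoffMax θ f n (θ x)),
      show birkhoffMax θ f (n + 1) x = max 0 (f x + birkhoffMax θ f n (θ x)) from rfl]

lemma birkhoffMax_succ_sub (n : ℕ) (x : X) :
    birkhoffMax θ f (n + 1) x - birkhoffMax θ f n (θ x) = max (-birkhoffMax θ f n (θ x)) (f x) := by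
  rw [birkhoffMax, ← max_sub_sub_right, zero_sub, add_sub_cancel_right]

variable [MeasurableSpace X] {m : Measure X}

lemma measurable_birkhoffMax (hθ : Measurable θ) (hf : Measurable f) (n : ℕ) :
    Measurable (birkhoffMax θ f n) := by
  induction n with
  | zero => exact measurable_const
  | succ n ih => exact measurable_const.max (hf.add (ih.comp hθ))

lemma integrable_birkhoffMax (hθ : MeasurePreserving θ m m) (hf : Integrable f m) (n : ℕ) :
    Integrable (birkhoffMax θ f n) m := by
  induction n with
  | zero => exact integrable_zero X ℝ m
  | succ n ih => exact (integrable_zero X ℝ m).sup (hf.add (hθ.integrable_comp_of_integrable ih))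

lemma integral_max_neg_birkhoffMax_nonneg (hθ : MeasurePreserving θ m m) (hf : Integrable f m)
    (n : ℕ) : 0 ≤ ∫ x, max (-birkhoffMax θ f n (θ x)) (f x) ∂m := by
  have hint := integrable_birkhoffMax hθ hf
  have hint_comp : Integrable (fun x => birkhoffMax θ f n (θ x)) m :=
    hθ.integrable_comp_of_integrable (hint n)
  simp only [← birkhoffMax_succ_sub]
  rw [integral_sub (hint (n + 1)) hint_comp,
    integral_comp_eq_of_measurePreserving hθ (hint n).aestronglyMeasurable, sub_nonneg]
  exact integral_mono (hint n) (hint (n + 1)) fun x => monotone_birkhoffMax x n.le_succ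

-- Where the running maximum is unbounded, `max (-M_n ∘ θ, f)` is eventually `f`, so `∫ f` is a
-- limit of the nonnegative numbers of the previous lemma.
lemma integral_nonneg_of_not_bddAbove_birkhoffMax (hθ : MeasurePreserving θ m m)
    (hf : Measurable f) (hfi : Integrable f m)
    (h : ∀ᵐ x ∂m, ¬BddAbove (Set.range fun n => birkhoffMax θ f n x)) : 0 ≤ ∫ x, f x ∂m := by
  refine ge_of_tendsto' (tendsto_integral_of_dominated_convergence
    (F := fun n x => max (-birkhoffMax θ f n (θ x)) (f x)) (fun x => |f x|)
    (fun n => (((measurable_birkhoffMax hθ.measurable hf n).comp hθ.measurable).neg.max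
      hf).aestronglyMeasurable) hfi.abs (fun n => ae_of_all _ fun x => ?_) ?_)
    (integral_max_neg_birkhoffMax_nonneg hθ hfi)
  · have := birkhoffMax_nonneg (θ := θ) (f := f) n (θ x)
    exact abs_le.2 ⟨(neg_abs_le _).trans (le_max_right _ _),
      max_le (by linarith [abs_nonneg (f x)]) (le_abs_self _)⟩
  · filter_upwards [h] with x hx
    rw [← bddAbove_birkhoffMax_apply, not_bddAbove_iff] at hx
    obtain ⟨_, ⟨n, rfl⟩, hn⟩ := hx (-f x)
    refine tendsto_const_nhds.congr' ?_
    filter_upwards [eventually_ge_atTop n] with k hk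
    have hmono : birkhoffMax θ f n (θ x) ≤ birkhoffMax θ f k (θ x) := monotone_birkhoffMax (θ x) hk
    exact (max_eq_right (by linarith)).symm

lemma ae_bddAbove_birkhoffMax (hθ : Ergodic θ m) (hf : Measurable f) (hfi : Integrable f m)
    (hneg : ∫ x, f x ∂m < 0) : ∀ᵐ x ∂m, BddAbove (Set.range fun n => birkhoffMax θ f n x) := by
  refine (hθ.ae_mem_or_ae_notMem (measurableSet_bddAbove_range fun n =>
    measurable_birkhoffMax hθ.measurable hf n) ?_).resolve_right fun h => hneg.not_ge <|
      integral_nonneg_of_not_bddAbove_birkhoffMax hθ.toMeasurePreserving hf hfi h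
  ext x
  exact bddAbove_birkhoffMax_apply

variable [IsProbabilityMeasure m]

lemma ae_eventually_birkhoffAverage_lt (hθ : Ergodic θ m) (hf : Measurable f)
    (hfi : Integrable f m) {c : ℝ} (hc : ∫ x, f x ∂m < c) :
    ∀ᵐ x ∂m, ∀ᶠ n : ℕ in atTop, birkhoffAverage ℝ θ f n x < c := by
  obtain ⟨b, hb, hbc⟩ := exists_between hc
  have hneg : ∫ x, (f x - b) ∂m < 0 := by
    rw [integral_sub hfi (integrable_const b), integral_const]
    simpa using hb
  filter_upwards [ae_bddAbove_birkhoffMax hθ (hf.sub_const b) (hfi.sub (integrable_const b)) hneg]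
    with x ⟨C, hC⟩
  have hlim : Tendsto (fun n : ℕ => b + C / n) atTop (𝓝 b) := by
    simpa using tendsto_const_nhds.add (tendsto_const_div_atTop_nhds_zero_nat C)
  filter_upwards [hlim.eventually_lt_const hbc, eventually_gt_atTop 0] with n hn hn0
  refine lt_of_le_of_lt ?_ hn
  have hn0 : (0 : ℝ) < n := Nat.cast_pos.2 hn0
  have hsum : birkhoffSum θ (fun x => f x - b) n x = birkhoffSum θ f n x - n * b := by
    simp [birkhoffSum]
  have hle := (birkhoffSum_le_birkhoffMax n x).trans (hC ⟨n, rfl⟩)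
  rw [birkhoffAverage, smul_eq_mul, inv_mul_le_iff₀ hn0, mul_add, mul_div_cancel₀ _ hn0.ne']
  linarith

theorem tendsto_birkhoffAverage_ae (hθ : Ergodic θ m) (hf : Measurable f) (hfi : Integrable f m) :
    ∀ᵐ x ∂m, Tendsto (birkhoffAverage ℝ θ f · x) atTop (𝓝 (∫ x, f x ∂m)) := by
  have hlt (g : X → ℝ) (hg : Measurable g) (hgi : Integrable g m) :
      ∀ᵐ x ∂m, ∀ k : ℕ, ∀ᶠ n : ℕ in atTop,
        birkhoffAverage ℝ θ g n x < ∫ x, g x ∂m + 1 / (k + 1 : ℝ) :=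
    ae_all_iff.2 fun k => ae_eventually_birkhoffAverage_lt hθ hg hgi
      (lt_add_of_pos_right _ Nat.one_div_pos_of_nat)
  filter_upwards [hlt f hf hfi, hlt (-f) hf.neg hfi.neg] with x hupper hlower
  refine tendsto_order.2 ⟨fun a ha => ?_, fun a ha => ?_⟩
  · obtain ⟨k, hk⟩ := exists_nat_one_div_lt (sub_pos.2 ha)
    filter_upwards [hlower k] with n hn
    rw [birkhoffAverage_neg] at hn
    simp only [Pi.neg_apply, integral_neg] at hn
    linarith
  · obtain ⟨k, hk⟩ := exists_nat_one_div_lt (sub_pos.2 ha)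
    filter_upwards [hupper k] with n hn
    linarith

end Birkhoff

/-! ### Ergodicity of random skew products -/

section Sequences

variable {Z : Type*}

/-- The sequence with first term `z` and tail `u`. -/
def seqCons (z : Z) (u : ℕ → Z) : ℕ → Z
  | 0 => z
  | n + 1 => u n

lemma setOf_seqCons_forall_lt_succ (z : Z) (n : ℕ) (U : ℕ → Set Z) :
    {u | ∀ i < n + 1, seqCons z u i ∈ U i} = {u | z ∈ U 0 ∧ ∀ i < n, u i ∈ U (i + 1)} := by
  ext u
  exact Nat.forall_lt_succ_left

variable [MeasurableSpace Z]

lemma measurable_seqCons : Measurable fun q : Z × (ℕ → Z) => seqCons q.1 q.2 := by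
  refine measurable_pi_lambda _ fun n => ?_
  cases n with
  | zero => exact measurable_fst
  | succ n => exact (measurable_pi_apply n).comp measurable_snd

lemma measurableSet_forall_lt_mem (n : ℕ) {U : ℕ → Set Z} (hU : ∀ i, MeasurableSet (U i)) :
    MeasurableSet {u : ℕ → Z | ∀ i < n, u i ∈ U i} := by
  simp only [Set.ofPred_forall]
  exact .iInter fun i => .iInter fun _ => measurable_pi_apply i (hU i)

variable {ν : Measure Z} [IsProbabilityMeasure ν]

lemma eq_infinitePi_of_forall_lt {m : Measure (ℕ → Z)}
    (h : ∀ n, ∀ U : ℕ → Set Z, (∀ i, MeasurableSet (U i)) →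
      m {u | ∀ i < n, u i ∈ U i} = ∏ i ∈ Finset.range n, ν (U i)) :
    m = Measure.infinitePi fun _ => ν := by
  classical
  refine Measure.eq_infinitePi _ fun s t ht => ?_
  obtain ⟨n, hn⟩ := s.exists_nat_subset_range
  let U : ℕ → Set Z := fun i => if i ∈ s then t i else Set.univ
  have hU (i : ℕ) : MeasurableSet (U i) := by
    by_cases hi : i ∈ s <;> simp [U, hi, ht]
  have hset : Set.pi (s : Set ℕ) t = {u | ∀ i < n, u i ∈ U i} := by
    ext u
    refine ⟨fun hu i _ => ?_, fun hu i hi => ?_⟩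
    · by_cases hi : i ∈ s
      · simpa [U, hi] using hu i hi
      · simp [U, hi]
    · simpa [U, Finset.mem_coe.1 hi] using hu i (Finset.mem_range.1 (hn hi))
  rw [hset, h n U hU, ← Finset.prod_subset hn fun i _ hi => by simp [U, hi]]
  exact Finset.prod_congr rfl fun i hi => by simp [U, hi]

lemma infinitePi_forall_lt (n : ℕ) {U : ℕ → Set Z} (hU : ∀ i, MeasurableSet (U i)) :
    Measure.infinitePi (fun _ => ν) {u | ∀ i < n, u i ∈ U i} = ∏ i ∈ Finset.range n, ν (U i) := by
  have := Measure.infinitePi_pi (fun _ => ν) (s := Finset.range n) (t := U) fun i _ => hU i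
  simpa [Set.pi] using this

lemma measurePreserving_seqCons :
    MeasurePreserving (fun q : Z × (ℕ → Z) => seqCons q.1 q.2)
      (ν.prod (Measure.infinitePi fun _ => ν)) (Measure.infinitePi fun _ => ν) := by
  refine ⟨measurable_seqCons, eq_infinitePi_of_forall_lt fun n U hU => ?_⟩
  rw [Measure.map_apply measurable_seqCons (measurableSet_forall_lt_mem n hU)]
  cases n with
  | zero => simp
  | succ n =>
    have hpre : (fun q : Z × (ℕ → Z) => seqCons q.1 q.2) ⁻¹' {u | ∀ i < n + 1, u i ∈ U i} =
        U 0 ×ˢ {u | ∀ i < n, u i ∈ U (i + 1)} := by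
      ext q
      exact Nat.forall_lt_succ_left
    rw [hpre, Measure.prod_prod, infinitePi_forall_lt n fun i => hU (i + 1),
      Finset.prod_range_succ', mul_comm]

lemma infinitePi_apply_eq_lintegral_seqCons {S : Set (ℕ → Z)} (hS : MeasurableSet S) :
    Measure.infinitePi (fun _ => ν) S =
      ∫⁻ z, Measure.infinitePi (fun _ => ν) {u | seqCons z u ∈ S} ∂ν := by
  rw [← measurePreserving_seqCons.measure_preimage hS.nullMeasurableSet,
    Measure.prod_apply (measurable_seqCons hS)]
  rfl

lemma measurePreserving_head_tail :
    MeasurePreserving (fun u : ℕ → Z => (u 0, fun n => u (n + 1)))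
      (Measure.infinitePi fun _ => ν) (ν.prod (Measure.infinitePi fun _ => ν)) := by
  have hmeas : Measurable fun u : ℕ → Z => (u 0, fun n => u (n + 1)) := by fun_prop
  refine ⟨hmeas, ?_⟩
  conv_lhs => rw [← measurePreserving_seqCons.map_eq]
  rw [Measure.map_map hmeas measurable_seqCons]
  exact Measure.map_id

end Sequences

section SkewProduct

variable {Y Z : Type*} [MeasurableSpace Y] [MeasurableSpace Z] {φ : Y → Z → Y}
  {Q : Measure Y} [IsProbabilityMeasure Q] {ν : Measure Z} [IsProbabilityMeasure ν]

/-- The deterministic dynamics on `Y × Z^ℕ` behind the random iteration `y ↦ φ y z`: the current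
noise `z` is consumed and the sequence of future noises is shifted. -/
def skewProduct (φ : Y → Z → Y) (x : Y × (ℕ → Z)) : Y × (ℕ → Z) :=
  (φ x.1 (x.2 0), fun n => x.2 (n + 1))

lemma measurePreserving_skewProduct
    (hφ : MeasurePreserving (Function.uncurry φ) (Q.prod ν) Q) :
    MeasurePreserving (skewProduct φ) (Q.prod (Measure.infinitePi fun _ => ν))
      (Q.prod (Measure.infinitePi fun _ => ν)) :=
  (hφ.prod (.id _)).comp <| (measurePreserving_prodAssoc Q ν _).symm.comp <|
    (MeasurePreserving.id Q).prod measurePreserving_head_tail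

-- In `L²`, `‖f ∘ φ - f‖² = ‖f ∘ φ‖² - ‖f‖²` for harmonic `f`, and both norms agree by invariance.
lemma ae_apply_eq_of_harmonic (hφ : MeasurePreserving (Function.uncurry φ) (Q.prod ν) Q)
    {f : Y → ℝ} (hf : MemLp f 2 Q) (hharm : ∀ᵐ y ∂Q, ∫ z, f (φ y z) ∂ν = f y) :
    ∀ᵐ y ∂Q, ∀ᵐ z ∂ν, f (φ y z) = f y := by
  have hg : MemLp (fun x : Y × Z => f (φ x.1 x.2)) 2 (Q.prod ν) := hf.comp_measurePreserving hφ
  have hk : MemLp (fun x : Y × Z => f x.1) 2 (Q.prod ν) :=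
    hf.comp_measurePreserving measurePreserving_fst
  have hgk : Integrable (fun x : Y × Z => f x.1 * f (φ x.1 x.2)) (Q.prod ν) := hk.integrable_mul hg
  have hgg : ∫ x, f (φ x.1 x.2) ^ 2 ∂(Q.prod ν) = ∫ y, f y ^ 2 ∂Q :=
    integral_comp_eq_of_measurePreserving hφ (hf.1.pow 2)
  have hkk : ∫ x, f x.1 ^ 2 ∂(Q.prod ν) = ∫ y, f y ^ 2 ∂Q :=
    integral_comp_eq_of_measurePreserving measurePreserving_fst (hf.1.pow 2)
  have hcross : ∫ x, f x.1 * f (φ x.1 x.2) ∂(Q.prod ν) = ∫ y, f y ^ 2 ∂Q := by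
    rw [integral_prod _ hgk]
    refine integral_congr_ae ?_
    filter_upwards [hharm] with y hy
    rw [integral_const_mul, hy, sq]
  have hsq_add : Integrable (fun x : Y × Z => f (φ x.1 x.2) ^ 2 + f x.1 ^ 2) (Q.prod ν) :=
    hg.integrable_sq.add hk.integrable_sq
  have hsq_sub : Integrable (fun x : Y × Z => (f (φ x.1 x.2) - f x.1) ^ 2) (Q.prod ν) :=
    (hg.sub hk).integrable_sq
  have hzero : ∫ x, (f (φ x.1 x.2) - f x.1) ^ 2 ∂(Q.prod ν) = 0 := by
    have hexpand (x : Y × Z) : (f (φ x.1 x.2) - f x.1) ^ 2 =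
      f (φ x.1 x.2) ^ 2 + f x.1 ^ 2 - 2 * (f x.1 * f (φ x.1 x.2)) := by ring
    simp only [hexpand]
    rw [integral_sub hsq_add (hgk.const_mul 2),
      integral_add hg.integrable_sq hk.integrable_sq, integral_const_mul, hgg, hkk, hcross]
    ring
  rw [integral_eq_zero_iff_of_nonneg (fun x => sq_nonneg _) hsq_sub] at hzero
  have hae : ∀ᵐ x ∂(Q.prod ν), f (φ x.1 x.2) = f x.1 :=
    hzero.mono fun x hx => sub_eq_zero.1 (pow_eq_zero_iff two_ne_zero |>.1 hx)
  exact Measure.ae_ae_of_ae_prod hae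

variable {B : Set (Y × (ℕ → Z))}

lemma infinitePi_section_eq_lintegral (hB : MeasurableSet B) (hinv : skewProduct φ ⁻¹' B = B)
    (y : Y) :
    Measure.infinitePi (fun _ => ν) (Prod.mk y ⁻¹' B) =
      ∫⁻ z, Measure.infinitePi (fun _ => ν) (Prod.mk (φ y z) ⁻¹' B) ∂ν := by
  rw [infinitePi_apply_eq_lintegral_seqCons (measurable_prodMk_left hB)]
  conv_lhs => rw [← hinv]
  rfl

lemma ae_infinitePi_section_apply (hφ : MeasurePreserving (Function.uncurry φ) (Q.prod ν) Q)
    (hB : MeasurableSet B) (hinv : skewProduct φ ⁻¹' B = B) :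
    ∀ᵐ y ∂Q, ∀ᵐ z ∂ν, Measure.infinitePi (fun _ => ν) (Prod.mk (φ y z) ⁻¹' B) =
      Measure.infinitePi (fun _ => ν) (Prod.mk y ⁻¹' B) := by
  have hmeas : Measurable fun y => Measure.infinitePi (fun _ => ν) (Prod.mk y ⁻¹' B) :=
    measurable_measure_prodMk_left hB
  have hL2 : MemLp (fun y => (Measure.infinitePi fun _ => ν).real (Prod.mk y ⁻¹' B)) 2 Q :=
    .of_bound hmeas.ennreal_toReal.aestronglyMeasurable 1 <| ae_of_all _ fun y => by
      simp [abs_of_nonneg]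
  have hharm (y : Y) : ∫ z, (Measure.infinitePi fun _ => ν).real (Prod.mk (φ y z) ⁻¹' B) ∂ν =
      (Measure.infinitePi fun _ => ν).real (Prod.mk y ⁻¹' B) := by
    have hsec : Measurable (φ y) := hφ.measurable.comp measurable_prodMk_left
    rw [measureReal_def, infinitePi_section_eq_lintegral hB hinv]
    exact integral_toReal (hmeas.comp hsec).aemeasurable (ae_of_all _ fun z => measure_lt_top _ _)
  filter_upwards [ae_apply_eq_of_harmonic hφ hL2 (ae_of_all _ hharm)] with y hy
  filter_upwards [hy] with z hz
  exact (measureReal_eq_measureReal_iff).1 hz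

lemma ae_infinitePi_section_inter_forall_lt
    (hφ : MeasurePreserving (Function.uncurry φ) (Q.prod ν) Q)
    (hB : MeasurableSet B) (hinv : skewProduct φ ⁻¹' B = B) (n : ℕ) :
    ∀ᵐ y ∂Q, ∀ U : ℕ → Set Z, (∀ i, MeasurableSet (U i)) →
      Measure.infinitePi (fun _ => ν) (Prod.mk y ⁻¹' B ∩ {u | ∀ i < n, u i ∈ U i}) =
        Measure.infinitePi (fun _ => ν) (Prod.mk y ⁻¹' B) * ∏ i ∈ Finset.range n, ν (U i) := by
  induction n with
  | zero => simp
  | succ n ih =>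
    filter_upwards [ae_infinitePi_section_apply hφ hB hinv,
      Measure.ae_ae_of_ae_prod (hφ.quasiMeasurePreserving.ae ih)] with y hconst hnext U hU
    rw [infinitePi_apply_eq_lintegral_seqCons
      ((measurable_prodMk_left hB).inter (measurableSet_forall_lt_mem (n + 1) hU))]
    have hcons : ∀ᵐ z ∂ν, Measure.infinitePi (fun _ => ν)
        {u | seqCons z u ∈ Prod.mk y ⁻¹' B ∩ {u | ∀ i < n + 1, u i ∈ U i}} =
        (U 0).indicator (fun _ => Measure.infinitePi (fun _ => ν) (Prod.mk y ⁻¹' B) *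
          ∏ i ∈ Finset.range n, ν (U (i + 1))) z := by
      filter_upwards [hconst, hnext] with z hz hzU
      simp only [Function.uncurry_apply_pair] at hzU
      rw [← hz, ← hzU (fun i => U (i + 1)) fun i => hU (i + 1)]
      have hset : {u | seqCons z u ∈ Prod.mk y ⁻¹' B ∩ {u | ∀ i < n + 1, u i ∈ U i}} =
          Prod.mk (φ y z) ⁻¹' B ∩ {u | z ∈ U 0 ∧ ∀ i < n, u i ∈ U (i + 1)} := by
        rw [← setOf_seqCons_forall_lt_succ]
        conv_lhs => rw [← hinv]
        rfl
      rw [hset]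
      by_cases hz0 : z ∈ U 0 <;> simp [hz0]
    rw [lintegral_congr_ae hcons, lintegral_indicator_const (hU 0), Finset.prod_range_succ',
      mul_assoc]

-- Given its initial point `y`, an invariant event is independent of every finite stretch of noise,
-- hence of itself.
lemma ae_infinitePi_section_eq_zero_or_one
    (hφ : MeasurePreserving (Function.uncurry φ) (Q.prod ν) Q)
    (hB : MeasurableSet B) (hinv : skewProduct φ ⁻¹' B = B) :
    ∀ᵐ y ∂Q, Measure.infinitePi (fun _ => ν) (Prod.mk y ⁻¹' B) = 0 ∨
      Measure.infinitePi (fun _ => ν) (Prod.mk y ⁻¹' B) = 1 := by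
  filter_upwards [ae_all_iff.2 fun n => ae_infinitePi_section_inter_forall_lt hφ hB hinv n]
    with y hy
  refine or_iff_not_imp_left.2 fun h0 => ?_
  have hcond : (Measure.infinitePi fun _ => ν)[|Prod.mk y ⁻¹' B] =
      Measure.infinitePi fun _ => ν := by
    refine eq_infinitePi_of_forall_lt fun n U hU => ?_
    rw [cond_apply (measurable_prodMk_left hB), hy n U hU, ← mul_assoc,
      ENNReal.inv_mul_cancel h0 (measure_ne_top _ _), one_mul]
  rw [← hcond, cond_apply_self h0 (measure_ne_top _ _)]

theorem ergodic_skewProduct (hφ : MeasurePreserving (Function.uncurry φ) (Q.prod ν) Q)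
    (htriv : ∀ A, MeasurableSet A → (∀ᵐ y ∂Q, y ∈ A → ∀ᵐ z ∂ν, φ y z ∈ A) → Q A = 0 ∨ Q Aᶜ = 0) :
    Ergodic (skewProduct φ) (Q.prod (Measure.infinitePi fun _ => ν)) := by
  refine ⟨measurePreserving_skewProduct hφ, ⟨fun B hB hinv => eventuallyConst_set'.2 ?_⟩⟩
  rw [ae_eq_empty, ae_eq_univ]
  have hA : MeasurableSet {y | Measure.infinitePi (fun _ => ν) (Prod.mk y ⁻¹' B) = 1} :=
    measurable_measure_prodMk_left hB (measurableSet_singleton 1)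
  refine (htriv _ hA ?_).imp (fun h => ?_) fun h => ?_
  · filter_upwards [ae_infinitePi_section_apply hφ hB hinv] with y hy h1
    exact hy.mono fun z hz => hz.trans h1
  · rw [Measure.measure_prod_null hB]
    filter_upwards [ae_infinitePi_section_eq_zero_or_one hφ hB hinv,
      measure_eq_zero_iff_ae_notMem.1 h] with y h01 h1
    exact h01.resolve_right h1
  · rw [Measure.measure_prod_null hB.compl]
    filter_upwards [measure_eq_zero_iff_ae_notMem.1 h] with y h1
    exact (prob_compl_eq_zero_iff (measurable_prodMk_left hB)).2 (not_not.1 h1)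

end SkewProduct

/-! ### Step kernels and their entropy -/

section SimpleRandomWalk

variable {ω : Config d} {e : Step d}

lemma nonempty_step (hd : 0 < d) : Nonempty (Step d) :=
  ⟨⟨unitVec d ⟨0, hd⟩, by simp [Ud]⟩⟩

lemma openDeg_pos (h : edgeOpen ω 0 e.1) : 0 < openDeg ω 0 := by
  classical exact Finset.card_pos.2 ⟨e.1, Finset.mem_filter.2 ⟨e.2, h⟩⟩

lemma openDeg_le_card (ω : Config d) : openDeg ω 0 ≤ Fintype.card (Step d) := by
  classical
  rw [Fintype.card_coe]
  exact Finset.card_filter_le _ _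

lemma srw_of_edgeOpen (h : edgeOpen ω 0 e.1) : srw d ω e = (openDeg ω 0 : ℝ)⁻¹ :=
  (if_pos h).trans (one_div _)

lemma srw_of_not_edgeOpen (h : ¬ edgeOpen ω 0 e.1) : srw d ω e = 0 := if_neg h

lemma srw_pos_iff : 0 < srw d ω e ↔ edgeOpen ω 0 e.1 := by
  by_cases h : edgeOpen ω 0 e.1
  · have := openDeg_pos h
    simp only [srw_of_edgeOpen h, h, iff_true]
    positivity
  · simp [srw_of_not_edgeOpen h, h]

lemma srw_nonneg (ω : Config d) (e : Step d) : 0 ≤ srw d ω e := by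
  unfold srw trans
  split_ifs <;> positivity

lemma inv_card_le_srw (h : edgeOpen ω 0 e.1) : (Fintype.card (Step d) : ℝ)⁻¹ ≤ srw d ω e := by
  rw [srw_of_edgeOpen h]
  exact inv_anti₀ (by exact_mod_cast openDeg_pos h) (by exact_mod_cast openDeg_le_card ω)

lemma sum_srw (h : edgeOpen ω 0 e.1) : ∑ e : Step d, srw d ω e = 1 := by
  classical
  have hdeg : (openDeg ω 0 : ℝ) ≠ 0 := by exact_mod_cast (openDeg_pos h).ne'
  unfold srw trans
  rw [Finset.sum_coe_sort (Ud d) fun e => if edgeOpen ω 0 e then 1 / (openDeg ω 0 : ℝ) else 0,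
    ← Finset.sum_filter, Finset.sum_const, nsmul_eq_mul]
  exact mul_one_div_cancel hdeg

lemma measurable_srw : Measurable fun q : EnvSp d => srw d q.1 q.2 := by
  classical
  have hdeg : Measurable fun ω : Config d => openDeg ω 0 := by
    simp only [openDeg, Finset.card_filter]
    exact Finset.measurable_sum _ fun e _ =>
      Measurable.ite (measurableSet_edgeOpen 0 e) measurable_const measurable_const
  refine measurable_from_prod_countable_left fun e => ?_
  exact Measurable.ite (measurableSet_edgeOpen 0 e.1)
    (measurable_const.div (measurable_from_nat.comp hdeg)) measurable_const

end SimpleRandomWalk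

lemma measurable_shift_step : Measurable fun q : EnvSp d => shift q.2.1 q.1 :=
  measurable_from_prod_countable_left fun e => measurable_shift e.1

instance {μ : Measure (EnvSp d)} [IsProbabilityMeasure μ] : IsProbabilityMeasure (marg1 μ) :=
  Measure.isProbabilityMeasure_map measurable_fst.aemeasurable

section StepProb

variable {μ ν : Measure (EnvSp d)} [IsFiniteMeasure μ] [IsFiniteMeasure ν] [Nonempty (Step d)]

/-- The conditional probability under `μ` of the step `e` given the environment `ω`, that is
`dμ(ω,e)/d(μ)₁(ω)`, realised through a regular conditional distribution. -/
def stepProb (μ : Measure (EnvSp d)) [IsFiniteMeasure μ] (ω : Config d) (e : Step d) : ℝ :=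
  (μ.condKernel ω).real {e}

lemma stepProb_nonneg (ω : Config d) (e : Step d) : 0 ≤ stepProb μ ω e := measureReal_nonneg

lemma stepProb_le_one (ω : Config d) (e : Step d) : stepProb μ ω e ≤ 1 := measureReal_le_one

lemma ofReal_stepProb (ω : Config d) (e : Step d) :
    ENNReal.ofReal (stepProb μ ω e) = μ.condKernel ω {e} := ofReal_measureReal

lemma sum_ofReal_stepProb (ω : Config d) : ∑ e, ENNReal.ofReal (stepProb μ ω e) = 1 := by
  simp only [ofReal_stepProb]
  rw [sum_measure_singleton, Finset.coe_univ, measure_univ]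

lemma stepProb_pos_iff {ω : Config d} {e : Step d} :
    0 < stepProb μ ω e ↔ μ.condKernel ω {e} ≠ 0 := by
  rw [stepProb, measureReal_def, ENNReal.toReal_pos_iff, pos_iff_ne_zero]
  exact and_iff_left (measure_lt_top _ _)

lemma measurable_stepProb : Measurable fun q : EnvSp d => stepProb μ q.1 q.2 :=
  measurable_from_prod_countable_left fun e =>
    (Kernel.measurable_coe μ.condKernel (measurableSet_singleton e)).ennreal_toReal

lemma lintegral_eq_lintegral_sum_stepProb {f : EnvSp d → ℝ≥0∞} (hf : Measurable f) :
    ∫⁻ q, f q ∂μ = ∫⁻ ω, ∑ e, ENNReal.ofReal (stepProb μ ω e) * f (ω, e) ∂(marg1 μ) := by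
  rw [← Measure.lintegral_condKernel hf]
  refine lintegral_congr fun ω => ?_
  rw [lintegral_fintype]
  exact Finset.sum_congr rfl fun e _ => by rw [ofReal_stepProb, mul_comm]

lemma ae_iff_ae_stepProb {R : EnvSp d → Prop} (hR : MeasurableSet {q | R q}) :
    (∀ᵐ q ∂μ, R q) ↔ ∀ᵐ ω ∂(marg1 μ), ∀ e, 0 < stepProb μ ω e → R (ω, e) := by
  conv_lhs => rw [← μ.disintegrate μ.condKernel, Measure.ae_compProd_iff hR]
  simp only [ae_iff_of_countable, stepProb_pos_iff]
  rfl

lemma slice_eq_withDensity (e : Step d) :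
    slice μ e = (marg1 μ).withDensity fun ω => μ.condKernel ω {e} := by
  ext s hs
  rw [slice, Measure.map_apply measurable_fst hs, Measure.restrict_apply (measurable_fst hs),
    withDensity_apply _ hs, ← Set.prod_univ, Set.prod_inter_prod, Set.inter_univ, Set.univ_inter]
  exact (Measure.setLIntegral_condKernel_eq_measure_prod hs (measurableSet_singleton e)).symm

lemma ae_stepProb_pos_of_absolutelyContinuous (h : μ ≪ ν) :
    ∀ᵐ ω ∂(marg1 μ), ∀ e, 0 < stepProb μ ω e → 0 < stepProb ν ω e := by
  have hpos : MeasurableSet {q : EnvSp d | 0 < stepProb ν q.1 q.2} :=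
    measurableSet_lt measurable_const measurable_stepProb
  exact (ae_iff_ae_stepProb hpos).1 (h ((ae_iff_ae_stepProb hpos).2 (ae_of_all _ fun _ _ => id)))

lemma exists_stepProb_pos (ω : Config d) : ∃ e, 0 < stepProb μ ω e := by
  by_contra! h
  have hsum := sum_ofReal_stepProb (μ := μ) ω
  simp [ENNReal.ofReal_eq_zero.2 (h _)] at hsum

lemma ae_shift_mem_of_marg1_eq_marg2 {A : Set (Config d)} (h : marg1 μ = marg2 μ)
    (hA : MeasurableSet A) (hmem : ∀ᵐ ω ∂(marg1 μ), ω ∈ A) :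
    ∀ᵐ ω ∂(marg1 μ), ∀ e, 0 < stepProb μ ω e → shift e.1 ω ∈ A := by
  rw [h, marg2] at hmem
  exact (ae_iff_ae_stepProb (measurable_shift_step hA)).1
    (ae_of_ae_map measurable_shift_step.aemeasurable hmem)

end StepProb

section Marginals

variable {P P₀ : Measure (Config d)} {p : ℝ} {μ : ProbabilityMeasure (EnvSp d)} {A : Set (Config d)}

lemma ae_cond_iff {Ω : Type*} [MeasurableSpace Ω] {m : Measure Ω} [IsFiniteMeasure m] {s : Set Ω}
    (hs : MeasurableSet s) {R : Ω → Prop} : (∀ᵐ x ∂(m[|s]), R x) ↔ ∀ᵐ x ∂m, x ∈ s → R x := by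
  rw [ProbabilityTheory.cond, Measure.ae_ennreal_smul_measure_iff
    (ENNReal.inv_ne_zero.2 (measure_ne_top m s)), ae_restrict_iff' hs]

lemma M1star.ae_stepProb_pos_iff [Nonempty (Step d)] (hμ : μ ∈ M1star d P₀) :
    ∀ᵐ ω ∂(marg1 μ), ∀ e, 0 < stepProb (μ : Measure (EnvSp d)) ω e ↔ edgeOpen ω 0 e.1 := by
  obtain ⟨-, hac, ρ, hρ, hslice, hpos⟩ := hμ
  refine ae_all_iff.2 fun e => ?_
  have hcond : Measurable fun ω => (μ : Measure (EnvSp d)).condKernel ω {e} :=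
    Kernel.measurable_coe _ (measurableSet_singleton e)
  have heq : (fun ω => (μ : Measure (EnvSp d)).condKernel ω {e}) =ᵐ[marg1 μ] ρ e :=
    (withDensity_eq_iff_of_sigmaFinite hcond.aemeasurable (hρ e).aemeasurable).1
      ((slice_eq_withDensity e).symm.trans (hslice e))
  filter_upwards [heq, hac (hpos e)] with ω hω hωpos
  rw [stepProb_pos_iff, hω, ← pos_iff_ne_zero, hωpos]

lemma M1star.of_ae_stepProb_pos_iff [Nonempty (Step d)]
    (hinv : marg1 (μ : Measure (EnvSp d)) = marg2 μ) (hac : marg1 μ ≪ P₀) (hac' : P₀ ≪ marg1 μ)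
    (hpos : ∀ᵐ ω ∂(marg1 μ), ∀ e, 0 < stepProb (μ : Measure (EnvSp d)) ω e ↔ edgeOpen ω 0 e.1) :
    μ ∈ M1star d P₀ := by
  refine ⟨hinv, hac, fun e ω => (μ : Measure (EnvSp d)).condKernel ω {e},
    fun e => Kernel.measurable_coe _ (measurableSet_singleton e), slice_eq_withDensity, fun e => ?_⟩
  filter_upwards [hac' hpos] with ω hω
  rw [← hω e, stepProb_pos_iff, pos_iff_ne_zero]

lemma IsBernoulli.cond_cluZero_zero_or_compl_zero (hP : IsBernoulli d p P) (hp0 : 0 < p)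
    (hp1 : p < 1) (hd : 0 < d) (hA : MeasurableSet A)
    (hinv : ∀ᵐ ω ∂(P[|cluZero d]), ω ∈ A → ∀ e : Step d, edgeOpen ω 0 e.1 → shift e.1 ω ∈ A) :
    P[|cluZero d] A = 0 ∨ P[|cluZero d] Aᶜ = 0 := by
  have := hP.1
  have hcond {B : Set (Config d)} (hB : P (cluZero d ∩ B) = 0) : P[|cluZero d] B = 0 := by
    rw [cond_apply measurableSet_cluZero, hB, mul_zero]
  refine (hP.cluster_ergodic hp0 hp1 hd hA ?_).imp hcond hcond
  filter_upwards [(ae_cond_iff measurableSet_cluZero).1 hinv] with ω hω hc hωA e he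
  exact hω hc hωA ⟨e, he.mem_Ud⟩ he

/-- The set where the density of `(μ)₁` is positive is closed under the walk, so it is
almost all of `P₀` by ergodicity. -/
lemma M1star.cond_cluZero_absolutelyContinuous (hP : IsBernoulli d p P) (hp0 : 0 < p)
    (hp1 : p < 1) (hd : 0 < d) (hμ : μ ∈ M1star d (P[|cluZero d])) :
    P[|cluZero d] ≪ marg1 μ := by
  have := hP.1
  have := nonempty_step hd
  have : (marg1 (μ : Measure (EnvSp d))).HaveLebesgueDecomposition (P[|cluZero d]) :=
    Measure.haveLebesgueDecomposition_of_sigmaFinite _ _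
  obtain ⟨f, hf, hwd⟩ : ∃ f, Measurable f ∧ marg1 μ = (P[|cluZero d]).withDensity f :=
    ⟨_, Measure.measurable_rnDeriv _ _, (Measure.withDensity_rnDeriv_eq _ _ hμ.2.1).symm⟩
  have hS : MeasurableSet {ω | f ω ≠ 0} := (measurableSet_eq_fun hf measurable_const).compl
  have hmem : ∀ᵐ ω ∂(marg1 μ), ω ∈ {ω | f ω ≠ 0} := by
    rw [hwd, ae_withDensity_iff hf]
    exact ae_of_all _ fun _ => id
  have hclosed : ∀ᵐ ω ∂(marg1 μ), ∀ e : Step d, edgeOpen ω 0 e.1 → shift e.1 ω ∈ {ω | f ω ≠ 0} := by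
    filter_upwards [ae_shift_mem_of_marg1_eq_marg2 hμ.1 hS hmem, M1star.ae_stepProb_pos_iff hμ]
      with ω hω hpos e he
    exact hω e ((hpos e).2 he)
  rw [hwd, ae_withDensity_iff hf] at hclosed
  rcases hP.cond_cluZero_zero_or_compl_zero hp0 hp1 hd hS hclosed with hnull | hconull
  · exact absurd (prob_compl_eq_zero_iff hS |>.1 hmem) (by simp [hμ.2.1 hnull])
  · rw [hwd]
    exact withDensity_absolutelyContinuous' hf.aemeasurable hconull

lemma M1star.zero_or_compl_zero (hP : IsBernoulli d p P) (hp0 : 0 < p) (hp1 : p < 1) (hd : 0 < d)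
    [Nonempty (Step d)] (hμ : μ ∈ M1star d (P[|cluZero d])) (hA : MeasurableSet A)
    (hinv : ∀ᵐ ω ∂(marg1 μ), ω ∈ A →
      ∀ e, 0 < stepProb (μ : Measure (EnvSp d)) ω e → shift e.1 ω ∈ A) :
    marg1 μ A = 0 ∨ marg1 μ Aᶜ = 0 := by
  refine (hP.cond_cluZero_zero_or_compl_zero hp0 hp1 hd hA ?_).imp (hμ.2.1 ·) (hμ.2.1 ·)
  refine M1star.cond_cluZero_absolutelyContinuous hP hp0 hp1 hd hμ ?_
  filter_upwards [hinv, M1star.ae_stepProb_pos_iff hμ] with ω hω hpos hωA e he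
  exact hω hωA e ((hpos e).2 he)

end Marginals

lemma lintegral_refM {μ : Measure (EnvSp d)} {f : EnvSp d → ℝ≥0∞} (hf : Measurable f) :
    ∫⁻ q, f q ∂(refM μ) = ∫⁻ ω, ∑ e, ENNReal.ofReal (srw d ω e) * f (ω, e) ∂(marg1 μ) := by
  have hsrw (e : Step d) : Measurable fun ω => ENNReal.ofReal (srw d ω e) :=
    (measurable_srw.comp measurable_prodMk_right).ennreal_ofReal
  have hterm (e : Step d) : Measurable fun ω => ENNReal.ofReal (srw d ω e) * f (ω, e) :=
    (hsrw e).mul (hf.comp measurable_prodMk_right)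
  rw [refM, lintegral_sum_measure, tsum_fintype, lintegral_finsetSum _ fun e _ => hterm e]
  refine Finset.sum_congr rfl fun e _ => ?_
  rw [lintegral_map hf measurable_prodMk_right]
  exact lintegral_withDensity_eq_lintegral_mul _ (hsrw e) (hf.comp measurable_prodMk_right)

section Entropy

variable {μ ν : Measure (EnvSp d)} [IsProbabilityMeasure μ] [IsProbabilityMeasure ν]
  [Nonempty (Step d)]

lemma stepProb_div_srw_le_card (ω : Config d) (e : Step d) :
    stepProb μ ω e / srw d ω e ≤ Fintype.card (Step d) := by
  by_cases h : edgeOpen ω 0 e.1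
  · have hcard : (0 : ℝ) < Fintype.card (Step d) := by exact_mod_cast Fintype.card_pos
    rw [div_le_iff₀ (srw_pos_iff.2 h)]
    calc stepProb μ ω e ≤ Fintype.card (Step d) * (Fintype.card (Step d) : ℝ)⁻¹ :=
          (stepProb_le_one ω e).trans_eq (mul_inv_cancel₀ hcard.ne').symm
      _ ≤ Fintype.card (Step d) * srw d ω e := by gcongr; exact inv_card_le_srw h
  · simp [srw_of_not_edgeOpen h]

lemma measurable_stepProb_div_srw :
    Measurable fun q : EnvSp d => stepProb μ q.1 q.2 / srw d q.1 q.2 :=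
  measurable_stepProb.div measurable_srw

/-- The logarithm of the ratio between the step probabilities under `μ` and those of the simple
random walk; its mean under `μ` is the entropy `ℑ(μ)`. -/
def stepLogRatio (μ : Measure (EnvSp d)) [IsFiniteMeasure μ] (q : EnvSp d) : ℝ :=
  Real.log (stepProb μ q.1 q.2 / srw d q.1 q.2)

lemma measurable_stepLogRatio : Measurable (stepLogRatio μ) := measurable_stepProb_div_srw.log

/-- `μ` only charges steps along open edges. -/
def StepsOpen (μ : Measure (EnvSp d)) [IsFiniteMeasure μ] : Prop :=
  ∀ᵐ ω ∂(marg1 μ), ∀ e, 0 < stepProb μ ω e → edgeOpen ω 0 e.1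

lemma isProbabilityMeasure_refM (hμ : StepsOpen μ) : IsProbabilityMeasure (refM μ) := by
  have hsum : ∀ᵐ ω ∂(marg1 μ), ∑ e, ENNReal.ofReal (srw d ω e) * 1 = 1 := by
    filter_upwards [hμ] with ω hω
    obtain ⟨e, he⟩ := exists_stepProb_pos (μ := μ) ω
    simp_rw [mul_one]
    rw [← ENNReal.ofReal_sum_of_nonneg fun e _ => srw_nonneg ω e, sum_srw (hω e he),
      ENNReal.ofReal_one]
  constructor
  calc refM μ Set.univ = ∫⁻ _, 1 ∂(refM μ) := lintegral_one.symm
    _ = ∫⁻ ω, ∑ e, ENNReal.ofReal (srw d ω e) * 1 ∂(marg1 μ) := lintegral_refM measurable_const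
    _ = ∫⁻ _, 1 ∂(marg1 μ) := lintegral_congr_ae hsum
    _ = 1 := by rw [lintegral_one, measure_univ]

lemma eq_withDensity_refM (hμ : StepsOpen μ) :
    μ = (refM μ).withDensity fun q => ENNReal.ofReal (stepProb μ q.1 q.2 / srw d q.1 q.2) := by
  have hratio := (measurable_stepProb_div_srw (μ := μ)).ennreal_ofReal
  refine Measure.ext_of_lintegral _ fun f hf => ?_
  rw [lintegral_withDensity_eq_lintegral_mul _ hratio hf, lintegral_refM (hratio.mul hf),
    lintegral_eq_lintegral_sum_stepProb hf]
  refine lintegral_congr_ae ?_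
  filter_upwards [hμ] with ω hω
  refine Finset.sum_congr rfl fun e _ => ?_
  rw [Pi.mul_apply, ← mul_assoc, ← ENNReal.ofReal_mul (srw_nonneg ω e)]
  rcases (stepProb_nonneg (μ := μ) ω e).eq_or_lt with h0 | hpos
  · simp [← h0]
  · rw [mul_div_cancel₀ _ (srw_pos_iff.2 (hω e hpos)).ne']

lemma rnDeriv_refM (hμ : StepsOpen μ) :
    μ.rnDeriv (refM μ) =ᵐ[refM μ] fun q => ENNReal.ofReal (stepProb μ q.1 q.2 / srw d q.1 q.2) := by
  have := isProbabilityMeasure_refM hμ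
  have h := Measure.rnDeriv_withDensity (refM μ)
    (measurable_stepProb_div_srw (μ := μ)).ennreal_ofReal
  rwa [← eq_withDensity_refM hμ] at h

lemma absolutelyContinuous_refM (hμ : StepsOpen μ) : μ ≪ refM μ := by
  conv_lhs => rw [eq_withDensity_refM hμ]
  exact withDensity_absolutelyContinuous _ _

lemma llr_refM (hμ : StepsOpen μ) : llr μ (refM μ) =ᵐ[μ] stepLogRatio μ := by
  filter_upwards [absolutelyContinuous_refM hμ (rnDeriv_refM hμ)] with q hq
  rw [llr, hq, ENNReal.toReal_ofReal (div_nonneg (stepProb_nonneg _ _) (srw_nonneg _ _)),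
    stepLogRatio]

lemma klFun_le_sq_add_one {x : ℝ} (hx : 0 ≤ x) : InformationTheory.klFun x ≤ x ^ 2 + 1 := by
  have := mul_le_mul_of_nonneg_left (Real.log_le_self hx) hx
  rw [InformationTheory.klFun_apply]
  linarith [sq x]

lemma klDiv_refM_ne_top (hμ : StepsOpen μ) : InformationTheory.klDiv μ (refM μ) ≠ ∞ := by
  have := isProbabilityMeasure_refM hμ
  rw [InformationTheory.klDiv_eq_lintegral_klFun_of_ac (absolutelyContinuous_refM hμ)]
  refine ((lintegral_mono_ae (g := fun _ => ENNReal.ofReal ((Fintype.card (Step d) : ℝ) ^ 2 + 1))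
    ?_).trans_lt ?_).ne
  · filter_upwards [rnDeriv_refM hμ] with q hq
    have hnonneg := div_nonneg (stepProb_nonneg (μ := μ) q.1 q.2) (srw_nonneg q.1 q.2)
    rw [hq, ENNReal.toReal_ofReal hnonneg]
    refine ENNReal.ofReal_le_ofReal ((klFun_le_sq_add_one hnonneg).trans ?_)
    gcongr
    exact stepProb_div_srw_le_card _ _
  · simp

lemma integrable_stepLogRatio (hμ : StepsOpen μ) : Integrable (stepLogRatio μ) μ :=
  (InformationTheory.klDiv_ne_top_iff.1 (klDiv_refM_ne_top hμ)).2.congr (llr_refM hμ)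

lemma toReal_klDiv_refM (hμ : StepsOpen μ) :
    (InformationTheory.klDiv μ (refM μ)).toReal = ∫ q, stepLogRatio μ q ∂μ := by
  have := isProbabilityMeasure_refM hμ
  rw [InformationTheory.toReal_klDiv_of_measure_eq (absolutelyContinuous_refM hμ) (by simp),
    integral_congr_ae (llr_refM hμ)]

lemma lintegral_stepProb_div_stepProb_le_one :
    ∫⁻ q, ENNReal.ofReal (stepProb ν q.1 q.2 / stepProb μ q.1 q.2) ∂μ ≤ 1 := by
  have hratio : Measurable fun q : EnvSp d => stepProb ν q.1 q.2 / stepProb μ q.1 q.2 :=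
    measurable_stepProb.div measurable_stepProb
  rw [lintegral_eq_lintegral_sum_stepProb hratio.ennreal_ofReal]
  calc ∫⁻ ω, ∑ e, ENNReal.ofReal (stepProb μ ω e) *
        ENNReal.ofReal (stepProb ν ω e / stepProb μ ω e) ∂(marg1 μ)
      ≤ ∫⁻ ω, ∑ e, ENNReal.ofReal (stepProb ν ω e) ∂(marg1 μ) := by
        refine lintegral_mono fun ω => Finset.sum_le_sum fun e _ => ?_
        rw [← ENNReal.ofReal_mul (stepProb_nonneg ω e)]
        refine ENNReal.ofReal_le_ofReal ?_
        rcases (stepProb_nonneg (μ := μ) ω e).eq_or_lt with h0 | hpos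
        · simpa [← h0] using stepProb_nonneg ω e
        · exact (mul_div_cancel₀ _ hpos.ne').le
    _ = 1 := by simp only [sum_ofReal_stepProb, lintegral_one, measure_univ]

lemma ae_stepLogRatio_sub_stepLogRatio_le (hμ : StepsOpen μ) (hac : μ ≪ ν) :
    ∀ᵐ q ∂μ, stepLogRatio ν q - stepLogRatio μ q ≤
      stepProb ν q.1 q.2 / stepProb μ q.1 q.2 - 1 := by
  have hpos : ∀ᵐ q ∂μ, 0 < srw d q.1 q.2 ∧ 0 < stepProb μ q.1 q.2 ∧ 0 < stepProb ν q.1 q.2 := by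
    refine (ae_iff_ae_stepProb ?_).2 ?_
    · exact (measurableSet_lt measurable_const measurable_srw).inter
        ((measurableSet_lt measurable_const measurable_stepProb).inter
          (measurableSet_lt measurable_const measurable_stepProb))
    · filter_upwards [hμ, ae_stepProb_pos_of_absolutelyContinuous hac] with ω hω hων e he
      exact ⟨srw_pos_iff.2 (hω e he), he, hων e he⟩
  filter_upwards [hpos] with q ⟨hs, hm, hn⟩
  rw [stepLogRatio, stepLogRatio, ← Real.log_div (div_pos hn hs).ne' (div_pos hm hs).ne',
    div_div_div_cancel_right₀ hs.ne']
  exact Real.log_le_sub_one_of_pos (div_pos hn hm)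

lemma integral_stepLogRatio_le_of_absolutelyContinuous (hμ : StepsOpen μ) (hac : μ ≪ ν)
    (hint : Integrable (stepLogRatio ν) μ) :
    ∫ q, stepLogRatio ν q ∂μ ≤ ∫ q, stepLogRatio μ q ∂μ := by
  let r : EnvSp d → ℝ := fun q => stepProb ν q.1 q.2 / stepProb μ q.1 q.2
  have hmeas : Measurable r := measurable_stepProb.div measurable_stepProb
  have hnonneg (q : EnvSp d) : 0 ≤ r q := div_nonneg (stepProb_nonneg _ _) (stepProb_nonneg _ _)
  have hr : Integrable r μ :=
    (lintegral_ofReal_ne_top_iff_integrable hmeas.aestronglyMeasurable (ae_of_all _ hnonneg)).1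
      (lintegral_stepProb_div_stepProb_le_one.trans_lt ENNReal.one_lt_top).ne
  have hr_le : ∫ q, r q ∂μ ≤ 1 := by
    rw [integral_eq_lintegral_of_nonneg_ae (ae_of_all _ hnonneg) hmeas.aestronglyMeasurable]
    exact ENNReal.toReal_mono ENNReal.one_ne_top lintegral_stepProb_div_stepProb_le_one
  have hr_sub : ∫ q, (r q - 1) ∂μ = ∫ q, r q ∂μ - 1 := by
    rw [integral_sub hr (integrable_const 1), integral_const, probReal_univ, one_smul]
  have hmono : ∫ q, (stepLogRatio ν q - stepLogRatio μ q) ∂μ ≤ ∫ q, (r q - 1) ∂μ :=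
    integral_mono_ae (hint.sub (integrable_stepLogRatio hμ)) (hr.sub (integrable_const 1))
      (ae_stepLogRatio_sub_stepLogRatio_le hμ hac)
  rw [integral_sub hint (integrable_stepLogRatio hμ)] at hmono
  linarith

lemma M1star.stepsOpen {P₀ : Measure (Config d)} {μ : ProbabilityMeasure (EnvSp d)}
    (hμ : μ ∈ M1star d P₀) : StepsOpen (μ : Measure (EnvSp d)) :=
  (M1star.ae_stepProb_pos_iff hμ).mono fun _ hω e => (hω e).1

lemma M1star.entI_eq_klDiv {P₀ : Measure (Config d)} {μ : ProbabilityMeasure (EnvSp d)}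
    (hμ : μ ∈ M1star d P₀) :
    entI P₀ μ = InformationTheory.klDiv (μ : Measure (EnvSp d)) (refM μ) := by
  have hac := absolutelyContinuous_refM (M1star.stepsOpen hμ)
  have := isProbabilityMeasure_refM (M1star.stepsOpen hμ)
  rw [entI, if_pos ⟨hμ, hac⟩, InformationTheory.klDiv_eq_lintegral_klFun_of_ac hac]
  refine lintegral_congr fun q => ?_
  rw [klFun, InformationTheory.klFun_apply, sub_add_eq_add_sub]

lemma M1star.entI_ne_top {P₀ : Measure (Config d)} {μ : ProbabilityMeasure (EnvSp d)}
    (hμ : μ ∈ M1star d P₀) : entI P₀ μ ≠ ∞ := by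
  rw [M1star.entI_eq_klDiv hμ]
  exact klDiv_refM_ne_top (M1star.stepsOpen hμ)

lemma M1star.toReal_entI {P₀ : Measure (Config d)} {μ : ProbabilityMeasure (EnvSp d)}
    (hμ : μ ∈ M1star d P₀) :
    (entI P₀ μ).toReal = ∫ q, stepLogRatio (μ : Measure (EnvSp d)) q ∂(μ : Measure (EnvSp d)) := by
  rw [M1star.entI_eq_klDiv hμ, toReal_klDiv_refM (M1star.stepsOpen hμ)]

end Entropy

/-! ### Simulating the walk with independent noise -/

section Path

variable {n : ℕ}

lemma pos_zero (s : Fin n → Step d) : pos s 0 = 0 := by simp [pos]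

lemma pos_succ (s : Fin n → Step d) (k : Fin n) : pos s (k + 1) = (s k).1 + pos s k := by
  have hfilter : Finset.univ.filter (fun j : Fin n => (j : ℕ) < k + 1) =
      insert k (Finset.univ.filter fun j : Fin n => (j : ℕ) < k) := by
    ext j
    simp only [Finset.mem_filter, Finset.mem_univ, true_and, Finset.mem_insert, Fin.ext_iff]
    lia
  rw [pos, hfilter, Finset.sum_insert (by simp), pos]

lemma pos_tail (s : Fin (n + 1) → Step d) (k : ℕ) :
    pos s (k + 1) = pos (Fin.tail s) k + (s 0).1 := by
  simp only [pos, Finset.sum_filter, Fin.sum_univ_succ, add_comm _ (s 0).1]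
  simp [Fin.tail]

lemma pathProb_succ (κ : Config d → Step d → ℝ) (ω : Config d) (s : Fin (n + 1) → Step d) :
    pathProb κ ω s = κ ω (s 0) * pathProb κ (shift (s 0).1 ω) (Fin.tail s) := by
  simp only [pathProb, Fin.prod_univ_succ, Fin.val_zero, pos_zero, shift_zero, Fin.val_succ,
    pos_tail, shift_shift]
  rfl

end Path

section Simulation

variable {Z : Type*} {step : Config d → Z → Step d}

/-- The environment seen from the walker after one step driven by the noise `z`. -/
def nextEnv (step : Config d → Z → Step d) (ω : Config d) (z : Z) : Config d :=
  shift (step ω z).1 ω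

/-- The first environment-step pair of the walk started in the environment `x.1` and driven by the
noise sequence `x.2`. -/
def firstPair (step : Config d → Z → Step d) (x : Config d × (ℕ → Z)) : EnvSp d :=
  (x.1, step x.1 (x.2 0))

/-- The first `n` steps of the walk started in the environment `x.1` and driven by the noise
sequence `x.2`. -/
def simSteps (step : Config d → Z → Step d) (n : ℕ) (x : Config d × (ℕ → Z)) : Fin n → Step d :=
  fun k => (firstPair step ((skewProduct (nextEnv step))^[k] x)).2

lemma shift_pos_simSteps {n k : ℕ} (x : Config d × (ℕ → Z)) (hk : k ≤ n) :
    shift (pos (simSteps step n x) k) x.1 = ((skewProduct (nextEnv step))^[k] x).1 := by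
  induction k with
  | zero => simp [pos_zero, shift_zero]
  | succ k ih =>
    rw [pos_succ (simSteps step n x) ⟨k, hk⟩, ← shift_shift, ih (by lia),
      Function.iterate_succ_apply']
    rfl

lemma envPair_simSteps {n : ℕ} (x : Config d × (ℕ → Z)) (k : Fin n) :
    envPair x.1 (simSteps step n x) k = firstPair step ((skewProduct (nextEnv step))^[k] x) := by
  rw [envPair, shift_pos_simSteps x k.2.le]
  rfl

lemma birkhoffSum_firstPair (f : EnvSp d → ℝ) (n : ℕ) (x : Config d × (ℕ → Z)) :
    birkhoffSum (skewProduct (nextEnv step)) (f ∘ firstPair step) n x =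
      ∑ k : Fin n, f (envPair x.1 (simSteps step n x) k) := by
  simp only [birkhoffSum, envPair_simSteps, Function.comp_apply]
  exact Finset.sum_range fun k => f (firstPair step ((skewProduct (nextEnv step))^[k] x))

lemma simSteps_seqCons_eq_iff {n : ℕ} (ω : Config d) (z : Z) (u : ℕ → Z)
    (s : Fin (n + 1) → Step d) :
    simSteps step (n + 1) (ω, seqCons z u) = s ↔
      step ω z = s 0 ∧ simSteps step n (nextEnv step ω z, u) = Fin.tail s := by
  rw [funext_iff, Fin.forall_fin_succ, funext_iff]
  rfl

variable [MeasurableSpace Z]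

lemma measurable_nextEnv (hstep : Measurable (Function.uncurry step)) :
    Measurable (Function.uncurry (nextEnv step)) :=
  measurable_shift_step.comp (measurable_fst.prodMk hstep)

lemma measurable_firstPair (hstep : Measurable (Function.uncurry step)) :
    Measurable (firstPair step) :=
  measurable_fst.prodMk
    (hstep.comp (measurable_fst.prodMk ((measurable_pi_apply 0).comp measurable_snd)))

lemma measurable_skewProduct_nextEnv (hstep : Measurable (Function.uncurry step)) :
    Measurable (skewProduct (nextEnv step)) := by
  refine ((measurable_nextEnv hstep).comp
    (measurable_fst.prodMk ((measurable_pi_apply 0).comp measurable_snd))).prodMk ?_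
  fun_prop

lemma measurable_simSteps (hstep : Measurable (Function.uncurry step)) (n : ℕ) :
    Measurable (simSteps step n) :=
  measurable_pi_lambda _ fun k => measurable_snd.comp
    ((measurable_firstPair hstep).comp ((measurable_skewProduct_nextEnv hstep).iterate k))

variable {ν : Measure Z} [IsProbabilityMeasure ν] {κ : Config d → Step d → ℝ}

lemma infinitePi_simSteps_eq (hstep : Measurable (Function.uncurry step))
    (hκ : ∀ ω e, ν.real {z | step ω z = e} = κ ω e) {n : ℕ} (ω : Config d) (s : Fin n → Step d) :
    Measure.infinitePi (fun _ => ν) {u | simSteps step n (ω, u) = s} =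
      ENNReal.ofReal (pathProb κ ω s) := by
  have hmeas {n : ℕ} (ω : Config d) (s : Fin n → Step d) :
      MeasurableSet {u | simSteps step n (ω, u) = s} :=
    (measurable_simSteps hstep n).comp measurable_prodMk_left (measurableSet_singleton s)
  induction n generalizing ω with
  | zero => simp [pathProb, Subsingleton.elim (simSteps step 0 _) s]
  | succ n ih =>
    have hfirst : MeasurableSet {z | step ω z = s 0} :=
      (hstep.comp measurable_prodMk_left) (measurableSet_singleton (s 0))
    have hκ_nonneg : 0 ≤ κ ω (s 0) := hκ ω (s 0) ▸ measureReal_nonneg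
    calc Measure.infinitePi (fun _ => ν) {u | simSteps step (n + 1) (ω, u) = s}
        = ∫⁻ z, Measure.infinitePi (fun _ => ν)
            {u | simSteps step (n + 1) (ω, seqCons z u) = s} ∂ν :=
          infinitePi_apply_eq_lintegral_seqCons (hmeas ω s)
      _ = ∫⁻ z, {z | step ω z = s 0}.indicator
            (fun _ => ENNReal.ofReal (pathProb κ (shift (s 0).1 ω) (Fin.tail s))) z ∂ν := by
          refine lintegral_congr fun z => ?_
          simp only [simSteps_seqCons_eq_iff]
          by_cases hz : step ω z = s 0
          · simp only [Set.indicator, Set.mem_ofPred_eq, hz, true_and, if_true, nextEnv, ih]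
          · simp [hz]
      _ = ENNReal.ofReal (pathProb κ ω s) := by
          rw [lintegral_indicator_const hfirst, ← ofReal_measureReal, hκ, pathProb_succ, mul_comm,
            ENNReal.ofReal_mul hκ_nonneg]

lemma infinitePi_simSteps_mem (hstep : Measurable (Function.uncurry step))
    (hκ : ∀ ω e, ν.real {z | step ω z = e} = κ ω e) {n : ℕ} (ω : Config d)
    (A : Set (Fin n → Step d)) :
    Measure.infinitePi (fun _ => ν) {u | simSteps step n (ω, u) ∈ A} =
      ENNReal.ofReal (qP κ ω A) := by
  have hmeas : Measurable fun u : ℕ → Z => simSteps step n (ω, u) :=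
    (measurable_simSteps hstep n).comp measurable_prodMk_left
  have hnonneg (s : Fin n → Step d) : 0 ≤ A.indicator (pathProb κ ω) s :=
    Set.indicator_nonneg (fun s _ => Finset.prod_nonneg fun k _ => hκ _ _ ▸ measureReal_nonneg) s
  have hsingle (s : Fin n → Step d) :
      (Measure.infinitePi fun _ => ν).map (fun u => simSteps step n (ω, u)) {s} =
        ENNReal.ofReal (pathProb κ ω s) := by
    rw [Measure.map_apply hmeas (measurableSet_singleton s)]
    exact infinitePi_simSteps_eq hstep hκ ω s
  have hA : MeasurableSet A := A.toFinite.measurableSet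
  change Measure.infinitePi _ ((fun u => simSteps step n (ω, u)) ⁻¹' A) = _
  rw [← Measure.map_apply hmeas hA, ← lintegral_indicator_one hA, lintegral_fintype, qP,
    ENNReal.ofReal_sum_of_nonneg fun s _ => hnonneg s]
  refine Finset.sum_congr rfl fun s _ => ?_
  by_cases hs : s ∈ A <;> simp [hs, hsingle]

end Simulation

section Stationary

variable {Z : Type*} [MeasurableSpace Z] {ν : Measure Z}
  {step : Config d → Z → Step d} {μ : ProbabilityMeasure (EnvSp d)} [Nonempty (Step d)]

lemma real_setOf_step_eq (hstep : Measurable (Function.uncurry step))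
    (hmap : ∀ ω, ν.map (step ω) = (μ : Measure (EnvSp d)).condKernel ω) (ω : Config d)
    (e : Step d) : ν.real {z | step ω z = e} = stepProb (μ : Measure (EnvSp d)) ω e := by
  have hω : Measurable (step ω) := hstep.comp measurable_prodMk_left
  rw [stepProb, ← hmap, map_measureReal_apply hω (measurableSet_singleton e)]
  rfl

variable [IsProbabilityMeasure ν]

lemma measurePreserving_prodMk_step (hstep : Measurable (Function.uncurry step))
    (hmap : ∀ ω, ν.map (step ω) = (μ : Measure (EnvSp d)).condKernel ω) :
    MeasurePreserving (fun x : Config d × Z => (x.1, step x.1 x.2)) ((marg1 μ).prod ν) μ := by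
  have hmeas : Measurable fun x : Config d × Z => (x.1, step x.1 x.2) := measurable_fst.prodMk hstep
  refine ⟨hmeas, Measure.ext_of_lintegral _ fun f hf => ?_⟩
  have hf_step : Measurable fun x : Config d × Z => f (x.1, step x.1 x.2) := hf.comp hmeas
  rw [lintegral_map hf hmeas, lintegral_prod _ hf_step.aemeasurable,
    ← Measure.lintegral_condKernel hf]
  refine lintegral_congr fun ω => ?_
  have hω : Measurable (step ω) := hstep.comp measurable_prodMk_left
  have hfω : Measurable fun e => f (ω, e) := hf.comp measurable_prodMk_left
  rw [← hmap, lintegral_map hfω hω]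

lemma measurePreserving_firstPair (hstep : Measurable (Function.uncurry step))
    (hmap : ∀ ω, ν.map (step ω) = (μ : Measure (EnvSp d)).condKernel ω) :
    MeasurePreserving (firstPair step) ((marg1 μ).prod (Measure.infinitePi fun _ => ν)) μ :=
  (measurePreserving_prodMk_step hstep hmap).comp
    ((MeasurePreserving.id _).prod (measurePreserving_eval_infinitePi (fun _ => ν) 0))

lemma measurePreserving_nextEnv (hstep : Measurable (Function.uncurry step))
    (hmap : ∀ ω, ν.map (step ω) = (μ : Measure (EnvSp d)).condKernel ω)
    (hinv : marg1 (μ : Measure (EnvSp d)) = marg2 μ) :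
    MeasurePreserving (Function.uncurry (nextEnv step)) ((marg1 μ).prod ν) (marg1 μ) :=
  have hshift : MeasurePreserving (fun q : EnvSp d => shift q.2.1 q.1) (μ : Measure (EnvSp d))
      (marg1 (μ : Measure (EnvSp d))) := ⟨measurable_shift_step, hinv.symm⟩
  hshift.comp (measurePreserving_prodMk_step hstep hmap)

lemma M1star.ergodic_skewProduct_nextEnv {P : Measure (Config d)} {p : ℝ} (hP : IsBernoulli d p P)
    (hp0 : 0 < p) (hp1 : p < 1) (hd : 0 < d) (hμ : μ ∈ M1star d (P[|cluZero d]))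
    (hstep : Measurable (Function.uncurry step))
    (hmap : ∀ ω, ν.map (step ω) = (μ : Measure (EnvSp d)).condKernel ω) :
    Ergodic (skewProduct (nextEnv step)) ((marg1 μ).prod (Measure.infinitePi fun _ => ν)) := by
  refine ergodic_skewProduct (measurePreserving_nextEnv hstep hmap hμ.1) fun A hA hclosed => ?_
  refine M1star.zero_or_compl_zero hP hp0 hp1 hd hμ hA ?_
  filter_upwards [hclosed] with ω hω hωA e he
  by_contra hnot
  have hsub : {z | step ω z = e} ⊆ {z | nextEnv step ω z ∉ A} := by
    rintro z rfl
    exact hnot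
  rw [← real_setOf_step_eq hstep hmap, measureReal_def, measure_mono_null hsub (hω hωA)] at he
  exact he.ne rfl

lemma exists_step_map_eq_condKernel (μ : ProbabilityMeasure (EnvSp d)) :
    ∃ step : Config d → unitInterval → Step d, Measurable (Function.uncurry step) ∧
      ∀ ω, volume.map (step ω) = (μ : Measure (EnvSp d)).condKernel ω :=
  Kernel.exists_measurable_map_eq_unitInterval _

end Stationary

/-! ### The lower bound -/

section Topology

variable {Ω : Type*} [MeasurableSpace Ω]

lemma eventually_lt_measure_of_ae_eventually_mem {μ : Measure Ω} {S : ℕ → Set Ω} {c : ℝ≥0∞}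
    (h : ∀ᵐ x ∂μ, ∀ᶠ n in atTop, x ∈ S n) (hc : c < μ Set.univ) :
    ∀ᶠ n in atTop, c < μ (S n) := by
  let T : ℕ → Set Ω := fun N => {x | ∀ n ≥ N, x ∈ S n}
  have hT : Monotone T := fun a b hab x hx n hn => hx n (hab.trans hn)
  have huniv : μ (⋃ N, T N) = μ Set.univ := by
    refine measure_congr ?_
    filter_upwards [h] with x hx
    exact eq_true (Set.mem_iUnion.2 (eventually_atTop.1 hx))
  have htendsto := tendsto_measure_iUnion_atTop (μ := μ) hT
  rw [huniv] at htendsto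
  filter_upwards [htendsto.eventually_const_lt hc] with N hN
  exact hN.trans_le (measure_mono fun x hx => hx N le_rfl)

lemma exists_finset_forall_abs_integral_sub_lt [TopologicalSpace Ω] [OpensMeasurableSpace Ω]
    {G : Set (ProbabilityMeasure Ω)} {μ : ProbabilityMeasure Ω} (hG : G ∈ 𝓝 μ) :
    ∃ (I : Finset (BoundedContinuousFunction Ω ℝ)) (ε : ℝ), 0 < ε ∧ ∀ ν : ProbabilityMeasure Ω,
      (∀ f ∈ I, |∫ x, f x ∂(ν : Measure Ω) - ∫ x, f x ∂(μ : Measure Ω)| < ε) → ν ∈ G := by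
  let F : Filter (ProbabilityMeasure Ω) := ⨅ f : BoundedContinuousFunction Ω ℝ,
    comap (fun ν => ∫ x, f x ∂(ν : Measure Ω)) (𝓝 (∫ x, f x ∂(μ : Measure Ω)))
  have hF : Tendsto id F (𝓝 μ) := ProbabilityMeasure.tendsto_iff_forall_integral_tendsto.2
    fun f => tendsto_comap.mono_left (iInf_le _ f)
  obtain ⟨I, hI, V, hV, -, hGV, -⟩ := mem_iInf'.1 (hF hG)
  have hball (f : BoundedContinuousFunction Ω ℝ) : ∃ ε > 0, ∀ ν : ProbabilityMeasure Ω,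
      |∫ x, f x ∂(ν : Measure Ω) - ∫ x, f x ∂(μ : Measure Ω)| < ε → ν ∈ V f := by
    obtain ⟨W, hW, hWV⟩ := mem_comap.1 (hV f)
    obtain ⟨ε, hε, hεW⟩ := Metric.mem_nhds_iff.1 hW
    exact ⟨ε, hε, fun ν hν => hWV (hεW hν)⟩
  choose ε hε hεV using hball
  obtain ⟨ε₀, hε₀, hpos⟩ := ((hI.toFinset.eventually_all.2 fun f _ =>
    Ioc_mem_nhdsGT (hε f)).and self_mem_nhdsWithin).exists
  refine ⟨hI.toFinset, ε₀, hpos, fun ν hν => ?_⟩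
  suffices ν ∈ ⋂ f ∈ I, V f from hGV.symm ▸ this
  refine Set.mem_iInter₂.2 fun f hf => hεV f ν ?_
  have hfI := hI.mem_toFinset.2 hf
  exact (hν f hfI).trans_le (hε₀ f hfI).2

end Topology

section Simulated

lemma integral_empPM (f : EnvSp d → ℝ) (ω : Config d) {n : ℕ} (s : Fin (n + 1) → Step d) :
    ∫ q, f q ∂(empPM ω s : Measure (EnvSp d)) = ((n + 1 : ℕ) : ℝ)⁻¹ * ∑ k, f (envPair ω s k) := by
  change ∫ q, f q ∂(empMeas ω s) = _
  rw [empMeas, integral_smul_measure,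
    integral_finsetSum_measure fun k _ => integrable_dirac (by simp), ENNReal.toReal_inv,
    ENNReal.toReal_natCast, smul_eq_mul]
  simp only [integral_dirac]

variable {Z : Type*} {step : Config d → Z → Step d}

lemma birkhoffAverage_firstPair (f : EnvSp d → ℝ) (n : ℕ) (x : Config d × (ℕ → Z)) :
    birkhoffAverage ℝ (skewProduct (nextEnv step)) (f ∘ firstPair step) (n + 1) x =
      ∫ q, f q ∂(empPM x.1 (simSteps step (n + 1) x) : Measure (EnvSp d)) := by
  rw [birkhoffAverage, birkhoffSum_firstPair, integral_empPM, smul_eq_mul]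

variable [MeasurableSpace Z] {m : Measure (Config d × (ℕ → Z))} {μ : ProbabilityMeasure (EnvSp d)}

lemma ae_forall_envPair_simSteps (hfirst : MeasurePreserving (firstPair step) m μ)
    (hθ : MeasurePreserving (skewProduct (nextEnv step)) m m) {R : EnvSp d → Prop}
    (hR : ∀ᵐ q ∂(μ : Measure (EnvSp d)), R q) :
    ∀ᵐ x ∂m, ∀ n, ∀ k : Fin n, R (envPair x.1 (simSteps step n x) k) := by
  have horbit : ∀ᵐ x ∂m, ∀ k : ℕ, R (firstPair step ((skewProduct (nextEnv step))^[k] x)) :=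
    ae_all_iff.2 fun k => (hfirst.comp (hθ.iterate k)).quasiMeasurePreserving.ae hR
  filter_upwards [horbit] with x hx n k
  exact envPair_simSteps (step := step) x k ▸ hx k

variable [IsProbabilityMeasure m]

lemma ae_tendsto_integral_empPM_simSteps (hfirst : MeasurePreserving (firstPair step) m μ)
    (herg : Ergodic (skewProduct (nextEnv step)) m) {f : EnvSp d → ℝ} (hf : Measurable f)
    (hfi : Integrable f (μ : Measure (EnvSp d))) :
    ∀ᵐ x ∂m, Tendsto
      (fun n => ∫ q, f q ∂(empPM x.1 (simSteps step (n + 1) x) : Measure (EnvSp d))) atTop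
      (𝓝 (∫ q, f q ∂(μ : Measure (EnvSp d)))) := by
  have hbirk := tendsto_birkhoffAverage_ae herg (hf.comp hfirst.measurable)
    (hfirst.integrable_comp_of_integrable hfi)
  filter_upwards [hbirk] with x hx
  simp only [← birkhoffAverage_firstPair,
    ← integral_comp_eq_of_measurePreserving hfirst hf.aestronglyMeasurable]
  exact (tendsto_add_atTop_iff_nat 1).2 hx

lemma ae_eventually_empPM_simSteps_mem (hfirst : MeasurePreserving (firstPair step) m μ)
    (herg : Ergodic (skewProduct (nextEnv step)) m) {G : Set (ProbabilityMeasure (EnvSp d))}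
    (hG : G ∈ 𝓝 μ) :
    ∀ᵐ x ∂m, ∀ᶠ n in atTop, empPM x.1 (simSteps step (n + 1) x) ∈ G := by
  obtain ⟨I, ε, hε, hI⟩ := exists_finset_forall_abs_integral_sub_lt hG
  have hclose : ∀ᵐ x ∂m, ∀ f ∈ I, Tendsto
      (fun n => ∫ q, f q ∂(empPM x.1 (simSteps step (n + 1) x) : Measure (EnvSp d))) atTop
      (𝓝 (∫ q, f q ∂(μ : Measure (EnvSp d)))) :=
    I.eventually_all.2 fun f _ =>
      ae_tendsto_integral_empPM_simSteps hfirst herg f.continuous.measurable (f.integrable _)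
  filter_upwards [hclose] with x hx
  filter_upwards [I.eventually_all.2 fun f hf => Metric.tendsto_nhds.1 (hx f hf) ε hε] with n hn
  exact hI _ hn

end Simulated

section ChangeOfMeasure

lemma pathProb_nonneg {κ : Config d → Step d → ℝ} (hκ : ∀ ω e, 0 ≤ κ ω e) (ω : Config d)
    {n : ℕ} (s : Fin n → Step d) : 0 ≤ pathProb κ ω s := Finset.prod_nonneg fun _ _ => hκ _ _

variable [Nonempty (Step d)]

/-- Trajectories of positive probability along which the walk with transition probabilities
`stepProb μ` has a likelihood ratio at most `exp (n * b)` with respect to the simple random walk. -/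
def boundedRatioSteps (μ : Measure (EnvSp d)) [IsFiniteMeasure μ] (b : ℝ) (ω : Config d) (n : ℕ) :
    Set (Fin n → Step d) :=
  {s | (∀ k, 0 < stepProb μ (envPair ω s k).1 (envPair ω s k).2 ∧
      0 < srw d (envPair ω s k).1 (envPair ω s k).2) ∧
    ∑ k, stepLogRatio μ (envPair ω s k) ≤ n * b}

variable {μ : Measure (EnvSp d)} [IsFiniteMeasure μ] {b : ℝ} {ω : Config d} {n : ℕ}

lemma exp_mul_pathProb_le {s : Fin n → Step d} (hs : s ∈ boundedRatioSteps μ b ω n) :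
    Real.exp (-(n * b)) * pathProb (stepProb μ) ω s ≤ pathProb (srw d) ω s := by
  obtain ⟨hpos, hsum⟩ := hs
  have hratio : pathProb (srw d) ω s =
      Real.exp (-∑ k, stepLogRatio μ (envPair ω s k)) * pathProb (stepProb μ) ω s := by
    rw [pathProb, pathProb, ← Finset.sum_neg_distrib, Real.exp_sum, ← Finset.prod_mul_distrib]
    refine Finset.prod_congr rfl fun k _ => ?_
    obtain ⟨hμ, hsrw⟩ := hpos k
    rw [stepLogRatio, ← Real.log_inv, Real.exp_log (by positivity), inv_div]
    exact (div_mul_cancel₀ _ hμ.ne').symm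
  rw [hratio]
  gcongr
  exact pathProb_nonneg stepProb_nonneg ω s

lemma exp_mul_qP_le (A : Set (Fin n → Step d)) :
    Real.exp (-(n * b)) * qP (stepProb μ) ω (A ∩ boundedRatioSteps μ b ω n) ≤ qP (srw d) ω A := by
  rw [qP, qP, Finset.mul_sum]
  refine Finset.sum_le_sum fun s _ => ?_
  by_cases hs : s ∈ A ∩ boundedRatioSteps μ b ω n
  · rw [Set.indicator_of_mem hs, Set.indicator_of_mem hs.1]
    exact exp_mul_pathProb_le hs.2
  · rw [Set.indicator_of_notMem hs, mul_zero]
    exact Set.indicator_nonneg (fun s _ => pathProb_nonneg srw_nonneg ω s) s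

end ChangeOfMeasure

section LowerBound

lemma StepsOpen.ae_stepProb_pos_and_srw_pos {μ : Measure (EnvSp d)} [IsProbabilityMeasure μ]
    [Nonempty (Step d)] (hμ : StepsOpen μ) :
    ∀ᵐ q ∂μ, 0 < stepProb μ q.1 q.2 ∧ 0 < srw d q.1 q.2 := by
  have hmeas : MeasurableSet {q : EnvSp d | 0 < stepProb μ q.1 q.2 ∧ 0 < srw d q.1 q.2} :=
    (measurableSet_lt measurable_const measurable_stepProb).inter
      (measurableSet_lt measurable_const measurable_srw)
  rw [ae_iff_ae_stepProb hmeas]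
  filter_upwards [hμ] with ω hω e he
  exact ⟨he, srw_pos_iff.2 (hω e he)⟩

variable {Z : Type*} [MeasurableSpace Z] {step : Config d → Z → Step d}
  {μ : ProbabilityMeasure (EnvSp d)} {b : ℝ}

lemma ae_eventually_simSteps_mem_boundedRatioSteps [Nonempty (Step d)]
    {m : Measure (Config d × (ℕ → Z))} [IsProbabilityMeasure m]
    (hfirst : MeasurePreserving (firstPair step) m μ)
    (herg : Ergodic (skewProduct (nextEnv step)) m) (hμ : StepsOpen (μ : Measure (EnvSp d)))
    (hb : ∫ q, stepLogRatio (μ : Measure (EnvSp d)) q ∂(μ : Measure (EnvSp d)) < b) :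
    ∀ᵐ x ∂m, ∀ᶠ n in atTop, simSteps step (n + 1) x ∈
      boundedRatioSteps (μ : Measure (EnvSp d)) b x.1 (n + 1) := by
  filter_upwards [ae_forall_envPair_simSteps hfirst herg.toMeasurePreserving
    hμ.ae_stepProb_pos_and_srw_pos, ae_tendsto_integral_empPM_simSteps hfirst herg
    measurable_stepLogRatio (integrable_stepLogRatio hμ)] with x hpos hx
  filter_upwards [hx.eventually_lt_const hb] with n hn
  rw [integral_empPM, inv_mul_lt_iff₀ (by positivity)] at hn
  exact ⟨hpos (n + 1), hn.le⟩

variable {P : Measure (Config d)} {p : ℝ}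

lemma M1star.ae_eventually_half_le_qP [Nonempty (Step d)] (hP : IsBernoulli d p P)
    (hp0 : 0 < p) (hp1 : p < 1) (hd : 0 < d) (hμ : μ ∈ M1star d (P[|cluZero d]))
    {G : Set (ProbabilityMeasure (EnvSp d))} (hG : G ∈ 𝓝 μ)
    (hb : (entI (P[|cluZero d]) μ).toReal < b) :
    ∀ᵐ ω ∂(marg1 (μ : Measure (EnvSp d))), ∀ᶠ n in atTop, 1 / 2 ≤
      qP (stepProb (μ : Measure (EnvSp d))) ω
        ({s | empPM ω s ∈ G} ∩ boundedRatioSteps (μ : Measure (EnvSp d)) b ω (n + 1)) := by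
  obtain ⟨step, hstep, hmap⟩ := exists_step_map_eq_condKernel μ
  have hfirst := measurePreserving_firstPair hstep hmap
  have herg := M1star.ergodic_skewProduct_nextEnv hP hp0 hp1 hd hμ hstep hmap
  rw [M1star.toReal_entI hμ] at hb
  have hgood := (ae_eventually_empPM_simSteps_mem hfirst herg hG).and
    (ae_eventually_simSteps_mem_boundedRatioSteps hfirst herg (M1star.stepsOpen hμ) hb)
  filter_upwards [Measure.ae_ae_of_ae_prod hgood] with ω hω
  have hhalf := eventually_lt_measure_of_ae_eventually_mem (c := ENNReal.ofReal (1 / 2))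
    (hω.mono fun u hu => hu.1.and hu.2) (by rw [measure_univ, ENNReal.ofReal_lt_one]; norm_num)
  filter_upwards [hhalf] with n hn
  have hle := hn.le.trans_eq (infinitePi_simSteps_mem hstep (real_setOf_step_eq hstep hmap) ω
    ({s | empPM ω s ∈ G} ∩ boundedRatioSteps (μ : Measure (EnvSp d)) b ω (n + 1)))
  exact (ENNReal.ofReal_le_ofReal_iff'.1 hle).resolve_right (by norm_num)

lemma neg_le_liminf_inv_mul_log {q : ℕ → ℝ≥0∞} {c : ℝ} (hc : 0 < c)
    (h : ∀ᶠ n : ℕ in atTop, ENNReal.ofReal (Real.exp (-((n + 1 : ℕ) * b)) * c) ≤ q n) :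
    ((-b : ℝ) : EReal) ≤
      liminf (fun n : ℕ => ((n + 1 : ℝ)⁻¹ : EReal) * ENNReal.log (q n)) atTop := by
  have htendsto : Tendsto (fun n : ℕ => -b + ((n + 1 : ℕ) : ℝ)⁻¹ * Real.log c) atTop (𝓝 (-b)) := by
    simpa using (((tendsto_inv_atTop_nhds_zero_nat (𝕜 := ℝ)).comp
      (tendsto_add_atTop_nat 1)).mul_const (Real.log c)).const_add (-b)
  rw [← ((continuous_coe_real_ereal.tendsto _).comp htendsto).liminf_eq]
  refine liminf_le_liminf ?_
  filter_upwards [h] with n hn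
  have hpos : 0 < Real.exp (-((n + 1 : ℕ) * b)) * c := by positivity
  have hlog := ENNReal.log_le_log hn
  rw [ENNReal.log_ofReal, if_neg hpos.not_ge, Real.log_mul (Real.exp_ne_zero _) hc.ne',
    Real.log_exp] at hlog
  have hcoe : ((n + 1 : ℝ)⁻¹ : EReal) = (((n + 1 : ℕ) : ℝ)⁻¹ : ℝ) := by
    rw [EReal.coe_inv]; push_cast; rfl
  calc ((-b + ((n + 1 : ℕ) : ℝ)⁻¹ * Real.log c : ℝ) : EReal)
      = ((((n + 1 : ℕ) : ℝ)⁻¹ : ℝ) : EReal) * ((-((n + 1 : ℕ) * b) + Real.log c : ℝ) : EReal) := by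
        rw [← EReal.coe_mul]
        congr 1
        field_simp
    _ ≤ ((n + 1 : ℝ)⁻¹ : EReal) * ENNReal.log (q n) := by
        rw [hcoe]
        exact mul_le_mul_of_nonneg_left hlog (by positivity)

lemma ae_neg_le_liminf_of_entI_lt (hP : IsBernoulli d p P) (hp0 : 0 < p) (hp1 : p < 1) (hd : 0 < d)
    {G : Set (ProbabilityMeasure (EnvSp d))} (hG : G ∈ 𝓝 μ)
    (hb : ((entI (P[|cluZero d]) μ : ℝ≥0∞) : EReal) < b) :
    ∀ᵐ ω ∂(P[|cluZero d]), ((-b : ℝ) : EReal) ≤ liminf (fun n : ℕ => ((n + 1 : ℝ)⁻¹ : EReal) *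
      ENNReal.log (qPE (srw d) ω {s : Fin (n + 1) → Step d | empPM ω s ∈ G})) atTop := by
  have := nonempty_step hd
  have hμ : μ ∈ M1star d (P[|cluZero d]) := by
    by_contra hμ
    simp [entI, hμ] at hb
  have hb' : (entI (P[|cluZero d]) μ).toReal < b := by
    rwa [← EReal.coe_ennreal_toReal (M1star.entI_ne_top hμ), EReal.coe_lt_coe_iff] at hb
  filter_upwards [M1star.cond_cluZero_absolutelyContinuous hP hp0 hp1 hd hμ
    (M1star.ae_eventually_half_le_qP hP hp0 hp1 hd hμ hG hb')] with ω hω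
  refine neg_le_liminf_inv_mul_log one_half_pos ?_
  filter_upwards [hω] with n hn
  refine ENNReal.ofReal_le_ofReal (le_trans ?_ (exp_mul_qP_le (μ := (μ : Measure (EnvSp d)))
    (b := b) _))
  gcongr

theorem ae_neg_iInf_entI_le_liminf (hP : IsBernoulli d p P) (hp0 : 0 < p) (hp1 : p < 1) (hd : 0 < d)
    {G : Set (ProbabilityMeasure (EnvSp d))} (hG : IsOpen G) :
    ∀ᵐ ω ∂(P[|cluZero d]), - ⨅ μ ∈ G, ((entI (P[|cluZero d]) μ : ℝ≥0∞) : EReal) ≤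
      liminf (fun n : ℕ => ((n + 1 : ℝ)⁻¹ : EReal) *
        ENNReal.log (qPE (srw d) ω {s : Fin (n + 1) → Step d | empPM ω s ∈ G})) atTop := by
  have hrat : ∀ᵐ ω ∂(P[|cluZero d]), ∀ b : ℚ,
      (⨅ μ ∈ G, ((entI (P[|cluZero d]) μ : ℝ≥0∞) : EReal)) < (b : ℝ) →
      ((-b : ℝ) : EReal) ≤ liminf (fun n : ℕ => ((n + 1 : ℝ)⁻¹ : EReal) *
        ENNReal.log (qPE (srw d) ω {s : Fin (n + 1) → Step d | empPM ω s ∈ G})) atTop := by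
    refine ae_all_iff.2 fun b => ?_
    by_cases hb : (⨅ μ ∈ G, ((entI (P[|cluZero d]) μ : ℝ≥0∞) : EReal)) < (b : ℝ)
    · obtain ⟨μ, hμ⟩ := iInf_lt_iff.1 hb
      obtain ⟨hμG, hμ⟩ := iInf_lt_iff.1 hμ
      filter_upwards [ae_neg_le_liminf_of_entI_lt hP hp0 hp1 hd (hG.mem_nhds hμG) hμ] with ω hω _
        using hω
    · exact ae_of_all _ fun ω h => absurd h hb
  filter_upwards [hrat] with ω hω
  rw [EReal.neg_le]
  by_contra! hlt
  obtain ⟨b, hinf, hb⟩ := EReal.exists_rat_btwn_of_lt hlt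
  have := hω b hinf
  rw [EReal.coe_neg, EReal.neg_le] at this
  exact hb.not_ge this

end LowerBound

/-! ### Convexity of the entropy -/

section Mixture

lemma exists_probabilityMeasure_eq_smul_add_smul {Ω : Type*} [MeasurableSpace Ω]
    (μ₁ μ₂ : ProbabilityMeasure Ω) {t s : ℝ≥0} (hts : t + s = 1) :
    ∃ ν : ProbabilityMeasure Ω, (ν : Measure Ω) = t • (μ₁ : Measure Ω) + s • (μ₂ : Measure Ω) := by
  refine ⟨⟨t • (μ₁ : Measure Ω) + s • (μ₂ : Measure Ω), ⟨?_⟩⟩, rfl⟩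
  simp only [Measure.add_apply, Measure.smul_apply, measure_univ, ENNReal.smul_def, smul_eq_mul,
    mul_one]
  exact_mod_cast hts

section Measure

variable {Ω : Type*} [MeasurableSpace Ω] {μ₁ μ₂ ν : Measure Ω} {t s : ℝ≥0} {f : Ω → ℝ}

lemma integral_of_eq_smul_add_smul (hν : ν = t • μ₁ + s • μ₂) (h₁ : Integrable f μ₁)
    (h₂ : Integrable f μ₂) : ∫ x, f x ∂ν = t * ∫ x, f x ∂μ₁ + s * ∫ x, f x ∂μ₂ := by
  rw [hν, integral_add_measure h₁.smul_measure_nnreal h₂.smul_measure_nnreal,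
    integral_smul_nnreal_measure, integral_smul_nnreal_measure]
  rfl

lemma integrable_left_of_eq_smul_add_smul (hν : ν = t • μ₁ + s • μ₂) (ht : t ≠ 0)
    (hf : Integrable f ν) : Integrable f μ₁ := by
  rw [hν, integrable_add_measure] at hf
  exact (integrable_smul_measure (by simpa) (by simp)).1 hf.1

lemma absolutelyContinuous_left_of_eq_smul_add_smul (hν : ν = t • μ₁ + s • μ₂) (ht : t ≠ 0) :
    μ₁ ≪ ν := fun A hA => by
  rw [hν] at hA
  simpa [ht] using (add_eq_zero.1 hA).1

end Measure

lemma marg1_smul_add_smul {μ₁ μ₂ : Measure (EnvSp d)} {t s : ℝ≥0} :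
    marg1 (t • μ₁ + s • μ₂) = t • marg1 μ₁ + s • marg1 μ₂ := by
  rw [marg1, Measure.map_add _ _ measurable_fst, Measure.map_smul, Measure.map_smul]
  rfl

lemma marg2_smul_add_smul {μ₁ μ₂ : Measure (EnvSp d)} {t s : ℝ≥0} :
    marg2 (t • μ₁ + s • μ₂) = t • marg2 μ₁ + s • marg2 μ₂ := by
  rw [marg2, Measure.map_add _ _ measurable_shift_step, Measure.map_smul, Measure.map_smul]
  rfl

variable [Nonempty (Step d)] {μ₁ μ₂ ν : ProbabilityMeasure (EnvSp d)} {t s : ℝ≥0}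

lemma StepsOpen.smul_add_smul
    (hν : (ν : Measure (EnvSp d)) = t • (μ₁ : Measure (EnvSp d)) + s • (μ₂ : Measure (EnvSp d)))
    (h₁ : StepsOpen (μ₁ : Measure (EnvSp d))) (h₂ : StepsOpen (μ₂ : Measure (EnvSp d))) :
    StepsOpen (ν : Measure (EnvSp d)) := by
  have hopen : MeasurableSet {q : EnvSp d | edgeOpen q.1 0 q.2.1} := by
    simp_rw [← srw_pos_iff]
    exact measurableSet_lt measurable_const measurable_srw
  rw [StepsOpen, ← ae_iff_ae_stepProb hopen] at h₁ h₂ ⊢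
  rw [hν, ae_add_measure_iff]
  exact ⟨Measure.ae_smul_measure h₁ t, Measure.ae_smul_measure h₂ s⟩

lemma M1star.smul_add_smul_mem {P₀ : Measure (Config d)}
    (hν : (ν : Measure (EnvSp d)) = t • (μ₁ : Measure (EnvSp d)) + s • (μ₂ : Measure (EnvSp d)))
    (ht : t ≠ 0) (hP₀ : P₀ ≪ marg1 μ₁) (h₁ : μ₁ ∈ M1star d P₀) (h₂ : μ₂ ∈ M1star d P₀) :
    ν ∈ M1star d P₀ := by
  have hmarg : marg1 (ν : Measure (EnvSp d)) = t • marg1 μ₁ + s • marg1 μ₂ := by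
    rw [hν, marg1_smul_add_smul]
  have hac : marg1 (ν : Measure (EnvSp d)) ≪ P₀ := by
    rw [hmarg]
    exact (h₁.2.1.smul_left _).add_left (h₂.2.1.smul_left _)
  have hac' : P₀ ≪ marg1 (ν : Measure (EnvSp d)) :=
    hP₀.trans (absolutelyContinuous_left_of_eq_smul_add_smul hmarg ht)
  have hinv : marg1 (ν : Measure (EnvSp d)) = marg2 ν := by
    rw [hmarg, hν, marg2_smul_add_smul, h₁.1, h₂.1]
  refine M1star.of_ae_stepProb_pos_iff hinv hac hac' ?_
  filter_upwards [StepsOpen.smul_add_smul hν (M1star.stepsOpen h₁) (M1star.stepsOpen h₂),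
    (hac.trans hP₀) (M1star.ae_stepProb_pos_iff h₁),
    (hac.trans hP₀) (ae_stepProb_pos_of_absolutelyContinuous
      (absolutelyContinuous_left_of_eq_smul_add_smul hν ht))] with ω hopen hiff hpos e
  exact ⟨hopen e, fun he => hpos e ((hiff e).2 he)⟩

lemma M1star.toReal_entI_smul_add_smul_le {P₀ : Measure (Config d)}
    (hν : (ν : Measure (EnvSp d)) = t • (μ₁ : Measure (EnvSp d)) + s • (μ₂ : Measure (EnvSp d)))
    (ht : t ≠ 0) (hs : s ≠ 0) (h₁ : μ₁ ∈ M1star d P₀) (h₂ : μ₂ ∈ M1star d P₀)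
    (hν_mem : ν ∈ M1star d P₀) :
    (entI P₀ ν).toReal ≤ t * (entI P₀ μ₁).toReal + s * (entI P₀ μ₂).toReal := by
  have hν' := hν.trans (add_comm _ _)
  have hint := integrable_stepLogRatio (M1star.stepsOpen hν_mem)
  have hint₁ := integrable_left_of_eq_smul_add_smul hν ht hint
  have hint₂ := integrable_left_of_eq_smul_add_smul hν' hs hint
  have hle₁ := integral_stepLogRatio_le_of_absolutelyContinuous (M1star.stepsOpen h₁)
    (absolutelyContinuous_left_of_eq_smul_add_smul hν ht) hint₁
  have hle₂ := integral_stepLogRatio_le_of_absolutelyContinuous (M1star.stepsOpen h₂)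
    (absolutelyContinuous_left_of_eq_smul_add_smul hν' hs) hint₂
  rw [M1star.toReal_entI hν_mem, M1star.toReal_entI h₁, M1star.toReal_entI h₂,
    integral_of_eq_smul_add_smul hν hint₁ hint₂]
  exact add_le_add (mul_le_mul_of_nonneg_left hle₁ t.coe_nonneg)
    (mul_le_mul_of_nonneg_left hle₂ s.coe_nonneg)

end Mixture

/-! ### The double Fenchel–Legendre transform on open sets -/

section Separation

lemma nonneg_of_forall_lt_add_mul_lt {a b u σ : ℝ} (h : ∀ r < a, b + r * σ < u) : 0 ≤ σ := by
  by_contra! hσ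
  have hlt := h (min (a - 1) ((u - b) / σ)) (by linarith [min_le_left (a - 1) ((u - b) / σ)])
  have hle := mul_le_mul_of_nonpos_right (min_le_right (a - 1) ((u - b) / σ)) hσ.le
  rw [div_mul_cancel₀ _ hσ.ne] at hle
  linarith

lemma add_mul_le_of_forall_lt {a b u σ : ℝ} (h : ∀ r < a, b + r * σ < u) : b + a * σ ≤ u := by
  have hlim : Tendsto (fun r => b + r * σ) (𝓝[<] a) (𝓝 (b + a * σ)) :=
    (Continuous.tendsto (by fun_prop) a).mono_left nhdsWithin_le_nhds
  exact le_of_tendsto hlim (eventually_mem_nhdsWithin.mono fun r hr => (h r hr).le)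

/-- The separating hyperplane may be vertical; it is then rescaled by a large factor, which is
harmless since `K` lies above height `0`. -/
lemma exists_continuousLinearMap_sub_le {E : Type*} [SeminormedAddCommGroup E] [NormedSpace ℝ E]
    {K : Set (E × ℝ)} {y₀ : E} {ε a : ℝ} (hε : 0 < ε) (hK : Convex ℝ K)
    (hnonneg : ∀ q ∈ K, 0 ≤ q.2) (hdisj : Disjoint (Metric.ball y₀ ε ×ˢ Set.Iio a) K) :
    ∃ f : E →L[ℝ] ℝ, ∀ q ∈ K, f q.1 - q.2 ≤ f y₀ - a := by
  obtain ⟨φ, u, hball, hφK⟩ := geometric_hahn_banach_open ((convex_ball y₀ ε).prod (convex_Iio a))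
    (Metric.isOpen_ball.prod isOpen_Iio) hK hdisj
  let g : E →L[ℝ] ℝ := φ.comp (ContinuousLinearMap.inl ℝ E ℝ)
  let σ : ℝ := φ (0, 1)
  have hφ (y : E) (r : ℝ) : φ (y, r) = g y + r * σ := by
    have hsplit : (y, r) = ((y, 0) : E × ℝ) + r • ((0, 1) : E × ℝ) := by simp
    rw [hsplit, map_add, map_smul]
    rfl
  have hlt : ∀ r < a, g y₀ + r * σ < u := fun r hr =>
    hφ y₀ r ▸ hball (y₀, r) ⟨Metric.mem_ball_self hε, hr⟩
  have hge : ∀ q ∈ K, u ≤ g q.1 + q.2 * σ := fun q hq => hφ q.1 q.2 ▸ hφK q hq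
  suffices ∃ k : ℝ, ∀ q ∈ K, a - q.2 ≤ k * (g q.1 - g y₀) by
    obtain ⟨k, hk⟩ := this
    refine ⟨-k • g, fun q hq => ?_⟩
    simp only [smul_apply, smul_eq_mul]
    linarith [hk q hq]
  rcases (nonneg_of_forall_lt_add_mul_lt hlt).eq_or_lt with hσ | hσ
  · simp only [← hσ, mul_zero, add_zero] at hlt hge
    have hu : 0 < u - g y₀ := sub_pos.2 (hlt (a - 1) (by linarith))
    refine ⟨|a| / (u - g y₀), fun q hq => ?_⟩
    calc a - q.2 ≤ |a| := by linarith [le_abs_self a, hnonneg q hq]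
      _ = |a| / (u - g y₀) * (u - g y₀) := (div_mul_cancel₀ _ hu.ne').symm
      _ ≤ |a| / (u - g y₀) * (g q.1 - g y₀) := by gcongr; exact hge q hq
  · refine ⟨σ⁻¹, fun q hq => ?_⟩
    rw [le_inv_mul_iff₀ hσ]
    linarith [hge q hq, add_mul_le_of_forall_lt hlt]

end Separation

section Duality

variable {P P₀ : Measure (Config d)} {p a : ℝ} {μ : ProbabilityMeasure (EnvSp d)}
  {G : Set (ProbabilityMeasure (EnvSp d))} {I : Finset (BoundedContinuousFunction (EnvSp d) ℝ)}

lemma entIbis_le_entI : entIbis P₀ μ ≤ ((entI P₀ μ : ℝ≥0∞) : EReal) := by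
  refine iSup_le fun f => ?_
  by_cases htop : entI P₀ μ = ∞
  · simp [htop]
  have hle : ((pairing f μ : ℝ) : EReal) - ((entI P₀ μ : ℝ≥0∞) : EReal) ≤ entIstar P₀ f :=
    le_iSup (fun μ : ProbabilityMeasure (EnvSp d) =>
      ((pairing f μ : ℝ) : EReal) - ((entI P₀ μ : ℝ≥0∞) : EReal)) μ
  refine (EReal.sub_le_sub le_rfl hle).trans ?_
  rw [← EReal.coe_ennreal_toReal htop, ← EReal.coe_sub, ← EReal.coe_sub, sub_sub_cancel]

lemma entI_eq_top_of_notMem (hμ : μ ∉ M1star d P₀) : entI P₀ μ = ∞ := by simp [entI, hμ]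

lemma le_entIbis_of_forall_pairing_sub_le [Nonempty (Step d)]
    (f : BoundedContinuousFunction (EnvSp d) ℝ)
    (hf : ∀ ν ∈ M1star d P₀, pairing f ν - (entI P₀ ν).toReal ≤ pairing f μ - a) :
    (a : EReal) ≤ entIbis P₀ μ := by
  have hstar : entIstar P₀ f ≤ ((pairing f μ - a : ℝ) : EReal) := by
    refine iSup_le fun ν => ?_
    by_cases hν : ν ∈ M1star d P₀
    · rw [← EReal.coe_ennreal_toReal (M1star.entI_ne_top hν), ← EReal.coe_sub]
      exact_mod_cast hf ν hν
    · simp [entI_eq_top_of_notMem hν]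
  calc (a : EReal) = ((pairing f μ : ℝ) : EReal) - ((pairing f μ - a : ℝ) : EReal) := by
        rw [← EReal.coe_sub, sub_sub_cancel]
    _ ≤ ((pairing f μ : ℝ) : EReal) - entIstar P₀ f := EReal.sub_le_sub le_rfl hstar
    _ ≤ entIbis P₀ μ := le_iSup (fun f : BoundedContinuousFunction (EnvSp d) ℝ =>
        ((pairing f μ : ℝ) : EReal) - entIstar P₀ f) f

lemma pairing_sum_smul (c : I → ℝ) (ν : ProbabilityMeasure (EnvSp d)) :
    pairing (∑ f, c f • f.1 : BoundedContinuousFunction (EnvSp d) ℝ) ν =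
      ∑ f, c f * pairing f.1 ν := by
  simp only [pairing, BoundedContinuousFunction.sum_apply, BoundedContinuousFunction.coe_smul,
    smul_eq_mul]
  rw [integral_finsetSum _ fun f _ => (f.1.integrable _).const_mul (c f)]
  simp_rw [integral_const_mul]

lemma exists_pairing_eq_continuousLinearMap (g : (I → ℝ) →L[ℝ] ℝ) :
    ∃ h : BoundedContinuousFunction (EnvSp d) ℝ,
      ∀ ν, pairing h ν = g fun f => pairing f.1 ν := by
  classical
  refine ⟨∑ f, g (fun j => if f = j then 1 else 0) • f.1, fun ν => ?_⟩
  rw [pairing_sum_smul, ← ContinuousLinearMap.coe_coe, LinearMap.pi_apply_eq_sum_univ]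
  exact Finset.sum_congr rfl fun f _ => mul_comm _ _

/-- The epigraph of the entropy on `M1star`, projected to the integrals of the finitely many test
functions in `I`. -/
def entropyEpigraph (P₀ : Measure (Config d))
    (I : Finset (BoundedContinuousFunction (EnvSp d) ℝ)) : Set ((I → ℝ) × ℝ) :=
  {q | ∃ ν ∈ M1star d P₀, (fun f : I => pairing f.1 ν) = q.1 ∧ (entI P₀ ν).toReal ≤ q.2}

lemma convex_entropyEpigraph (hP : IsBernoulli d p P) (hp0 : 0 < p) (hp1 : p < 1) (hd : 0 < d) :
    Convex ℝ (entropyEpigraph (P[|cluZero d]) I) := by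
  have := nonempty_step hd
  rw [convex_iff_forall_pos]
  rintro ⟨y₁, r₁⟩ ⟨ν₁, hν₁, rfl, hr₁⟩ ⟨y₂, r₂⟩ ⟨ν₂, hν₂, rfl, hr₂⟩ t s ht hs hts
  lift t to ℝ≥0 using ht.le
  lift s to ℝ≥0 using hs.le
  norm_cast at ht hs hts
  obtain ⟨ν, hν⟩ := exists_probabilityMeasure_eq_smul_add_smul ν₁ ν₂ hts
  have hν_mem : ν ∈ M1star d (P[|cluZero d]) := M1star.smul_add_smul_mem hν ht.ne'
    (M1star.cond_cluZero_absolutelyContinuous hP hp0 hp1 hd hν₁) hν₁ hν₂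
  refine ⟨ν, hν_mem, ?_, ?_⟩
  · funext f
    exact integral_of_eq_smul_add_smul hν (f.1.integrable _) (f.1.integrable _)
  · calc (entI (P[|cluZero d]) ν).toReal
        ≤ t * (entI (P[|cluZero d]) ν₁).toReal + s * (entI (P[|cluZero d]) ν₂).toReal :=
          M1star.toReal_entI_smul_add_smul_le hν ht.ne' hs.ne' hν₁ hν₂ hν_mem
      _ ≤ t * r₁ + s * r₂ := by gcongr

lemma coe_le_entIbis_of_forall_mem (hP : IsBernoulli d p P) (hp0 : 0 < p) (hp1 : p < 1)
    (hd : 0 < d) (hG : IsOpen G) (hμ : μ ∈ G)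
    (ha : ∀ ν ∈ G, (a : EReal) ≤ ((entI (P[|cluZero d]) ν : ℝ≥0∞) : EReal)) :
    (a : EReal) ≤ entIbis (P[|cluZero d]) μ := by
  have := nonempty_step hd
  obtain ⟨I, ε, hε, hI⟩ := exists_finset_forall_abs_integral_sub_lt (hG.mem_nhds hμ)
  have hdisj : Disjoint (Metric.ball (fun f : I => pairing f.1 μ) ε ×ˢ Set.Iio a)
      (entropyEpigraph (P[|cluZero d]) I) := by
    refine Set.disjoint_left.2 ?_
    rintro ⟨y, r⟩ ⟨hy, hr⟩ ⟨ν, hν, rfl, hνr⟩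
    have hνG : ν ∈ G := hI ν fun f hf => (dist_pi_lt_iff hε).1 hy ⟨f, hf⟩
    have hle := ha ν hνG
    rw [← EReal.coe_ennreal_toReal (M1star.entI_ne_top hν), EReal.coe_le_coe_iff] at hle
    exact (hle.trans hνr).not_gt hr
  have hnonneg : ∀ q ∈ entropyEpigraph (P[|cluZero d]) I, 0 ≤ q.2 := by
    rintro q ⟨ν, -, -, hr⟩
    exact ENNReal.toReal_nonneg.trans hr
  obtain ⟨g, hg⟩ := exists_continuousLinearMap_sub_le hε (convex_entropyEpigraph hP hp0 hp1 hd)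
    hnonneg hdisj
  obtain ⟨h, hh⟩ := exists_pairing_eq_continuousLinearMap g
  refine le_entIbis_of_forall_pairing_sub_le h fun ν hν => ?_
  rw [hh, hh]
  exact hg (_, _) ⟨ν, hν, rfl, le_rfl⟩

theorem iInf_entI_eq_iInf_entIbis (hP : IsBernoulli d p P) (hp0 : 0 < p) (hp1 : p < 1)
    (hd : 0 < d) (hG : IsOpen G) :
    (⨅ μ ∈ G, ((entI (P[|cluZero d]) μ : ℝ≥0∞) : EReal)) =
      ⨅ μ ∈ G, entIbis (P[|cluZero d]) μ := by
  refine le_antisymm (le_iInf₂ fun μ hμ => ?_) (iInf₂_mono fun _ _ => entIbis_le_entI)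
  refine EReal.ge_of_forall_gt_iff_ge.1 fun z hz => ?_
  exact coe_le_entIbis_of_forall_mem hP hp0 hp1 hd hG hμ fun ν hν => hz.le.trans (iInf₂_le ν hν)

end Duality

end SRWPC

open SRWPC in
/-- **Large deviation lower bound** (Lemma 3.4). -/
theorem LDP_lower_bound
    (d : ℕ) (hd : 2 ≤ d) (p : ℝ) (hp0 : 0 < p) (hp1 : p < 1) (hpc : pc d < p)
    (P : Measure (Config d)) (hP : IsBernoulli d p P) :
    ∀ G : Set (ProbabilityMeasure (EnvSp d)), IsOpen G →
      (∀ᵐ ω ∂(P[|cluZero d]),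
        - ⨅ μ ∈ G, ((entI (P[|cluZero d]) μ : ℝ≥0∞) : EReal) ≤
          Filter.liminf (fun n : ℕ =>
            (((n + 1 : ℝ)⁻¹ : EReal) *
              ENNReal.log (qPE (srw d) ω {s : Fin (n + 1) → Step d | empPM ω s ∈ G})))
            Filter.atTop) ∧
      (⨅ μ ∈ G, ((entI (P[|cluZero d]) μ : ℝ≥0∞) : EReal)) =
        ⨅ μ ∈ G, entIbis (P[|cluZero d]) μ := fun _ hG =>
  ⟨ae_neg_iInf_entI_le_liminf hP hp0 hp1 (by lia) hG,
    iInf_entI_eq_iInf_entIbis hP hp0 hp1 (by lia) hG⟩
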